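/- arXiv:math/0305242 — 6 statements merged into one kernel-verified Lean document; each statement's English description precedes it below -/
import Mathlib

section
/- Let (𝒜,𝒳) be a nontrivial (k,m)-net in the complex projective plane ℙ²(ℂ). Then k ≤ 5; moreover if k = 4 then m ≥ 3, and if k = 5 then m ≥ 6. -/
/-- The complex projective plane ℙ²(ℂ) = ℙ(ℂ³). -/
abbrev P2 : Type := Projectivization ℂ (Fin 3 → ℂ)

/-- A line in ℙ²(ℂ): the set of points annihilated by a nonzero linear form on ℂ³. -/
def IsProjLine (L : Set P2) : Prop :=
  ∃ f : (Fin 3 → ℂ) →ₗ[ℂ] ℂ, f ≠ 0 ∧ L = {p : P2 | f p.rep = 0}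

/-- A (k,m)-net in ℙ²(ℂ): a family of `k` pairwise disjoint classes of lines, each of
cardinality `m`, and a finite set `X` of points such that lines of distinct classes meet
in a point of `X` and through every point of `X` passes exactly one line of each class. -/
structure IsNet (k m : ℕ) (A : Fin k → Finset (Set P2)) (X : Set P2) : Prop where
  lines : ∀ i, ∀ L ∈ A i, IsProjLine L
  card_eq : ∀ i, (A i).card = m
  finiteX : X.Finite
  disj : ∀ i j, i ≠ j → Disjoint (A i) (A j)
  meets : ∀ i j, i ≠ j → ∀ L ∈ A i, ∀ L' ∈ A j, ∃ p ∈ X, p ∈ L ∧ p ∈ L'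
  unique_through : ∀ p ∈ X, ∀ i, ∃! L, L ∈ A i ∧ p ∈ L

namespace NetAux
section uni
open Polynomial

/-- Univariate contradiction. -/
lemma uni_contra (g h : Polynomial ℂ) (hh : h ≠ 0) (h0 : h.eval 0 = 0) (g0 : g.eval 0 ≠ 0)
    (W : Polynomial ℂ) (hW : W = h * g.derivative - g * h.derivative)
    (e : h * W.derivative = 2 * h.derivative * W) : False := by
  obtain ⟨h1, hh1, nd⟩ := h.exists_eq_pow_rootMultiplicity_mul_and_not_dvd hh 0
  have hpos : 0 < h.rootMultiplicity 0 := (rootMultiplicity_pos hh).2 h0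
  generalize h.rootMultiplicity 0 = n at *
  obtain ⟨k, rfl⟩ : ∃ k, n = k + 1 := ⟨n - 1, by omega⟩
  rw [C_0, sub_zero] at hh1 nd
  rw [X_dvd_iff, coeff_zero_eq_eval_zero] at nd
  have dh : X * derivative h = X ^ (k+1) * ((k+1 : ℂ[X]) * h1 + X * derivative h1) := by
    rw [hh1, derivative_mul, derivative_X_pow]; simp; ring
  set B := X * derivative g * h1 - g * ((k+1 : ℂ[X]) * h1 + X * derivative h1) with hB
  have hV : X * W = X ^ (k+1) * B := by
    rw [hW, hB]
    linear_combination (X * derivative g) * hh1 - g * dh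
  have hV' : X * derivative (X * W) = X ^ (k+1) * ((k+1 : ℂ[X]) * B + X * derivative B) := by
    rw [hV, derivative_mul, derivative_X_pow]; simp; ring
  rw [derivative_mul, derivative_X, one_mul] at hV'
  have fin : X ^ (k+1) * X ^ (k+1) * (((k+1 : ℂ[X]) * B + X * derivative B - B) * h1) =
      X ^ (k+1) * X ^ (k+1) * (2 * B * ((k+1 : ℂ[X]) * h1 + X * derivative h1)) := by
    have e' : X ^ 2 * (h * derivative W) = X ^ 2 * (2 * derivative h * W) := by rw [e]
    have t1 : X ^ 2 * derivative W = X ^ (k+1) * ((k+1 : ℂ[X]) * B + X * derivative B - B) := by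
      linear_combination hV' - hV
    calc _ = (X ^ 2 * derivative W) * (X ^ (k+1) * h1) := by rw [t1]; ring
      _ = X ^ 2 * (h * derivative W) := by rw [← hh1]; ring
      _ = 2 * (X * derivative h) * (X * W) := by rw [e']; ring
      _ = _ := by rw [dh, hV]; ring
  have fin2 := mul_left_cancel₀ (by simp) fin
  have B0 : B.eval 0 ≠ 0 := by
    rw [hB]; simp
    refine ⟨g0, ?_, nd⟩
    exact_mod_cast Nat.succ_ne_zero k
  have := congrArg (eval 0) fin2
  simp at this
  have h3 : ((k : ℂ) + 2) * (B.eval 0 * h1.eval 0) = 0 := by linear_combination -this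
  rcases mul_eq_zero.1 h3 with h3 | h3
  · exact absurd h3 (by exact_mod_cast Nat.succ_ne_zero (k+1))
  · exact mul_ne_zero B0 nd h3

end uni

open MvPolynomial

abbrev V3 := Fin 3 → ℂ
abbrev Poly3 := MvPolynomial (Fin 3) ℂ

/-- dot product -/
def dt (a b : V3) : ℂ := a 0 * b 0 + a 1 * b 1 + a 2 * b 2

/-- cross product -/
def cr (a b : V3) : V3 := ![a 1 * b 2 - a 2 * b 1, a 2 * b 0 - a 0 * b 2, a 0 * b 1 - a 1 * b 0]

/-- linear form -/
noncomputable def lin (c : V3) : Poly3 := C (c 0) * X 0 + C (c 1) * X 1 + C (c 2) * X 2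

lemma eval_lin (c x : V3) : eval x (lin c) = dt c x := by simp [lin, dt]

lemma lin_hom (c : V3) : (lin c).IsHomogeneous 1 :=
  ((isHomogeneous_C_mul_X _ _).add (isHomogeneous_C_mul_X _ _)).add (isHomogeneous_C_mul_X _ _)

lemma exists_sigma (c : V3) (hc : c ≠ 0) : ∃ σ : Poly3 →ₐ[ℂ] Poly3, σ (lin c) = 0 ∧
    (∀ P, lin c ∣ P - σ P) ∧ ∃ τ : V3 → V3, (∀ y, dt c (τ y) = 0) ∧
      ∀ y P, eval y (σ P) = eval (τ y) P := by
  obtain ⟨i, hi⟩ : ∃ i, c i ≠ 0 := by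
    by_contra h; push Not at h; exact hc (funext h)
  let s : Fin 3 → Poly3 := fun j => X j - if j = i then C (c i)⁻¹ * lin c else 0
  have key : aeval s (lin c) = 0 := by
    have hCi : (C (c i) * C (c i)⁻¹ : Poly3) = 1 := by
      rw [← C_mul, mul_inv_cancel₀ hi, C_1]
    have : aeval s (lin c) = lin c - C (c i) * C (c i)⁻¹ * lin c := by
      conv_lhs => unfold lin
      simp only [map_add, map_mul, aeval_X, algHom_C, algebraMap_eq, s]
      fin_cases i <;> simp <;> (nth_rewrite 2 [lin]) <;> ring
    rw [this, hCi]; ring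
  refine ⟨aeval s, key, ?_, fun y j => eval y (s j), ?_, ?_⟩
  · intro P
    rw [← Ideal.mem_span_singleton, ← Ideal.Quotient.eq]
    have : (Ideal.Quotient.mkₐ ℂ (Ideal.span {lin c})) =
        (Ideal.Quotient.mkₐ ℂ (Ideal.span {lin c})).comp (aeval s) := by
      apply MvPolynomial.algHom_ext
      intro j
      simp only [AlgHom.comp_apply, aeval_X, Ideal.Quotient.mkₐ_eq_mk]
      rw [Ideal.Quotient.eq, Ideal.mem_span_singleton]
      simp only [s]
      split_ifs
      · exact ⟨C (c i)⁻¹, by ring⟩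
      · simp
    exact DFunLike.congr_fun this P
  · intro y
    rw [← eval_lin]
    have := congrArg (eval y) key
    simpa [lin] using this
  · intro y P
    induction P using MvPolynomial.induction_on with
    | C a => simp
    | add p q hp hq => rw [map_add, map_add, hp, hq, map_add]
    | mul_X p i hp => simp only [map_mul, hp, aeval_X, eval_X]

lemma lin_dvd_iff (c : V3) (hc : c ≠ 0) (P : Poly3) :
    lin c ∣ P ↔ ∀ x, dt c x = 0 → eval x P = 0 := by
  obtain ⟨σ, -, h1, τ, h2, h3⟩ := exists_sigma c hc
  constructor
  · rintro ⟨Q, rfl⟩ x hx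
    simp [eval_lin, hx]
  · intro h
    have : σ P = 0 := by
      apply MvPolynomial.funext
      intro y
      rw [h3, h _ (h2 y)]; simp
    simpa [this] using h1 P

lemma lin_ne_zero (c : V3) (hc : c ≠ 0) : lin c ≠ 0 := by
  intro h
  apply hc
  funext i
  have h0 := congrArg (eval (Pi.single i 1)) h
  rw [eval_lin] at h0
  fin_cases i <;> simpa [dt] using h0

lemma lin_prime (c : V3) (hc : c ≠ 0) : Prime (lin c) := by
  obtain ⟨σ, h0, h1, -⟩ := exists_sigma c hc
  have hd : ∀ P, lin c ∣ P ↔ σ P = 0 := by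
    intro P
    constructor
    · rintro ⟨Q, rfl⟩; rw [map_mul, h0, zero_mul]
    · intro h; simpa [h] using h1 P
  refine ⟨lin_ne_zero c hc, ?_, ?_⟩
  · intro hu
    have := hu.map σ
    rw [h0] at this
    exact not_isUnit_zero this
  · intro P Q h
    rw [hd, map_mul, mul_eq_zero] at h
    rwa [hd, hd]

lemma cr_eq_zero_of_lin_dvd (c d : V3) (h : lin c ∣ lin d) : cr c d = 0 := by
  obtain ⟨i, hi⟩ | hc : (∃ i, c i ≠ 0) ∨ c = 0 := by
    by_cases h : c = 0
    · exact Or.inr h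
    · left; by_contra h'; push Not at h'; exact h (funext h')
  · have hc : c ≠ 0 := by rintro rfl; simp at hi
    rw [lin_dvd_iff c hc] at h
    simp only [eval_lin] at h
    have e0 := h ![0, c 2, -c 1] (by simp [dt]; ring)
    have e1 := h ![-c 2, 0, c 0] (by simp [dt]; ring)
    have e2 := h ![c 1, -c 0, 0] (by simp [dt]; ring)
    simp [dt] at e0 e1 e2
    funext j
    fin_cases j <;> simp [cr]
    · linear_combination -e0
    · linear_combination -e1
    · linear_combination -e2
  · subst hc
    funext j
    fin_cases j <;> simp [cr]

/-- derivation along the vector field `∇F × ∇G` -/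
noncomputable def vf (F G : Poly3) : Fin 3 → Poly3 :=
  ![pderiv 1 F * pderiv 2 G - pderiv 2 F * pderiv 1 G,
    pderiv 2 F * pderiv 0 G - pderiv 0 F * pderiv 2 G,
    pderiv 0 F * pderiv 1 G - pderiv 1 F * pderiv 0 G]

/-- directional derivative -/
noncomputable def dv (v : Fin 3 → Poly3) (P : Poly3) : Poly3 :=
  v 0 * pderiv 0 P + v 1 * pderiv 1 P + v 2 * pderiv 2 P

lemma dv_mul (v : Fin 3 → Poly3) (P Q : Poly3) : dv v (P * Q) = P * dv v Q + Q * dv v P := by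
  simp only [dv, Derivation.leibniz, smul_eq_mul]; ring

lemma dv_add (v : Fin 3 → Poly3) (P Q : Poly3) : dv v (P + Q) = dv v P + dv v Q := by
  simp only [dv, map_add]; ring

lemma dv_C (v : Fin 3 → Poly3) (a : ℂ) : dv v (C a) = 0 := by simp [dv]

lemma dv_lin (v : Fin 3 → Poly3) (c : V3) :
    dv v (lin c) = C (c 0) * v 0 + C (c 1) * v 1 + C (c 2) * v 2 := by
  simp [dv, lin, pderiv_X]; ring

lemma dv_F (F G : Poly3) : dv (vf F G) F = 0 := by simp [dv, vf]; ring
lemma dv_G (F G : Poly3) : dv (vf F G) G = 0 := by simp [dv, vf]; ring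

/-- extactic polynomial -/
noncomputable def extac (v : Fin 3 → Poly3) : Poly3 :=
  X 0 * (v 1 * dv v (v 2) - v 2 * dv v (v 1)) - X 1 * (v 0 * dv v (v 2) - v 2 * dv v (v 0))
    + X 2 * (v 0 * dv v (v 1) - v 1 * dv v (v 0))

lemma dvd_ext (v : Fin 3 → Poly3) (c : V3) (hc : c ≠ 0) (h : lin c ∣ dv v (lin c)) :
    lin c ∣ extac v := by
  have h2 : lin c ∣ dv v (dv v (lin c)) := by
    obtain ⟨S, hS⟩ := h
    rw [hS, dv_mul, hS]
    exact ⟨dv v S + S * S, by ring⟩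
  have e2 : dv v (dv v (lin c)) =
      C (c 0) * dv v (v 0) + C (c 1) * dv v (v 1) + C (c 2) * dv v (v 2) := by
    rw [dv_lin]; simp only [dv_add, dv_mul, dv_C]; ring
  rw [e2] at h2
  rw [dv_lin] at h
  rw [lin_dvd_iff c hc] at h h2 ⊢
  intro x hx
  have h := h x hx
  have h2 := h2 x hx
  simp only [dt, map_add, map_mul, eval_C] at hx h h2
  simp only [extac, map_add, map_sub, map_mul, eval_X]
  set v0 := eval x (v 0)
  set v1 := eval x (v 1)
  set v2 := eval x (v 2)
  set w0 := eval x (dv v (v 0))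
  set w1 := eval x (dv v (v 1))
  set w2 := eval x (dv v (v 2))
  obtain ⟨i, hi⟩ : ∃ i, c i ≠ 0 := by
    by_contra h; push Not at h; exact hc (funext h)
  apply mul_left_cancel₀ hi
  rw [mul_zero]
  fin_cases i
  · simp only [Fin.zero_eta]
    linear_combination (v1*w2-v2*w1) * hx - (x 1 * w2 - x 2 * w1) * h + (x 1 * v2 - x 2 * v1) * h2
  · simp only [Fin.mk_one]
    linear_combination -(v0*w2-v2*w0) * hx + (x 0 * w2 - x 2 * w0) * h - (x 0 * v2 - x 2 * v0) * h2
  · simp only [Fin.reduceFinMk]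
    linear_combination (v0*w1-v1*w0) * hx - (x 0 * w1 - x 1 * w0) * h + (x 0 * v1 - x 1 * v0) * h2

lemma ext_hom (F G : Poly3) (m : ℕ) (hm : 2 ≤ m) (hF : F.IsHomogeneous m)
    (hG : G.IsHomogeneous m) : (extac (vf F G)).IsHomogeneous (6 * m - 6) := by
  have hv : ∀ i, (vf F G i).IsHomogeneous (2 * m - 2) := by
    have : ∀ i j, (pderiv i F * pderiv j G).IsHomogeneous (2 * m - 2) := by
      intro i j
      have := (hF.pderiv (i := i)).mul (hG.pderiv (i := j))
      convert this using 1; omega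
    intro i
    fin_cases i
    · exact (this _ _).sub (this _ _)
    · exact (this _ _).sub (this _ _)
    · exact (this _ _).sub (this _ _)
  have hw : ∀ i, (dv (vf F G) (vf F G i)).IsHomogeneous (4 * m - 5) := by
    intro i
    have : ∀ j, (vf F G j * pderiv j (vf F G i)).IsHomogeneous (4 * m - 5) := by
      intro j
      have := (hv j).mul ((hv i).pderiv (i := j))
      convert this using 1; omega
    exact ((this _).add (this _)).add (this _)
  have h3 : ∀ i j l, (X i * (vf F G j * dv (vf F G) (vf F G l) - vf F G l * dv (vf F G) (vf F G j))
      : Poly3).IsHomogeneous (6 * m - 6) := by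
    intro i j l
    have := (isHomogeneous_X ℂ i).mul (((hv j).mul (hw l)).sub ((hv l).mul (hw j)))
    convert this using 1; omega
  exact ((h3 _ _ _).sub (h3 _ _ _)).add (h3 _ _ _)

noncomputable def rho : Poly3 →ₐ[ℂ] Polynomial ℂ := aeval ![0, 1, Polynomial.X]

lemma rho_d2 (P : Poly3) : rho (pderiv 2 P) = Polynomial.derivative (rho P) := by
  induction P using MvPolynomial.induction_on with
  | C a => simp [rho]
  | add p q hp hq => simp [hp, hq]
  | mul_X p i hp =>
    rw [Derivation.leibniz, map_add, smul_eq_mul, smul_eq_mul, map_mul, map_mul, hp, map_mul,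
      Polynomial.derivative_mul]
    fin_cases i <;> simp [rho, pderiv_X] <;> ring

lemma rho_d1 (P : Poly3) (n : ℕ) (h : P.IsHomogeneous n) :
    rho (pderiv 1 P) = (n : Polynomial ℂ) * rho P - Polynomial.X * Polynomial.derivative (rho P) := by
  have := congrArg rho h.sum_X_mul_pderiv
  rw [Fin.sum_univ_three] at this
  simp only [map_add, map_mul, nsmul_eq_mul, map_natCast, rho_d2] at this
  simp only [show rho (X 0) = 0 by simp [rho], show rho (X 1) = 1 by simp [rho],
    show rho (X 2) = Polynomial.X by simp [rho]] at this
  linear_combination this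

lemma ext_ne_zero (H G : Poly3) (m : ℕ) (hm : 2 ≤ m) (hH : H.IsHomogeneous (m - 1))
    (hG : G.IsHomogeneous m) (h1 : rho H ≠ 0) (h0 : (rho H).eval 0 = 0)
    (g0 : (rho G).eval 0 ≠ 0) : extac (vf (X 0 * H) G) ≠ 0 := by
  intro hE
  set v := vf (X 0 * H) G with hv
  obtain ⟨n, rfl⟩ : ∃ n, m = n + 2 := ⟨m - 2, by omega⟩
  set S := pderiv 1 H * pderiv 2 G - pderiv 2 H * pderiv 1 G with hS
  have v0 : v 0 = X 0 * S := by
    simp [hv, vf, hS, pderiv_X]; ring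
  have w0 : dv v (v 0) = X 0 * (S * S + dv v S) := by
    rw [v0, dv_mul]
    have : dv v (X 0) = X 0 * S := by
      rw [← v0]; simp [dv, pderiv_X]
    rw [this]; ring
  have hE1 : (v 1 * dv v (v 2) - v 2 * dv v (v 1)) - X 1 * (S * dv v (v 2) - v 2 * (S * S + dv v S))
    + X 2 * (S * dv v (v 1) - v 1 * (S * S + dv v S)) = 0 := by
    apply mul_left_cancel₀ (X_ne_zero (R := ℂ) (0 : Fin 3))
    rw [mul_zero, ← hE, extac, w0, v0]; ring
  have r0 : rho (X 0) = 0 := by simp [rho]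
  have r1 : rho (X 1) = 1 := by simp [rho]
  have r2 : rho (X 2) = Polynomial.X := by simp [rho]
  set h := rho H with hh
  set g := rho G with hg
  have rv0 : rho (v 0) = 0 := by rw [v0, map_mul, r0, zero_mul]
  have rv1 : rho (v 1) = - h * Polynomial.derivative g := by
    simp [hv, vf, pderiv_X, r0, rho_d2]
    rfl
  have rv2 : rho (v 2) = h * (((n + 2 : ℕ) : Polynomial ℂ) * g - Polynomial.X * Polynomial.derivative g) := by
    simp only [hv, vf]
    simp [pderiv_X, r0]
    rw [rho_d1 G _ hG]; simp
    rfl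
  have hmv : ∀ i, (v i).IsHomogeneous (2 * n + 2) := by
    have hF : (X 0 * H).IsHomogeneous (n + 2) := by
      have := (isHomogeneous_X ℂ (0 : Fin 3)).mul hH
      convert this using 1; omega
    have : ∀ i j, (pderiv i (X 0 * H) * pderiv j G).IsHomogeneous (2 * n + 2) := by
      intro i j
      have := (hF.pderiv (i := i)).mul (hG.pderiv (i := j))
      convert this using 1; omega
    intro i
    fin_cases i
    · exact (this _ _).sub (this _ _)
    · exact (this _ _).sub (this _ _)
    · exact (this _ _).sub (this _ _)
  have hmS : S.IsHomogeneous (2 * n + 1) := by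
    have : ∀ i j, (pderiv i H * pderiv j G).IsHomogeneous (2 * n + 1) := by
      intro i j
      have := (hH.pderiv (i := i)).mul (hG.pderiv (i := j))
      convert this using 1; omega
    exact (this _ _).sub (this _ _)
  have rS : rho S = (n + 1) * h * Polynomial.derivative g - (n + 2) * g * Polynomial.derivative h := by
    rw [hS]
    simp only [map_sub, map_mul, rho_d2, rho_d1 H _ hH, rho_d1 G _ hG]
    rw [← hh, ← hg]
    push_cast [show n + 2 - 1 = n + 1 by omega]
    ring
  have rdv : ∀ (P : Poly3) (d : ℕ), P.IsHomogeneous d → rho (dv v P) =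
      h * ((n + 2) * g * Polynomial.derivative (rho P) - d * Polynomial.derivative g * rho P) := by
    intro P d hP
    simp only [dv, map_add, map_mul, rv0, rv1, rv2, rho_d2, rho_d1 P d hP]
    push_cast
    ring
  have hr := congrArg rho hE1
  simp only [map_add, map_sub, map_mul, map_zero, r1, r2, rdv _ _ (hmv _), rdv _ _ hmS, rS, rv1, rv2]
    at hr
  push_cast at hr
  set W := h * Polynomial.derivative g - g * Polynomial.derivative h with hW
  have hfin : ((n : Polynomial ℂ) + 2) ^ 3 * h * g ^ 2 *
      (h * Polynomial.derivative W - 2 * Polynomial.derivative h * W) = 0 := by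
    rw [← hr, hW]
    simp only [Polynomial.derivative_mul, Polynomial.derivative_add, Polynomial.derivative_sub,
      Polynomial.derivative_neg, Polynomial.derivative_natCast, Polynomial.derivative_X,
      Polynomial.derivative_one, Polynomial.derivative_ofNat]
    ring
  have hg0 : g ≠ 0 := by rintro h; simp [h] at g0
  have hn0 : (n : Polynomial ℂ) + 2 ≠ 0 := by exact_mod_cast Nat.succ_ne_zero (n+1)
  have := (mul_eq_zero.1 hfin).resolve_left
    (mul_ne_zero (mul_ne_zero (pow_ne_zero _ hn0) h1) (pow_ne_zero _ hg0))
  exact uni_contra g h h1 h0 g0 W hW (sub_eq_zero.1 this)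


structure ND (k m : ℕ) (c : Fin k → Fin m → V3) : Prop where
  nz : ∀ i a j b, (i, a) ≠ (j, b) → cr (c i a) (c j b) ≠ 0
  ex : ∀ i j, i ≠ j → ∀ a b l, ∃ d, dt (c l d) (cr (c i a) (c j b)) = 0
  uq : ∀ i j, i ≠ j → ∀ a b l d d', dt (c l d) (cr (c i a) (c j b)) = 0 →
    dt (c l d') (cr (c i a) (c j b)) = 0 → d = d'

lemma dt_cr_left (a b : V3) : dt a (cr a b) = 0 := by simp [dt, cr]; ring
lemma dt_cr_right (a b : V3) : dt b (cr a b) = 0 := by simp [dt, cr]; ring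
lemma dt_cr_swap (a b c : V3) : dt a (cr b c) = - dt b (cr a c) := by simp [dt, cr]; ring
lemma dt_cr_swap' (a b c : V3) : dt a (cr b c) = - dt a (cr c b) := by simp [dt, cr]; ring
lemma cr_zero_left (b : V3) : cr 0 b = 0 := by
  funext j; fin_cases j <;> simp [cr]
lemma exists_ne {c : V3} (hc : c ≠ 0) : ∃ i, c i ≠ 0 := by
  by_contra h; push Not at h; exact hc (funext h)

lemma prop_ker (c d e y q : V3) (hc : c ≠ 0) (h : dt e (cr c d) = 0) (hy : dt c y = 0)
    (hq : dt c q = 0) : dt d y * dt e q = dt e y * dt d q := by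
  obtain ⟨i, hi⟩ := exists_ne hc
  apply mul_left_cancel₀ hi
  simp only [dt, cr, Matrix.cons_val_zero, Matrix.cons_val_one, Matrix.cons_val] at *
  have k0 : c 0 * (y 1 * q 0 - y 0 * q 1) = c 2 * (y 2 * q 1 - y 1 * q 2) := by
    linear_combination hy * (-(q 1)) + hq * y 1
  have k1 : c 0 * (y 2 * q 0 - y 0 * q 2) = c 1 * (y 1 * q 2 - y 2 * q 1) := by
    linear_combination hy * (-(q 2)) + hq * y 2
  have k2 : c 1 * (y 1 * q 0 - y 0 * q 1) = c 2 * (y 0 * q 2 - y 2 * q 0) := by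
    linear_combination hy * q 0 - hq * y 0
  fin_cases i <;> simp only [Fin.zero_eta, Fin.mk_one, Fin.reduceFinMk]
  · linear_combination (y 1 * q 2 - y 2 * q 1) * h + (d 1 * e 0 - d 0 * e 1) * k0
      + (d 2 * e 0 - d 0 * e 2) * k1
  · linear_combination (y 2 * q 0 - y 0 * q 2) * h + (d 1 * e 0 - d 0 * e 1) * k2
      + (d 2 * e 1 - d 1 * e 2) * k1
  · linear_combination (y 0 * q 1 - y 1 * q 0) * h + (d 1 * e 2 - d 2 * e 1) * k0
      + (d 2 * e 0 - d 0 * e 2) * k2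

/-- product of the lines of a class -/
noncomputable def prodL {k m : ℕ} (c : Fin k → Fin m → V3) (i : Fin k) : Poly3 :=
  ∏ a, lin (c i a)

lemma prod_lin_hom {ι : Type*} (s : Finset ι) (f : ι → V3) :
    (∏ a ∈ s, lin (f a)).IsHomogeneous s.card := by
  have := IsHomogeneous.prod s (fun a => lin (f a)) (fun _ => 1) (fun a _ => lin_hom (f a))
  simpa using this

lemma eval_pderiv_mul_lin (c p : V3) (R : Poly3) (h : dt c p = 0) (t : Fin 3) :
    eval p (pderiv t (lin c * R)) = c t * eval p R := by
  rw [Derivation.leibniz, smul_eq_mul, smul_eq_mul, map_add, map_mul, map_mul, eval_lin, h]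
  fin_cases t <;> simp [lin, pderiv_X] <;> ring

section
variable {k m : ℕ} {c : Fin k → Fin m → V3}

lemma ND.ne_zero (h : ND k m c) (hk : 3 ≤ k) (i : Fin k) (a : Fin m) : c i a ≠ 0 := by
  intro h0
  obtain ⟨j, hj⟩ : ∃ j : Fin k, j ≠ i := by
    have : Nontrivial (Fin k) := Fin.nontrivial_iff_two_le.2 (by omega)
    exact _root_.exists_ne i
  apply h.nz i a j a (by simp [hj.symm])
  rw [h0, cr_zero_left]

/-- F, G are in a pencil containing each line -/
lemma ND.pencil (h : ND k m c) (hk : 3 ≤ k) (i₀ i₁ : Fin k) (h01 : i₀ ≠ i₁) (j : Fin k)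
    (e : Fin m) : ∃ α β : ℂ, (α ≠ 0 ∨ β ≠ 0) ∧
      lin (c j e) ∣ C α * prodL c i₀ + C β * prodL c i₁ := by
  by_cases hj0 : j = i₀
  · subst hj0
    refine ⟨1, 0, by simp, ?_⟩
    simpa [prodL] using Finset.dvd_prod_of_mem (fun a => lin (c j a)) (Finset.mem_univ e)
  by_cases hj1 : j = i₁
  · subst hj1
    refine ⟨0, 1, by simp, ?_⟩
    simpa [prodL] using Finset.dvd_prod_of_mem (fun a => lin (c j a)) (Finset.mem_univ e)
  have hc := h.ne_zero hk j e
  have hnd : ∀ i, i ≠ j → ¬ lin (c j e) ∣ prodL c i := by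
    intro i hij hd
    obtain ⟨a, -, ha⟩ := (lin_prime _ hc).exists_mem_finset_dvd hd
    exact h.nz j e i a (by simp [hij.symm]) (cr_eq_zero_of_lin_dvd _ _ ha)
  have hnd2 : ¬ lin (c j e) ∣ prodL c i₀ * prodL c i₁ := by
    intro hd
    rcases (lin_prime _ hc).dvd_or_dvd hd with hd | hd
    · exact hnd _ (Ne.symm hj0) hd
    · exact hnd _ (Ne.symm hj1) hd
  rw [lin_dvd_iff _ hc] at hnd2
  push Not at hnd2
  obtain ⟨q, hq, hFG⟩ := hnd2
  rw [map_mul] at hFG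
  have hF := left_ne_zero_of_mul hFG
  have hG := right_ne_zero_of_mul hFG
  refine ⟨eval q (prodL c i₁), - eval q (prodL c i₀), Or.inl hG, ?_⟩
  rw [lin_dvd_iff _ hc]
  intro y hy
  simp only [map_add, map_mul, eval_C]
  choose s hs using fun a => h.ex j i₀ hj0 e a i₁
  have sinj : Function.Injective s := by
    intro a a' haa
    have h1 := hs a
    have h2 := hs a'
    rw [← haa] at h2
    have e1 : ∀ a, dt (c i₁ (s a)) (cr (c j e) (c i₀ a)) = 0 → ∀ b, b = s a →
        dt (c i₀ a) (cr (c j e) (c i₁ b)) = 0 := by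
      rintro a h b rfl
      rw [dt_cr_swap', dt_cr_swap, dt_cr_swap', h]; simp
    refine h.uq j i₁ hj1 e (s a) i₀ a a' (e1 a h1 _ rfl) (e1 a' (hs a') _ haa)
  have sbij := Finite.injective_iff_bijective.1 sinj
  have : eval y (prodL c i₀) * eval q (prodL c i₁) = eval y (prodL c i₁) * eval q (prodL c i₀) := by
    simp only [prodL, map_prod, eval_lin]
    rw [← Function.Bijective.prod_comp sbij (fun a => dt (c i₁ a) q),
      ← Function.Bijective.prod_comp sbij (fun a => dt (c i₁ a) y),
      ← Finset.prod_mul_distrib, ← Finset.prod_mul_distrib]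
    exact Finset.prod_congr rfl fun a _ => prop_ker _ _ _ _ _ hc (hs a) hy hq
  linear_combination this

lemma ND.local_form (h : ND k m c) (i j : Fin k) (hij : i ≠ j) (a b : Fin m) (l : Fin k) :
    ∃ d R, prodL c l = lin (c l d) * R ∧ dt (c l d) (cr (c i a) (c j b)) = 0 ∧
      eval (cr (c i a) (c j b)) R ≠ 0 := by
  obtain ⟨d, hd⟩ := h.ex i j hij a b l
  refine ⟨d, ∏ x ∈ Finset.univ.erase d, lin (c l x), ?_, hd, ?_⟩
  · exact (Finset.mul_prod_erase _ _ (Finset.mem_univ d)).symm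
  · rw [map_prod, Finset.prod_ne_zero_iff]
    intro x hx h0
    rw [eval_lin] at h0
    exact (Finset.ne_of_mem_erase hx) (h.uq i j hij a b l x d h0 hd)

lemma ND.invariant (h : ND k m c) (hk : 3 ≤ k) (i₀ i₁ : Fin k) (h01 : i₀ ≠ i₁) (j : Fin k)
    (e : Fin m) :
    lin (c j e) ∣ dv (vf (prodL c i₀) (prodL c i₁)) (lin (c j e)) := by
  obtain ⟨α, β, hαβ, R, hR⟩ := h.pencil hk i₀ i₁ h01 j e
  have hc := h.ne_zero hk j e
  have hpr := lin_prime _ hc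
  have hRnd : ¬ lin (c j e) ∣ R := by
    rintro ⟨S, rfl⟩
    obtain ⟨j', hj⟩ : ∃ j' : Fin k, j' ≠ j := by
      have : Nontrivial (Fin k) := Fin.nontrivial_iff_two_le.2 (by omega)
      exact _root_.exists_ne j
    obtain ⟨a, P, hP, ha, hP0⟩ := h.local_form j j' hj.symm e e i₀
    obtain ⟨b, Q, hQ, hb, hQ0⟩ := h.local_form j j' hj.symm e e i₁
    have hp : dt (c j e) (cr (c j e) (c j' e)) = 0 := dt_cr_left _ _
    set p := cr (c j e) (c j' e)
    have grad : ∀ t, α * (c i₀ a t * eval p P) + β * (c i₁ b t * eval p Q) = 0 := by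
      intro t
      have := congrArg (fun Z => eval p (pderiv t Z)) hR
      rw [eval_pderiv_mul_lin _ _ _ hp, map_mul, eval_lin, hp, hP, hQ] at this
      rw [map_add, map_add, pderiv_C_mul, pderiv_C_mul, (eval p).map_mul, (eval p).map_mul, eval_C, eval_C,
        eval_pderiv_mul_lin _ _ _ ha, eval_pderiv_mul_lin _ _ _ hb] at this
      rw [this]; ring
    have hnz := h.nz i₀ a i₁ b (by simp [h01])
    have g0 := grad 0
    have g1 := grad 1
    have g2 := grad 2
    rcases hαβ with hα | hβ
    · apply hnz
      have hne := mul_ne_zero hα hP0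
      funext t
      apply mul_left_cancel₀ hne
      fin_cases t <;> simp only [cr, Fin.zero_eta, Fin.mk_one, Fin.reduceFinMk, Matrix.cons_val_zero,
        Matrix.cons_val_one, Matrix.cons_val, Pi.zero_apply, mul_zero]
      · linear_combination c i₁ b 2 * g1 - c i₁ b 1 * g2
      · linear_combination c i₁ b 0 * g2 - c i₁ b 2 * g0
      · linear_combination c i₁ b 1 * g0 - c i₁ b 0 * g1
    · apply hnz
      have hne := mul_ne_zero hβ hQ0
      funext t
      apply mul_left_cancel₀ hne
      fin_cases t <;> simp only [cr, Fin.zero_eta, Fin.mk_one, Fin.reduceFinMk, Matrix.cons_val_zero,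
        Matrix.cons_val_one, Matrix.cons_val, Pi.zero_apply, mul_zero]
      · linear_combination -c i₀ a 2 * g1 + c i₀ a 1 * g2
      · linear_combination -c i₀ a 0 * g2 + c i₀ a 2 * g0
      · linear_combination -c i₀ a 1 * g0 + c i₀ a 0 * g1
  have h1 := congrArg (dv (vf (prodL c i₀) (prodL c i₁))) hR
  simp only [dv_add, dv_mul, dv_C, dv_F, dv_G] at h1
  refine (hpr.dvd_or_dvd (a := R) ?_).resolve_left hRnd
  exact ⟨-dv (vf (prodL c i₀) (prodL c i₁)) R, by linear_combination -h1⟩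

lemma ND.bound_aux (h : ND k m c) (hk : 3 ≤ k) (hm : 2 ≤ m) (i₀ i₁ : Fin k) (h01 : i₀ ≠ i₁)
    (a₀ a₁ : Fin m) (ha : a₀ ≠ a₁) (e0 : c i₀ a₀ = ![1, 0, 0]) (e2 : c i₀ a₁ = ![0, 0, 1]) :
    k * m ≤ 6 * m - 6 := by
  set E := extac (vf (prodL c i₀) (prodL c i₁)) with hE
  have hcl : ∀ i, (prodL c i).IsHomogeneous m := by
    intro i; simpa [prodL] using prod_lin_hom Finset.univ (c i)
  have hEh : E.IsHomogeneous (6 * m - 6) := ext_hom _ _ m hm (hcl _) (hcl _)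
  have hE0 : E ≠ 0 := by
    have hF : prodL c i₀ = X 0 * ∏ x ∈ Finset.univ.erase a₀, lin (c i₀ x) := by
      have h1 : lin (c i₀ a₀) = X 0 := by rw [e0]; simp [lin]
      rw [← h1]
      exact (Finset.mul_prod_erase _ _ (Finset.mem_univ a₀)).symm
    rw [hE, hF]
    have hrl : ∀ d : V3, rho (lin d) = Polynomial.C (d 1) + Polynomial.C (d 2) * Polynomial.X := by
      intro d; simp [rho, lin]
    refine ext_ne_zero _ _ m hm ?_ (hcl _) ?_ ?_ ?_
    · simpa using prod_lin_hom (Finset.univ.erase a₀) (c i₀)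
    · rw [map_prod, Finset.prod_ne_zero_iff]
      intro x hx h0
      have hx := Finset.ne_of_mem_erase hx
      rw [hrl] at h0
      have t0 := congrArg (fun p => Polynomial.coeff p 0) h0
      have t1 := congrArg (fun p => Polynomial.coeff p 1) h0
      simp [Polynomial.coeff_C] at t0 t1
      apply h.nz i₀ a₀ i₀ x (by simp [hx.symm])
      rw [e0]
      funext t
      fin_cases t <;> simp [cr, t0, t1]
    · rw [map_prod, Polynomial.eval_prod]
      apply Finset.prod_eq_zero (i := a₁) (by simp [ha.symm])
      rw [hrl, e2]; simp
    · rw [prodL, map_prod, Polynomial.eval_prod, Finset.prod_ne_zero_iff]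
      intro b _ h0
      rw [hrl] at h0
      simp at h0
      apply ha
      refine h.uq i₀ i₁ h01 a₀ b i₀ a₀ a₁ (dt_cr_left _ _) ?_
      rw [e0, e2]; simp [dt, cr, h0]
  have hdvd : ∏ x : Fin k × Fin m, lin (c x.1 x.2) ∣ E := by
    apply Fintype.prod_dvd_of_isRelPrime
    · intro x y hxy
      refine (lin_prime _ (h.ne_zero hk _ _)).irreducible.isRelPrime_iff_not_dvd.2 ?_
      intro hd
      exact h.nz x.1 x.2 y.1 y.2 hxy (cr_eq_zero_of_lin_dvd _ _ hd)
    · intro x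
      exact dvd_ext _ _ (h.ne_zero hk _ _) (h.invariant hk i₀ i₁ h01 _ _)
  obtain ⟨Q, hQ⟩ := hdvd
  have hP0 : ∏ x : Fin k × Fin m, lin (c x.1 x.2) ≠ 0 := by
    intro h0; rw [h0, zero_mul] at hQ; exact hE0 hQ
  have hQ0 : Q ≠ 0 := by
    rintro rfl; rw [mul_zero] at hQ; exact hE0 hQ
  have d1 := (prod_lin_hom Finset.univ (fun x : Fin k × Fin m => c x.1 x.2)).totalDegree hP0
  have d2 := hEh.totalDegree hE0
  rw [hQ, totalDegree_mul_of_isDomain hP0 hQ0, d1] at d2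
  simp at d2
  omega

open Matrix in
lemma dt_cr_vecMul (M : Matrix (Fin 3) (Fin 3) ℂ) (a b d : V3) :
    dt (a ᵥ* M) (cr (b ᵥ* M) (d ᵥ* M)) = M.det * dt a (cr b d) := by
  simp [dt, cr, Matrix.det_fin_three, Matrix.vecMul, dotProduct, Fin.sum_univ_three]
  ring

lemma cr_ne_zero_iff (a b : V3) : cr a b ≠ 0 ↔ ∃ d, dt d (cr a b) ≠ 0 := by
  constructor
  · intro h
    obtain ⟨i, hi⟩ := exists_ne h
    refine ⟨Pi.single i 1, ?_⟩
    fin_cases i <;> simpa [dt] using hi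
  · rintro ⟨d, hd⟩ h
    rw [h] at hd
    simp [dt] at hd

open Matrix in
lemma ND.transform (h : ND k m c) (M : Matrix (Fin 3) (Fin 3) ℂ) (hM : M.det ≠ 0) :
    ND k m (fun i a => c i a ᵥ* M) where
  nz i a j b hne := by
    obtain ⟨d, hd⟩ := (cr_ne_zero_iff _ _).1 (h.nz i a j b hne)
    rw [cr_ne_zero_iff]
    exact ⟨d ᵥ* M, by rw [dt_cr_vecMul]; exact mul_ne_zero hM hd⟩
  ex i j hij a b l := by
    obtain ⟨d, hd⟩ := h.ex i j hij a b l
    exact ⟨d, by rw [dt_cr_vecMul, hd, mul_zero]⟩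
  uq i j hij a b l d d' h1 h2 := by
    rw [dt_cr_vecMul] at h1 h2
    exact h.uq i j hij a b l d d' ((mul_eq_zero.1 h1).resolve_left hM)
      ((mul_eq_zero.1 h2).resolve_left hM)

open Matrix in
lemma ND.bound (h : ND k m c) (hk : 3 ≤ k) (hm : 2 ≤ m) : k * m ≤ 6 * m - 6 := by
  let i₀ : Fin k := ⟨0, by omega⟩
  let i₁ : Fin k := ⟨1, by omega⟩
  let a₀ : Fin m := ⟨0, by omega⟩
  let a₁ : Fin m := ⟨1, by omega⟩
  have ha : a₀ ≠ a₁ := by simp [a₀, a₁]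
  have hi : i₀ ≠ i₁ := by simp [i₀, i₁]
  obtain ⟨z, hz⟩ := (cr_ne_zero_iff _ _).1 (h.nz i₀ a₀ i₀ a₁ (by simp [ha]))
  let N : Matrix (Fin 3) (Fin 3) ℂ := Matrix.of ![c i₀ a₀, z, c i₀ a₁]
  have hN : N.det ≠ 0 := by
    have : N.det = - dt z (cr (c i₀ a₀) (c i₀ a₁)) := by
      simp [N, Matrix.det_fin_three, dt, cr]; ring
    rw [this]; exact neg_ne_zero.2 hz
  have hu : IsUnit N.det := hN.isUnit
  have hNN : N * N⁻¹ = 1 := Matrix.mul_nonsing_inv N hu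
  have hdet : (N⁻¹).det ≠ 0 := by
    intro h0
    have := congrArg Matrix.det hNN
    rw [Matrix.det_mul, h0] at this
    simp at this
  refine (h.transform N⁻¹ hdet).bound_aux hk hm i₀ i₁ hi a₀ a₁ ha ?_ ?_
  · funext t
    have := congrFun (congrFun hNN 0) t
    rw [Matrix.mul_apply_eq_vecMul] at this
    change (c i₀ a₀ ᵥ* N⁻¹) t = _ at this
    rw [this]
    fin_cases t <;> simp [Matrix.one_apply]
  · funext t
    have := congrFun (congrFun hNN 2) t
    rw [Matrix.mul_apply_eq_vecMul] at this
    change (c i₀ a₁ ᵥ* N⁻¹) t = _ at this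
    rw [this]
    fin_cases t <;> simp [Matrix.one_apply]
end

end NetAux

namespace NetAux

lemma same_ker (c d : V3) (hc : c ≠ 0) (h : cr c d = 0) (x : V3) (hx : dt c x = 0) :
    dt d x = 0 := by
  obtain ⟨i, hi⟩ := exists_ne hc
  apply mul_left_cancel₀ hi
  have e0 := congrFun h 0
  have e1 := congrFun h 1
  have e2 := congrFun h 2
  simp only [cr, dt, Matrix.cons_val_zero, Matrix.cons_val_one, Matrix.cons_val,
    Pi.zero_apply] at *
  fin_cases i <;> simp only [Fin.zero_eta, Fin.mk_one, Fin.reduceFinMk]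
  · linear_combination d 0 * hx + x 1 * e2 - x 2 * e1
  · linear_combination d 1 * hx - x 0 * e2 + x 2 * e0
  · linear_combination d 2 * hx + x 0 * e1 - x 1 * e0

/-- two vectors in the common kernel of independent forms have the same annihilators -/
lemma point_eq (c d e y : V3) (hy : y ≠ 0) (h1 : dt c y = 0) (h2 : dt d y = 0)
    (h : cr c d ≠ 0) : dt e (cr c d) = 0 ↔ dt e y = 0 := by
  have hz : cr (cr c d) y = 0 := by
    funext t
    simp only [dt] at h1 h2
    fin_cases t <;> simp only [cr, Fin.zero_eta, Fin.mk_one, Fin.reduceFinMk,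
      Matrix.cons_val_zero, Matrix.cons_val_one, Matrix.cons_val, Pi.zero_apply]
    · linear_combination d 0 * h1 - c 0 * h2
    · linear_combination d 1 * h1 - c 1 * h2
    · linear_combination d 2 * h1 - c 2 * h2
  have hz' : cr y (cr c d) = 0 := by
    funext t
    have e0 := congrFun hz t
    fin_cases t <;> simp only [cr, Fin.zero_eta, Fin.mk_one, Fin.reduceFinMk,
      Matrix.cons_val_zero, Matrix.cons_val_one, Matrix.cons_val, Pi.zero_apply] at e0 ⊢ <;>
      linear_combination -e0
  have comm : ∀ a b, dt a b = dt b a := fun a b => by simp only [dt]; ring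
  constructor
  · intro h0
    rw [comm] at h0 ⊢
    exact same_ker _ _ h hz e h0
  · intro h0
    rw [comm] at h0 ⊢
    exact same_ker _ _ hy hz' e h0

lemma exists_form (L : Set P2) (hL : IsProjLine L) :
    ∃ c : V3, c ≠ 0 ∧ ∀ p : P2, p ∈ L ↔ dt c p.rep = 0 := by
  obtain ⟨f, hf, rfl⟩ := hL
  have hfx : ∀ x, f x = dt (fun t => f (Pi.single t 1)) x := by
    intro x
    rw [LinearMap.pi_apply_eq_sum_univ f x, Fin.sum_univ_three]
    simp only [dt, smul_eq_mul]
    have : ∀ i : Fin 3, (fun j => if i = j then (1 : ℂ) else 0) = Pi.single i 1 := by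
      intro i; funext j; simp [Pi.single_apply, eq_comm]
    simp only [this]; ring
  refine ⟨fun t => f (Pi.single t 1), ?_, ?_⟩
  · intro h
    apply hf
    ext x
    rw [h] at hfx
    simp [hfx, dt]
  · intro p
    rw [← hfx]; rfl

lemma net_data (k m : ℕ) (A : Fin k → Finset (Set P2)) (X : Set P2) (hN : IsNet k m A X) :
    ∃ c, ND k m c := by
  choose c hc0 hc using fun (i : Fin k) (a : Fin m) =>
    exists_form _ (hN.lines i _ ((A i).equivFinOfCardEq (hN.card_eq i) |>.symm a).2)
  set L : Fin k → Fin m → Set P2 :=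
    fun i a => ((A i).equivFinOfCardEq (hN.card_eq i) |>.symm a : Set P2) with hLdef
  have hLmem : ∀ i a, L i a ∈ A i := fun i a =>
    ((A i).equivFinOfCardEq (hN.card_eq i) |>.symm a).2
  have hLinj : ∀ i a b, L i a = L i b → a = b := by
    intro i a b hab
    exact ((A i).equivFinOfCardEq (hN.card_eq i)).symm.injective (Subtype.ext hab)
  have hLsurj : ∀ i, ∀ l ∈ A i, ∃ a, L i a = l := by
    intro i l hl
    exact ⟨(A i).equivFinOfCardEq (hN.card_eq i) ⟨l, hl⟩, by simp [hLdef]⟩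
  have hc : ∀ i a (p : P2), p ∈ L i a ↔ dt (c i a) p.rep = 0 := hc
  have hnz : ∀ i a j b, (i, a) ≠ (j, b) → cr (c i a) (c j b) ≠ 0 := by
    intro i a j b hne h0
    have h0' : cr (c j b) (c i a) = 0 := by
      funext t
      have e0 := congrFun h0 t
      fin_cases t <;> simp only [cr, Fin.zero_eta, Fin.mk_one, Fin.reduceFinMk,
        Matrix.cons_val_zero, Matrix.cons_val_one, Matrix.cons_val, Pi.zero_apply] at e0 ⊢ <;>
        linear_combination -e0
    have hEq : L i a = L j b := by
      ext p
      rw [hc, hc]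
      exact ⟨same_ker _ _ (hc0 i a) h0 _, same_ker _ _ (hc0 j b) h0' _⟩
    by_cases hij : i = j
    · subst hij
      exact hne (by rw [hLinj _ _ _ hEq])
    · exact Finset.disjoint_left.1 (hN.disj i j hij) (hLmem i a) (hEq ▸ hLmem j b)
  have hpt : ∀ i j, i ≠ j → ∀ a b, ∃ p ∈ X, ∀ l d,
      dt (c l d) (cr (c i a) (c j b)) = 0 ↔ p ∈ L l d := by
    intro i j hij a b
    obtain ⟨p, hpX, h1, h2⟩ := hN.meets i j hij _ (hLmem i a) _ (hLmem j b)
    refine ⟨p, hpX, fun l d => ?_⟩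
    rw [hc, point_eq _ _ _ p.rep p.rep_nonzero ((hc _ _ _).1 h1) ((hc _ _ _).1 h2)
      (hnz i a j b (by simp [hij]))]
  refine ⟨c, hnz, ?_, ?_⟩
  · intro i j hij a b l
    obtain ⟨p, hpX, hp⟩ := hpt i j hij a b
    obtain ⟨M, ⟨hM, hpM⟩, -⟩ := hN.unique_through p hpX l
    obtain ⟨d, rfl⟩ := hLsurj l M hM
    exact ⟨d, (hp _ _).2 hpM⟩
  · intro i j hij a b l d d' h1 h2
    obtain ⟨p, hpX, hp⟩ := hpt i j hij a b
    exact hLinj _ _ _ ((hN.unique_through p hpX l).unique ⟨hLmem _ _, (hp _ _).1 h1⟩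
      ⟨hLmem _ _, (hp _ _).1 h2⟩)

end NetAux

/-- For a nontrivial (k,m)-net in ℙ²(ℂ) one has k ≤ 5; moreover
if k = 4 then m ≥ 3 and if k = 5 then m ≥ 6. -/
theorem net_k_le_five (k m : ℕ) (A : Fin k → Finset (Set P2)) (X : Set P2)
    (hk : 3 ≤ k) (hm : 1 < m) (hN : IsNet k m A X) :
    k ≤ 5 ∧ (k = 4 → 3 ≤ m) ∧ (k = 5 → 6 ≤ m) := by
  obtain ⟨c, hc⟩ := NetAux.net_data k m A X hN
  have hb := hc.bound hk hm
  refine ⟨?_, ?_, ?_⟩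
  · by_contra h
    have : 6 * m ≤ k * m := Nat.mul_le_mul_right m (by omega)
    omega
  · rintro rfl; omega
  · rintro rfl; omega
end

section
/- Let (𝒜,𝒳) be a nontrivial (k,m)-net in ℙ²(ℂ) such that at least two of the classes are pencils. Then k = 3. -/
/-- A class of lines is a pencil if all of its lines pass through a common point. -/
def IsPencil (S : Finset (Set P2)) : Prop :=
  ∃ p : P2, ∀ L ∈ S, p ∈ L

open Classical in
/-- Vectors of the points of `X` on `L`, normalized by `h`, summed up. -/
noncomputable def netCentroid (h : (Fin 3 → ℂ) →ₗ[ℂ] ℂ) (S : Finset P2) (L : Set P2) :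
    Fin 3 → ℂ :=
  ∑ r ∈ S.filter (fun r => r ∈ L), (h r.rep)⁻¹ • r.rep

lemma ker_eq_span_of_pair (u v : Fin 3 → ℂ) (huv : LinearIndependent ℂ ![u, v])
    (f : (Fin 3 → ℂ) →ₗ[ℂ] ℂ) (hf : f ≠ 0) (hu : f u = 0) (hv : f v = 0) :
    Submodule.span ℂ (Set.range ![u, v]) = LinearMap.ker f := by
  apply Submodule.eq_of_le_of_finrank_eq
  · rw [Submodule.span_le]
    rintro _ ⟨i, rfl⟩
    fin_cases i
    · simpa using hu
    · simpa using hv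
  · rw [finrank_span_eq_card huv]
    have h1 := LinearMap.finrank_range_add_finrank_ker f
    rw [LinearMap.range_eq_top.2 (LinearMap.surjective hf)] at h1
    simp at h1
    simp
    omega

lemma ker_eq_of_pair (u v : Fin 3 → ℂ) (huv : LinearIndependent ℂ ![u, v])
    (f g : (Fin 3 → ℂ) →ₗ[ℂ] ℂ) (hf : f ≠ 0) (hg : g ≠ 0) (hu : f u = 0) (hv : f v = 0)
    (hu' : g u = 0) (hv' : g v = 0) (w : Fin 3 → ℂ) (hw : f w = 0) : g w = 0 := by
  have h1 := ker_eq_span_of_pair u v huv f hf hu hv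
  have h2 := ker_eq_span_of_pair u v huv g hg hu' hv'
  have : w ∈ LinearMap.ker f := hw
  rw [← h1, h2] at this
  exact this

lemma indep_reps (p q : P2) (hpq : p ≠ q) : LinearIndependent ℂ ![p.rep, q.rep] := by
  have h := (Projectivization.independent_pair_iff_ne p q).2 hpq
  rw [Projectivization.independent_iff] at h
  have he : (![p.rep, q.rep] : Fin 2 → Fin 3 → ℂ) = Projectivization.rep ∘ ![p, q] := by
    funext i
    fin_cases i <;> rfl
  rw [he]
  exact h

lemma line_eq (L M : Set P2) (hL : IsProjLine L) (hM : IsProjLine M) (p q : P2) (hpq : p ≠ q)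
    (h1 : p ∈ L) (h2 : q ∈ L) (h3 : p ∈ M) (h4 : q ∈ M) : L = M := by
  obtain ⟨f, hf, rfl⟩ := hL
  obtain ⟨g, hg, rfl⟩ := hM
  have hi := indep_reps p q hpq
  ext w
  exact ⟨ker_eq_of_pair _ _ hi f g hf hg h1 h2 h3 h4 _,
    ker_eq_of_pair _ _ hi g f hg hf h3 h4 h1 h2 _⟩

lemma centroid_diff {k m : ℕ} {A : Fin k → Finset (Set P2)} {X : Set P2} (hN : IsNet k m A X)
    (h : (Fin 3 → ℂ) →ₗ[ℂ] ℂ) (hX : ∀ r ∈ X, h r.rep ≠ 0) (S : Finset P2)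
    (hS : ∀ r, r ∈ S ↔ r ∈ X) (j c d : Fin k) (hc : c ≠ j) (hd : d ≠ j)
    (Q : P2) (hQ : ∀ N ∈ A j, Q ∈ N) (hhQ : h Q.rep = 0)
    (L M : Set P2) (hL : L ∈ A c) (hM : M ∈ A d) :
    ∃ t : ℂ, netCentroid h S L - netCentroid h S M = t • Q.rep := by
  have sumform : ∀ c, c ≠ j → ∀ L ∈ A c, ∃ pt : Set P2 → P2,
      (∀ N ∈ A j, pt N ∈ X ∧ pt N ∈ L ∧ pt N ∈ N) ∧
      netCentroid h S L = ∑ N ∈ A j, (h (pt N).rep)⁻¹ • (pt N).rep := by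
    intro c hc L hL
    have : ∀ N, ∃ p : P2, N ∈ A j → p ∈ X ∧ p ∈ L ∧ p ∈ N := by
      intro N
      by_cases hNj : N ∈ A j
      · obtain ⟨p, hp⟩ := hN.meets c j hc L hL N hNj
        exact ⟨p, fun _ => hp⟩
      · exact ⟨Q, fun h => absurd h hNj⟩
    choose pt hpt using this
    refine ⟨pt, hpt, ?_⟩
    symm
    unfold netCentroid
    refine Finset.sum_bij (fun N _ => pt N) ?_ ?_ ?_ ?_
    · intro N hNj
      simp only [Finset.mem_filter, hS]
      exact ⟨(hpt N hNj).1, (hpt N hNj).2.1⟩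
    · intro N hN1 N' hN2 he
      have he : pt N = pt N' := he
      refine (hN.unique_through (pt N) (hpt N hN1).1 j).unique ⟨hN1, (hpt N hN1).2.2⟩
        ⟨hN2, ?_⟩
      rw [he]; exact (hpt N' hN2).2.2
    · intro r hr
      simp only [Finset.mem_filter, hS] at hr
      obtain ⟨N, ⟨hNj, hrN⟩, -⟩ := hN.unique_through r hr.1 j
      refine ⟨N, hNj, ?_⟩
      by_contra hne
      have := line_eq L N (hN.lines c L hL) (hN.lines j N hNj) (pt N) r hne (hpt N hNj).2.1 hr.2
        (hpt N hNj).2.2 hrN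
      subst this
      exact Finset.disjoint_left.1 (hN.disj c j hc) hL hNj
    · intros; rfl
  obtain ⟨a, ha, ha'⟩ := sumform c hc L hL
  obtain ⟨b, hb, hb'⟩ := sumform d hd M hM
  have key : ∀ N, ∃ t : ℂ, N ∈ A j →
      (h (a N).rep)⁻¹ • (a N).rep - (h (b N).rep)⁻¹ • (b N).rep = t • Q.rep := by
    intro N
    by_cases hNj : N ∈ A j
    swap
    · exact ⟨0, fun h => absurd h hNj⟩
    obtain ⟨f, hf, hfN⟩ := hN.lines j N hNj
    have hmem : ∀ p, p ∈ N → f p.rep = 0 := by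
      intro p hp; rw [hfN] at hp; exact hp
    have h1 := hX _ (ha N hNj).1
    have h2 := hX _ (hb N hNj).1
    have f1 := hmem _ (ha N hNj).2.2
    have f2 := hmem _ (hb N hNj).2.2
    by_contra hcon
    push Not at hcon
    have hi : LinearIndependent ℂ
        ![Q.rep, (h (a N).rep)⁻¹ • (a N).rep - (h (b N).rep)⁻¹ • (b N).rep] := by
      rw [LinearIndependent.pair_iff' Q.rep_nonzero]
      intro t ht
      exact (hcon t).2 ht.symm
    refine h1 (ker_eq_of_pair _ _ hi f h hf ?_ (hmem _ (hQ N hNj)) ?_ hhQ ?_ _ f1)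
    · rintro rfl; simp at h1
    · simp [f1, f2]
    · simp [h1, h2]
  choose t ht using key
  refine ⟨∑ N ∈ A j, t N, ?_⟩
  rw [ha', hb', ← Finset.sum_sub_distrib, Finset.sum_smul]
  exact Finset.sum_congr rfl ht

/-- For a nontrivial (k,m)-net in ℙ²(ℂ) with at least two classes
being pencils, one has k = 3. -/
theorem net_with_two_pencils_k_eq_three (k m : ℕ) (A : Fin k → Finset (Set P2)) (X : Set P2)
    (hk : 3 ≤ k) (hm : 1 < m) (hN : IsNet k m A X)
    (hpen : ∃ i j : Fin k, i ≠ j ∧ IsPencil (A i) ∧ IsPencil (A j)) :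
    k = 3 := by
  obtain ⟨i, j, hij, ⟨P, hP⟩, ⟨Q, hQ⟩⟩ := hpen
  by_contra hk3
  obtain ⟨c, hc⟩ : ∃ c, c ∉ ({i, j} : Finset (Fin k)) := by
    by_contra hcon
    push Not at hcon
    have h1 := Finset.card_le_two (a := i) (b := j)
    rw [Finset.eq_univ_iff_forall.2 hcon] at h1
    simp at h1; omega
  obtain ⟨d, hd⟩ : ∃ d, d ∉ ({i, j, c} : Finset (Fin k)) := by
    by_contra hcon
    push Not at hcon
    have h1 := Finset.card_le_three (a := i) (b := j) (c := c)
    rw [Finset.eq_univ_iff_forall.2 hcon] at h1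
    simp at h1; omega
  simp only [Finset.mem_insert, Finset.mem_singleton, not_or] at hc hd
  have two : ∀ i, ∃ L ∈ A i, ∃ L' ∈ A i, L ≠ L' := by
    intro i
    have := hN.card_eq i
    exact Finset.one_lt_card.1 (by omega)
  have base : ∀ i (P : P2), (∀ L ∈ A i, P ∈ L) → P ∉ X := by
    intro i P hP hPX
    obtain ⟨L, hL, L', hL', hne⟩ := two i
    exact hne ((hN.unique_through P hPX i).unique ⟨hL, hP L hL⟩ ⟨hL', hP L' hL'⟩)
  have hPX := base i P hP
  have hQX := base j Q hQ
  have neq : ∀ {i j}, i ≠ j → ∀ {L M}, L ∈ A i → M ∈ A j → L ≠ M := by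
    intro i j hij L M hL hM he
    subst he
    exact Finset.disjoint_left.1 (hN.disj i j hij) hL hM
  have hPQ : P ≠ Q := by
    rintro rfl
    obtain ⟨L, hL, -⟩ := two i
    obtain ⟨M, hM, -⟩ := two j
    obtain ⟨r, hr, hrL, hrM⟩ := hN.meets i j hij L hL M hM
    refine neq hij hL hM (line_eq L M (hN.lines _ _ hL) (hN.lines _ _ hM) r P ?_ hrL (hP L hL)
      hrM (hQ M hM))
    rintro rfl
    exact hPX hr
  have hi := indep_reps P Q hPQ
  obtain ⟨h, hh0, hhP, hhQ⟩ : ∃ h : (Fin 3 → ℂ) →ₗ[ℂ] ℂ, h ≠ 0 ∧ h P.rep = 0 ∧ h Q.rep = 0 := by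
    have hlt : Submodule.span ℂ (Set.range ![P.rep, Q.rep]) < ⊤ := by
      rw [lt_top_iff_ne_top]
      intro he
      have h1 := finrank_span_eq_card hi
      rw [he] at h1
      simp at h1
    obtain ⟨h, h0, hle⟩ := Submodule.exists_le_ker_of_lt_top _ hlt
    exact ⟨h, h0, hle (Submodule.subset_span ⟨0, rfl⟩), hle (Submodule.subset_span ⟨1, rfl⟩)⟩
  have hX : ∀ r ∈ X, h r.rep ≠ 0 := by
    intro r hr hr0
    obtain ⟨L, ⟨hL, hrL⟩, -⟩ := hN.unique_through r hr i
    obtain ⟨M, ⟨hM, hrM⟩, -⟩ := hN.unique_through r hr j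
    have hl : IsProjLine {p : P2 | h p.rep = 0} := ⟨h, hh0, rfl⟩
    have e1 := line_eq L _ (hN.lines _ _ hL) hl r P (by rintro rfl; exact hPX hr) hrL (hP L hL)
      hr0 hhP
    have e2 := line_eq M _ (hN.lines _ _ hM) hl r Q (by rintro rfl; exact hQX hr) hrM (hQ M hM)
      hr0 hhQ
    exact neq hij hL hM (e1.trans e2.symm)
  obtain ⟨S, hS⟩ : ∃ S : Finset P2, ∀ r, r ∈ S ↔ r ∈ X :=
    ⟨hN.finiteX.toFinset, fun r => by simp⟩
  have same : ∀ L ∈ A c, ∀ M ∈ A d, netCentroid h S L = netCentroid h S M := by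
    intro L hL M hM
    obtain ⟨s, hs⟩ := centroid_diff hN h hX S hS i c d hc.1 hd.1 P hP hhP L M hL hM
    obtain ⟨t, ht⟩ := centroid_diff hN h hX S hS j c d hc.2 hd.2.1 Q hQ hhQ L M hL hM
    have h0 := LinearIndependent.pair_iff.1 hi s (-t) (by rw [← hs, neg_smul, ← ht]; simp)
    rw [h0.1, zero_smul] at hs
    exact sub_eq_zero.1 hs
  obtain ⟨M, hM, -⟩ := two d
  obtain ⟨L, hL, L', hL', hLL'⟩ := two c
  have hO : netCentroid h S M ≠ 0 := by
    intro he
    have h1 : h (netCentroid h S M) = 0 := by rw [he]; simp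
    obtain ⟨r, hr, -, hrM⟩ := hN.meets c d (Ne.symm hd.2.2) L hL M hM
    classical
    have h2 : h (netCentroid h S M) = ((S.filter (fun r => r ∈ M)).card : ℂ) := by
      unfold netCentroid
      rw [map_sum, Finset.card_eq_sum_ones, Nat.cast_sum]
      refine Finset.sum_congr (by congr) ?_
      intro r hr
      simp only [Finset.mem_filter, hS] at hr
      simp [hX r hr.1]
    rw [h2, Nat.cast_eq_zero, Finset.card_eq_zero] at h1
    have : r ∈ S.filter (fun r => r ∈ M) := by simp [hS, hr, hrM]
    rw [h1] at this
    simp at this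
  have onLine : ∀ e, ∀ N ∈ A e, netCentroid h S N = netCentroid h S M →
      Projectivization.mk ℂ _ hO ∈ N := by
    intro e N hNe he
    obtain ⟨f, hf, hfN⟩ := hN.lines e N hNe
    have hmem : ∀ p, p ∈ N → f p.rep = 0 := by
      intro p hp; rw [hfN] at hp; exact hp
    have h1 : f (netCentroid h S N) = 0 := by
      unfold netCentroid
      rw [map_sum]
      apply Finset.sum_eq_zero
      intro r hr
      simp only [Finset.mem_filter] at hr
      simp [hmem r hr.2]
    rw [he] at h1
    obtain ⟨a, ha⟩ := Projectivization.exists_smul_eq_mk_rep ℂ _ hO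
    rw [hfN]
    change f _ = 0
    rw [← ha, Units.smul_def, map_smul, h1, smul_zero]
  have oM := onLine d M hM rfl
  have oL := onLine c L hL (same L hL M hM)
  have oL' := onLine c L' hL' (same L' hL' M hM)
  obtain ⟨r, hr, hrL, hrM⟩ := hN.meets c d (Ne.symm hd.2.2) L hL M hM
  have hre : r = Projectivization.mk ℂ _ hO := by
    by_contra hne
    exact neq (Ne.symm hd.2.2) hL hM (line_eq L M (hN.lines _ _ hL) (hN.lines _ _ hM) _ _ hne
      hrL oL hrM oM)
  rw [← hre] at oL'
  exact hLL' ((hN.unique_through r hr c).unique ⟨hL, hrL⟩ ⟨hL', oL'⟩)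
end

section
/- Let (𝒜,𝒳) be a nontrivial (k,m)-net in ℙ²(ℂ), and for each line l ∈ 𝒜 fix a nonzero linear form α_l on ℂ³ whose zero locus is l. For each class i set g_i = ∏_{l ∈ 𝒜_i} α_l, a homogeneous polynomial of degree m. Then for every i with 3 ≤ i ≤ k, the polynomial g_i lies in the ℂ-linear span of g₁ and g₂; that is, all the split curves C_i = {g_i = 0} are fibers of the pencil of degree-m curves generated by any two of them. -/
open MvPolynomial in
lemma eval_smul_of_hom {h : MvPolynomial (Fin 3) ℂ} {d : ℕ} (hh : h.IsHomogeneous d)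
    (c : ℂ) (x : Fin 3 → ℂ) : eval (c • x) h = c ^ d * eval x h := by
  rw [eval_eq, eval_eq, Finset.mul_sum]
  refine Finset.sum_congr rfl fun s hs => ?_
  have h1 := hh.degree_eq_sum_deg_support hs
  simp only [Pi.smul_apply, smul_eq_mul, mul_pow, Finset.prod_mul_distrib,
    Finset.prod_pow_eq_pow_sum]
  rw [h1]; ring

open MvPolynomial in
lemma exists_lin {a : MvPolynomial (Fin 3) ℂ} (ha : a.IsHomogeneous 1) :
    ∃ f : (Fin 3 → ℂ) →ₗ[ℂ] ℂ, ∀ x, eval x a = f x := by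
  have h : a ∈ homogeneousSubmodule (Fin 3) ℂ 1 := ha
  rw [homogeneousSubmodule_one_eq_span_X] at h
  induction h using Submodule.span_induction with
  | mem x hx => obtain ⟨i, rfl⟩ := hx; exact ⟨LinearMap.proj i, fun x => by simp⟩
  | zero => exact ⟨0, fun x => by simp⟩
  | add x y hx hy h1 h2 =>
    obtain ⟨f, hf⟩ := h1 (by rwa [← homogeneousSubmodule_one_eq_span_X] at hx)
    obtain ⟨g, hg⟩ := h2 (by rwa [← homogeneousSubmodule_one_eq_span_X] at hy)
    exact ⟨f + g, fun x => by simp [hf, hg]⟩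
  | smul c x hx h1 =>
    obtain ⟨f, hf⟩ := h1 (by rwa [← homogeneousSubmodule_one_eq_span_X] at hx)
    exact ⟨c • f, fun x => by simp [hf]⟩

open MvPolynomial in
lemma exists_proj {a : MvPolynomial (Fin 3) ℂ} (ha : a.IsHomogeneous 1) (ha0 : a ≠ 0) :
    ∃ φ : MvPolynomial (Fin 3) ℂ →ₐ[ℂ] MvPolynomial (Fin 3) ℂ,
      (∀ h, a ∣ h - φ h) ∧ (∀ h, (∀ x, eval x a = 0 → eval x h = 0) → φ h = 0) := by
  obtain ⟨f, hf⟩ := exists_lin ha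
  have : ∃ w, eval w a = 1 := by
    by_contra hcon
    push Not at hcon
    apply ha0
    apply MvPolynomial.funext
    intro x
    by_contra hx
    apply hcon ((eval x a)⁻¹ • x)
    rw [eval_smul_of_hom ha]
    simp at hx ⊢
    exact inv_mul_cancel₀ hx
  obtain ⟨w, hw⟩ := this
  refine ⟨aeval (fun l => X l - C (w l) * a), ?_, ?_⟩
  · intro h
    rw [← Ideal.mem_span_singleton, ← Ideal.Quotient.eq]
    have : (Ideal.Quotient.mkₐ ℂ (Ideal.span {a})) =
      (Ideal.Quotient.mkₐ ℂ (Ideal.span {a})).comp (aeval (fun l => X l - C (w l) * a)) := by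
      apply MvPolynomial.algHom_ext
      intro i
      simp only [AlgHom.comp_apply, aeval_X, Ideal.Quotient.mkₐ_eq_mk]
      rw [Ideal.Quotient.eq, Ideal.mem_span_singleton]
      simp
    exact DFunLike.congr_fun this h
  · intro h hh
    apply MvPolynomial.funext
    intro x
    have h2 : eval x (aeval (fun l => X l - C (w l) * a) h) = eval (x - (eval x a) • w) h := by
      have : (aeval x).comp (aeval (fun l => X l - C (w l) * a))
          = (aeval (x - (eval x a) • w) : MvPolynomial (Fin 3) ℂ →ₐ[ℂ] ℂ) := by
        apply MvPolynomial.algHom_ext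
        intro i
        simp [MvPolynomial.coe_aeval_eq_eval]; ring
      have := DFunLike.congr_fun this h
      simpa [MvPolynomial.coe_aeval_eq_eval] using this
    rw [h2, hh, map_zero]
    rw [hf, map_sub, map_smul, ← hf, ← hf, hw]; simp

open MvPolynomial in
lemma dvd_of_vanish {a h : MvPolynomial (Fin 3) ℂ} (ha : a.IsHomogeneous 1) (ha0 : a ≠ 0)
    (hh : ∀ x, eval x a = 0 → eval x h = 0) : a ∣ h := by
  obtain ⟨φ, h1, h2⟩ := exists_proj ha ha0
  have := h1 h
  rwa [h2 h hh, sub_zero] at this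

open MvPolynomial in
lemma exists_factor_vanish {a : MvPolynomial (Fin 3) ℂ} (ha : a.IsHomogeneous 1) (ha0 : a ≠ 0)
    {ι : Type*} (S : Finset ι) (g : ι → MvPolynomial (Fin 3) ℂ)
    (hh : ∀ x, eval x a = 0 → eval x (∏ i ∈ S, g i) = 0) :
    ∃ i ∈ S, a ∣ g i := by
  obtain ⟨φ, h1, h2⟩ := exists_proj ha ha0
  have := h2 _ hh
  rw [map_prod, Finset.prod_eq_zero_iff] at this
  obtain ⟨i, hi, h3⟩ := this
  refine ⟨i, hi, ?_⟩
  have := h1 (g i)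
  rwa [h3, sub_zero] at this

open MvPolynomial in
lemma hom_quot {a h : MvPolynomial (Fin 3) ℂ} {d : ℕ} (ha : a.IsHomogeneous 1)
    (hh : h.IsHomogeneous (d + 1)) (hd : a ∣ h) :
    ∃ h', h'.IsHomogeneous d ∧ h = a * h' := by
  obtain ⟨b, rfl⟩ := hd
  refine ⟨homogeneousComponent d b, homogeneousComponent_isHomogeneous _ _, ?_⟩
  letI := MvPolynomial.gradedAlgebra (σ := Fin 3) (R := ℂ)
  have := DirectSum.coe_decompose_mul_of_left_mem_of_le (homogeneousSubmodule (Fin 3) ℂ) (b := b)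
    (show a ∈ homogeneousSubmodule (Fin 3) ℂ 1 from ha) (show 1 ≤ d + 1 by omega)
  have e1 : ∀ (n : ℕ) (p : MvPolynomial (Fin 3) ℂ),
    (DirectSum.decompose (homogeneousSubmodule (Fin 3) ℂ) p n : MvPolynomial (Fin 3) ℂ)
      = homogeneousComponent n p :=
    fun n p => decomposition.decompose'_apply p n
  rw [e1, e1, homogeneousComponent_eq_self hh] at this
  simpa using this

lemma dep_of_ker {f : (Fin 3 → ℂ) →ₗ[ℂ] ℂ} (hf : f ≠ 0) (u v x : Fin 3 → ℂ)
    (hu : f u = 0) (hv : f v = 0) (hx : f x = 0) (hv0 : v ≠ 0) (hxv : ∀ c : ℂ, x ≠ c • v) :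
    ∃ a b : ℂ, u = a • v + b • x := by
  have hdep : ¬ LinearIndependent ℂ ![u, v, x] := by
    intro hl
    have := hl.span_eq_top_of_card_eq_finrank' (by simp)
    apply hf
    apply LinearMap.ext_on_range this
    intro i
    fin_cases i <;> simp [hu, hv, hx]
  rw [Fintype.not_linearIndependent_iff] at hdep
  obtain ⟨g, hg, i, hi⟩ := hdep
  simp [Fin.sum_univ_three] at hg
  by_cases h0 : g 0 = 0
  · exfalso
    by_cases h2 : g 2 = 0
    · simp [h0, h2, hv0] at hg
      fin_cases i <;> simp_all
    · apply hxv (-(g 2)⁻¹ * g 1)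
      have : g 2 • x = - (g 1 • v) := by
        rw [h0] at hg; simp at hg; exact eq_neg_of_add_eq_zero_right hg
      rw [mul_smul, neg_smul, ← smul_neg, ← this, smul_smul, inv_mul_cancel₀ h2, one_smul]
  · refine ⟨-(g 0)⁻¹ * g 1, -(g 0)⁻¹ * g 2, ?_⟩
    have : g 0 • u = - (g 1 • v + g 2 • x) := by
      rw [add_assoc] at hg; exact eq_neg_of_add_eq_zero_left hg
    rw [mul_smul, mul_smul, ← smul_add, neg_smul, ← smul_neg, ← this, smul_smul,
      inv_mul_cancel₀ h0, one_smul]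

open MvPolynomial in
/-- the univariate restriction of `h` to an affine line -/
lemma exists_restrict {h : MvPolynomial (Fin 3) ℂ} {d : ℕ} (hh : h.IsHomogeneous d)
    (u v : Fin 3 → ℂ) : ∃ Q : Polynomial ℂ, Q.natDegree ≤ d ∧
      ∀ t, Q.eval t = eval (u + t • v) h := by
  refine ⟨aeval (fun j => Polynomial.C (v j) * Polynomial.X + Polynomial.C (u j)) h, ?_, ?_⟩
  · have := aeval_natDegree_le h hh.totalDegree_le
      (fun j => Polynomial.C (v j) * Polynomial.X + Polynomial.C (u j)) (n := 1)
      (fun i => Polynomial.natDegree_linear_le)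
    simpa using this
  · intro t
    have : (Polynomial.aeval t).comp
        (aeval (fun j => Polynomial.C (v j) * Polynomial.X + Polynomial.C (u j)))
        = (aeval (u + t • v) : MvPolynomial (Fin 3) ℂ →ₐ[ℂ] ℂ) := by
      apply MvPolynomial.algHom_ext
      intro i
      simp; ring
    have := DFunLike.congr_fun this h
    simpa [Polynomial.coe_aeval_eq_eval, MvPolynomial.coe_aeval_eq_eval] using this

open MvPolynomial in
lemma dvd_of_points {a h : MvPolynomial (Fin 3) ℂ} {d : ℕ} (ha : a.IsHomogeneous 1) (ha0 : a ≠ 0)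
    (hh : h.IsHomogeneous d) (T : Finset P2) (hT : d < T.card)
    (hTa : ∀ p ∈ T, eval p.rep a = 0) (hTh : ∀ p ∈ T, eval p.rep h = 0) : a ∣ h := by
  apply dvd_of_vanish ha ha0
  intro x hx
  by_cases hc : ∃ p ∈ T, ∃ c : ℂ, x = c • p.rep
  · obtain ⟨p, hp, c, rfl⟩ := hc
    rw [eval_smul_of_hom hh, hTh p hp, mul_zero]
  push Not at hc
  obtain ⟨f, hf⟩ := exists_lin ha
  have hf0 : f ≠ 0 := by
    rintro rfl
    exact ha0 (MvPolynomial.funext fun x => by simp [hf])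
  obtain ⟨p0, hp0⟩ : T.Nonempty := Finset.card_pos.mp (by omega)
  have key : ∀ p ∈ T, ∃ s t : ℂ, s ≠ 0 ∧ p.rep = s • (p0.rep + t • x) := by
    intro p hp
    obtain ⟨s, b, hsb⟩ := dep_of_ker hf0 p.rep p0.rep x (by rw [← hf, hTa p hp])
      (by rw [← hf, hTa p0 hp0]) (by rw [← hf, hx]) p0.rep_nonzero (hc p0 hp0)
    have hs : s ≠ 0 := by
      rintro rfl
      rw [zero_smul, zero_add] at hsb
      have hb : b ≠ 0 := by
        rintro rfl
        exact p.rep_nonzero (by simpa using hsb)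
      apply hc p hp b⁻¹
      rw [hsb, smul_smul, inv_mul_cancel₀ hb, one_smul]
    refine ⟨s, s⁻¹ * b, hs, ?_⟩
    rw [hsb, smul_add, smul_smul, mul_inv_cancel_left₀ hs]
  choose! s t hs hst using key
  obtain ⟨Q, hQd, hQ⟩ := exists_restrict hh p0.rep x
  have hinj : Set.InjOn t T := by
    intro p hp q hq hpq
    rw [← p.mk_rep, ← q.mk_rep, Projectivization.mk_eq_mk_iff']
    refine ⟨s p * (s q)⁻¹, ?_⟩
    rw [hst p hp, hst q hq, hpq, smul_smul, inv_mul_cancel_right₀ (hs q hq)]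
  have hQ0 : Q = 0 := by
    apply Polynomial.eq_zero_of_natDegree_lt_card_of_eval_eq_zero' Q (T.image t)
    · intro r hr
      obtain ⟨p, hp, rfl⟩ := Finset.mem_image.mp hr
      have h1 := hTh p hp
      rw [hst p hp, eval_smul_of_hom hh] at h1
      rw [hQ]
      exact (mul_eq_zero.mp h1).resolve_left (pow_ne_zero _ (hs p hp))
    · rw [Finset.card_image_of_injOn hinj]; omega
  obtain ⟨R, -, hR⟩ := exists_restrict hh x p0.rep
  have hR0 : R = 0 := by
    apply Polynomial.eq_zero_of_infinite_isRoot
    apply Set.Infinite.mono (s := {0}ᶜ)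
    · intro r hr
      have hr : r ≠ 0 := hr
      have h1 := hQ r⁻¹
      rw [hQ0, Polynomial.eval_zero] at h1
      show R.eval r = 0
      have h2 : x + r • p0.rep = r • (p0.rep + r⁻¹ • x) := by
        rw [smul_add, smul_smul, mul_inv_cancel₀ hr, one_smul, add_comm]
      rw [hR, h2, eval_smul_of_hom hh, ← h1, mul_zero]
    · exact (Set.finite_singleton 0).infinite_compl
  have := hR 0
  rw [hR0] at this
  simpa using this.symm

open MvPolynomial in
lemma pencil_aux (α : Set P2 → MvPolynomial (Fin 3) ℂ) (T : Set P2 → Finset P2)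
    (S : Finset (Set P2)) : ∀ (h : MvPolynomial (Fin 3) ℂ)
    (_ : h.IsHomogeneous S.card)
    (_ : ∀ L ∈ S, α L ≠ 0 ∧ (α L).IsHomogeneous 1)
    (_ : ∀ L ∈ S, S.card < (T L).card)
    (_ : ∀ L ∈ S, ∀ p ∈ T L, eval p.rep (α L) = 0 ∧ eval p.rep h = 0)
    (_ : ∀ L ∈ S, ∀ L' ∈ S, L ≠ L' → ∀ p ∈ T L, eval p.rep (α L') ≠ 0),
    ∃ c : ℂ, h = C c * ∏ L ∈ S, α L := by
  classical
  induction S using Finset.induction_on with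
  | empty =>
    intro h hh _ _ _ _
    have : h.totalDegree = 0 := (totalDegree_zero_iff_isHomogeneous _).mpr (by simpa using hh)
    refine ⟨coeff 0 h, ?_⟩
    simpa using totalDegree_eq_zero_iff_eq_C.mp this
  | insert L S hL ih =>
    intro h hh hα hT hv hn
    rw [Finset.card_insert_of_notMem hL] at hh hT
    have hLm := Finset.mem_insert_self L S
    have hd := dvd_of_points (hα L hLm).2 (hα L hLm).1 hh (T L) (hT L hLm)
      (fun p hp => (hv L hLm p hp).1) (fun p hp => (hv L hLm p hp).2)
    obtain ⟨h', hh', rfl⟩ := hom_quot (hα L hLm).2 hh hd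
    obtain ⟨c, rfl⟩ := ih h' hh' (fun M hM => hα M (Finset.mem_insert_of_mem hM))
      (fun M hM => by have := hT M (Finset.mem_insert_of_mem hM); omega)
      (fun M hM p hp => by
        have hM' := Finset.mem_insert_of_mem (b := L) hM
        have h1 := hv M hM' p hp
        refine ⟨h1.1, ?_⟩
        have h2 := h1.2
        rw [map_mul] at h2
        exact (mul_eq_zero.mp h2).resolve_left
          (hn M hM' L hLm (by rintro rfl; exact hL hM) p hp))
      (fun M hM M' hM' => hn M (Finset.mem_insert_of_mem hM) M' (Finset.mem_insert_of_mem hM'))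
    refine ⟨c, ?_⟩
    rw [Finset.prod_insert hL]; ring

open MvPolynomial in
/-- If, for each line `L` of a nontrivial (k,m)-net, `α L` is a nonzero
linear (degree-1 homogeneous) form cutting out `L`, and `g i = ∏_{L ∈ 𝒜ᵢ} α L`, then
every `g i` lies in the ℂ-linear span of `g 0` and `g 1`: all the split curves are
fibers of the pencil generated by any two of them. -/
theorem net_split_curves_form_pencil (k m : ℕ) (A : Fin k → Finset (Set P2)) (X : Set P2)
    (hk : 3 ≤ k) (hm : 1 < m) (hN : IsNet k m A X)
    (α : Set P2 → MvPolynomial (Fin 3) ℂ)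
    (hα : ∀ i : Fin k, ∀ L ∈ A i, α L ≠ 0 ∧ (α L).IsHomogeneous 1 ∧
      L = {p : P2 | MvPolynomial.eval p.rep (α L) = 0}) :
    ∀ i : Fin k,
      (∏ L ∈ A i, α L) ∈
        Submodule.span ℂ {∏ L ∈ A ⟨0, by omega⟩, α L, ∏ L ∈ A ⟨1, by omega⟩, α L} := by
  classical
  intro i
  set i0 : Fin k := ⟨0, by omega⟩ with hi0
  set i1 : Fin k := ⟨1, by omega⟩ with hi1
  have h01 : i0 ≠ i1 := by simp [hi0, hi1]
  by_cases hii0 : i = i0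
  · rw [hii0]; exact Submodule.subset_span (by simp)
  have mem_iff : ∀ j : Fin k, ∀ L ∈ A j, ∀ p : P2, p ∈ L ↔ eval p.rep (α L) = 0 := by
    intro j L hL p
    have h1 := (hα j L hL).2.2
    constructor
    · intro hp; rw [h1] at hp; exact hp
    · intro hp; rw [h1]; exact hp
  have ghom : ∀ j : Fin k, (∏ L ∈ A j, α L).IsHomogeneous m := by
    intro j
    have := IsHomogeneous.prod (A j) α (fun _ => 1) (fun L hL => (hα j L hL).2.1)
    simpa [hN.card_eq j] using this
  have gX : ∀ j : Fin k, ∀ p ∈ X, eval p.rep (∏ L ∈ A j, α L) = 0 := by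
    intro j p hp
    obtain ⟨L, ⟨hL, hpL⟩, -⟩ := hN.unique_through p hp j
    rw [map_prod]
    exact Finset.prod_eq_zero hL ((mem_iff j L hL p).mp hpL)
  -- the points of `X` on each line of the first class
  have hpt : ∀ L ∈ A i0, ∀ M ∈ A i1, ∃ p, p ∈ X ∧ p ∈ L ∧ p ∈ M := by
    intro L hL M hM
    obtain ⟨p, h1, h2, h3⟩ := hN.meets i0 i1 h01 L hL M hM
    exact ⟨p, h1, h2, h3⟩
  choose! P hP using hpt
  let T : Set P2 → Finset P2 := fun L => (A i1).image (P L)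
  have hTcard : ∀ L ∈ A i0, (T L).card = m := by
    intro L hL
    rw [← hN.card_eq i1]
    apply Finset.card_image_of_injOn
    intro M hM M' hM' hMM
    have h1 := hP L hL M hM
    have h2 := hP L hL M' hM'
    have hMM : P L M = P L M' := hMM
    rw [← hMM] at h2
    exact (hN.unique_through _ h1.1 i1).unique ⟨hM, h1.2.2⟩ ⟨hM', h2.2.2⟩
  have hTX : ∀ L ∈ A i0, ∀ p ∈ T L, p ∈ X ∧ p ∈ L := by
    intro L hL p hp
    obtain ⟨M, hM, rfl⟩ := Finset.mem_image.mp hp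
    exact ⟨(hP L hL M hM).1, (hP L hL M hM).2.1⟩
  obtain ⟨L0, hL0⟩ : (A i0).Nonempty := Finset.card_pos.mp (by rw [hN.card_eq]; omega)
  obtain ⟨a0, ahom, -⟩ := hα i0 L0 hL0
  -- a point of `L0` where the second curve does not vanish
  have hq : ∃ q : P2, eval q.rep (α L0) = 0 ∧ eval q.rep (∏ L ∈ A i1, α L) ≠ 0 := by
    by_contra hcon
    push Not at hcon
    obtain ⟨M, hM, hdvd⟩ := exists_factor_vanish ahom a0 (A i1) α (by
      intro x hx
      by_cases hx0 : x = 0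
      · have := eval_smul_of_hom (ghom i1) 0 0
        rw [zero_pow (by omega), zero_mul, zero_smul] at this
        rw [hx0, this]
      · obtain ⟨c, hc⟩ := Projectivization.exists_smul_eq_mk_rep ℂ x hx0
        have hc' : x = ((c⁻¹ : ℂˣ) : ℂ) • (Projectivization.mk ℂ x hx0).rep := by
          rw [← hc, Units.smul_def, smul_smul, Units.inv_mul, one_smul]
        rw [hc', eval_smul_of_hom (ghom i1), hcon, mul_zero]
        rw [← hc, Units.smul_def, eval_smul_of_hom ahom, hx, mul_zero])
    obtain ⟨M', hM', hne⟩ := Finset.exists_mem_ne (by rw [hN.card_eq i1]; exact hm) M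
    have h1 := hP L0 hL0 M' hM'
    have h2 : P L0 M' ∈ M := by
      rw [mem_iff i1 M hM]
      obtain ⟨b, hb⟩ := hdvd
      rw [hb, map_mul, (mem_iff i0 L0 hL0 _).mp h1.2.1, zero_mul]
    exact hne ((hN.unique_through _ h1.1 i1).unique ⟨hM', h1.2.2⟩ ⟨hM, h2⟩)
  obtain ⟨q, hqL, hqg⟩ := hq
  set c : ℂ := eval q.rep (∏ L ∈ A i, α L) / eval q.rep (∏ L ∈ A i1, α L) with hc
  have hhom : ((∏ L ∈ A i, α L) - C c * ∏ L ∈ A i1, α L).IsHomogeneous m :=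
    (ghom i).sub ((ghom i1).C_mul c)
  have hvan : ∀ p ∈ X, eval p.rep ((∏ L ∈ A i, α L) - C c * ∏ L ∈ A i1, α L) = 0 := by
    intro p hp
    rw [map_sub, map_mul, gX i p hp, gX i1 p hp]; simp
  have hvanq : eval q.rep ((∏ L ∈ A i, α L) - C c * ∏ L ∈ A i1, α L) = 0 := by
    rw [map_sub, map_mul, eval_C, hc, div_mul_cancel₀ _ hqg, sub_self]
  have hqT : q ∉ T L0 := fun h => hqg (gX i1 q (hTX L0 hL0 q h).1)
  have hdvd := dvd_of_points ahom a0 hhom (insert q (T L0))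
    (by rw [Finset.card_insert_of_notMem hqT, hTcard L0 hL0]; omega)
    (by
      intro p hp
      rcases Finset.mem_insert.mp hp with rfl | hp
      · exact hqL
      · exact (mem_iff i0 L0 hL0 p).mp (hTX L0 hL0 p hp).2)
    (by
      intro p hp
      rcases Finset.mem_insert.mp hp with rfl | hp
      · exact hvanq
      · exact hvan p (hTX L0 hL0 p hp).1)
  have hcard : ((A i0).erase L0).card + 1 = m := by
    rw [Finset.card_erase_add_one hL0, hN.card_eq]
  rw [← hcard] at hhom
  obtain ⟨h', hh', heq⟩ := hom_quot ahom hhom hdvd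
  have hnv : ∀ L ∈ A i0, ∀ L' ∈ A i0, L ≠ L' → ∀ p ∈ T L, eval p.rep (α L') ≠ 0 := by
    intro L hL L' hL' hne p hp h0
    have h1 := hTX L hL p hp
    exact hne ((hN.unique_through p h1.1 i0).unique ⟨hL, h1.2⟩
      ⟨hL', (mem_iff i0 L' hL' p).mpr h0⟩)
  obtain ⟨d, hd⟩ := pencil_aux α T ((A i0).erase L0) h' hh'
    (fun L hL => ⟨(hα i0 L (Finset.mem_of_mem_erase hL)).1,
      (hα i0 L (Finset.mem_of_mem_erase hL)).2.1⟩)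
    (fun L hL => by rw [hTcard L (Finset.mem_of_mem_erase hL)]; omega)
    (fun L hL p hp => by
      have hL' := Finset.mem_of_mem_erase hL
      have h1 := hTX L hL' p hp
      refine ⟨(mem_iff i0 L hL' p).mp h1.2, ?_⟩
      have h2 := hvan p h1.1
      rw [heq, map_mul] at h2
      exact (mul_eq_zero.mp h2).resolve_left
        (hnv L hL' L0 hL0 (Finset.ne_of_mem_erase hL) p hp))
    (fun L hL L' hL' => hnv L (Finset.mem_of_mem_erase hL) L' (Finset.mem_of_mem_erase hL'))
  rw [Submodule.mem_span_pair]
  refine ⟨d, c, ?_⟩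
  rw [← Finset.mul_prod_erase (A i0) α hL0, smul_eq_C_mul, smul_eq_C_mul]
  rw [hd] at heq
  rw [sub_eq_iff_eq_add.mp heq]
  ring
end

section
/- Let (𝒜,𝒳) be a nontrivial (3,m)-net in ℙ²(ℂ) all three of whose classes are pencils. Then there exists a linear automorphism T ∈ GL(3,ℂ) such that, in the homogeneous coordinates (x,y,z) obtained from T, the class 𝒜₁ consists exactly of the m lines {x = ζy} with ζ^m = 1 (the components of x^m − y^m = 0), 𝒜₂ consists of the m lines {x = ζz} with ζ^m = 1, and 𝒜₃ consists of the m lines {y = ζz} with ζ^m = 1. In particular such a net is projectively unique and realizes the cyclic group ℤ/mℤ. -/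
lemma exists_coords (u v : Fin 3 → ℂ) (h : LinearIndependent ℂ ![u, v]) :
    ∃ T : (Fin 3 → ℂ) ≃ₗ[ℂ] (Fin 3 → ℂ), T u = Pi.single 0 1 ∧ T v = Pi.single 1 1 := by
  have hr : ∃ r : Fin 3 → ℂ, r ∉ Submodule.span ℂ (Set.range ![u, v]) := by
    by_contra hcon
    push Not at hcon
    have htop : Submodule.span ℂ (Set.range ![u, v]) = ⊤ := by
      rw [eq_top_iff]; intro x _; exact hcon x
    have h1 := finrank_span_eq_card h
    rw [htop] at h1
    simp at h1
  obtain ⟨r, hr⟩ := hr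
  have hli : LinearIndependent ℂ (Fin.cons r ![u, v] : Fin 3 → (Fin 3 → ℂ)) :=
    linearIndependent_finCons.2 ⟨h, hr⟩
  have hli2 : LinearIndependent ℂ ![u, v, r] := by
    have := hli.comp (![1, 2, 0] : Fin 3 → Fin 3) (by decide)
    convert this using 1
    ext i j; fin_cases i <;> rfl
  let b := basisOfLinearIndependentOfCardEqFinrank hli2 (by simp)
  have hb : ∀ i, b.equivFun (![u, v, r] i) = Pi.single i 1 := by
    intro i
    have : ![u, v, r] i = b i := by simp [b]
    rw [this]
    ext j
    rw [Module.Basis.equivFun_self]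
    simp [Pi.single_apply, eq_comm]
  exact ⟨b.equivFun, hb 0, hb 1⟩

lemma exists_coords3 (u v w : Fin 3 → ℂ) (h : LinearIndependent ℂ ![u, v, w]) :
    ∃ T : (Fin 3 → ℂ) ≃ₗ[ℂ] (Fin 3 → ℂ),
      T u = Pi.single 0 1 ∧ T v = Pi.single 1 1 ∧ T w = Pi.single 2 1 := by
  let b := basisOfLinearIndependentOfCardEqFinrank h (by simp)
  have hb : ∀ i, b.equivFun (![u, v, w] i) = Pi.single i 1 := by
    intro i
    have : ![u, v, w] i = b i := by simp [b]
    rw [this]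
    ext j
    rw [Module.Basis.equivFun_self]
    simp [Pi.single_apply, eq_comm]
  exact ⟨b.equivFun, hb 0, hb 1, hb 2⟩

lemma form_coords (T : (Fin 3 → ℂ) ≃ₗ[ℂ] (Fin 3 → ℂ)) (f : (Fin 3 → ℂ) →ₗ[ℂ] ℂ) :
    ∃ a b c : ℂ, ∀ v, f v = a * T v 0 + b * T v 1 + c * T v 2 := by
  refine ⟨f (T.symm (Pi.single 0 1)), f (T.symm (Pi.single 1 1)), f (T.symm (Pi.single 2 1)), ?_⟩
  intro v
  have h : T v = T v 0 • Pi.single 0 1 + T v 1 • Pi.single 1 1 + T v 2 • Pi.single 2 1 := by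
    ext i; fin_cases i <;> simp
  have h2 : v = T v 0 • T.symm (Pi.single 0 1) + T v 1 • T.symm (Pi.single 1 1)
      + T v 2 • T.symm (Pi.single 2 1) := by
    apply T.injective
    simpa using h
  conv_lhs => rw [h2]
  simp only [map_add, map_smul, smul_eq_mul]
  ring

lemma indep_of_ne {p q : P2} (h : p ≠ q) : LinearIndependent ℂ ![p.rep, q.rep] := by
  have := (Projectivization.independent_pair_iff_ne p q).2 h
  rw [Projectivization.independent_iff] at this
  have h2 : ![p.rep, q.rep] = Projectivization.rep ∘ ![p, q] := by
    ext i j; fin_cases i <;> rfl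
  rw [h2]
  exact this

lemma line_inter {L L' : Set P2} (hL : IsProjLine L) (hL' : IsProjLine L') (hne : L ≠ L')
    {p q : P2} (hp : p ∈ L) (hp' : p ∈ L') (hq : q ∈ L) (hq' : q ∈ L') : p = q := by
  by_contra hpq
  obtain ⟨T, hT0, hT1⟩ := exists_coords _ _ (indep_of_ne hpq)
  obtain ⟨f, hf, rfl⟩ := hL
  obtain ⟨f', hf', rfl⟩ := hL'
  obtain ⟨a, b, c, h⟩ := form_coords T f
  obtain ⟨a', b', c', h'⟩ := form_coords T f'
  simp only [Set.mem_ofPred_eq] at hp hp' hq hq'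
  rw [h, hT0] at hp
  rw [h', hT0] at hp'
  rw [h, hT1] at hq
  rw [h', hT1] at hq'
  simp at hp hp' hq hq'
  subst hp hp' hq hq'
  have hc : c ≠ 0 := by
    rintro rfl; apply hf; ext v; simp [h]
  have hc' : c' ≠ 0 := by
    rintro rfl; apply hf'; ext v; simp [h']
  apply hne
  ext r
  simp [h, h', hc, hc']

lemma center_not_mem {m : ℕ} {A : Fin 3 → Finset (Set P2)} {X : Set P2}
    (hm : 1 < m) (hN : IsNet 3 m A X) {c : Fin 3 → P2} (hc : ∀ i, ∀ L ∈ A i, c i ∈ L)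
    {i j : Fin 3} (hij : i ≠ j) {L : Set P2} (hL : L ∈ A i) : c j ∉ L := by
  intro hcL
  have hcard : 1 < (A j).card := by rw [hN.card_eq]; exact hm
  obtain ⟨M, hM, M', hM', hMM⟩ := Finset.one_lt_card.1 hcard
  obtain ⟨p, hpX, hpL, hpM⟩ := hN.meets i j hij L hL M hM
  have hne : L ≠ M := by
    rintro rfl
    exact Finset.disjoint_left.1 (hN.disj i j hij) hL hM
  have hpc : p = c j := line_inter (hN.lines i L hL) (hN.lines j M hM) hne hpL hpM hcL (hc j M hM)
  exact hMM ((hN.unique_through p hpX j).unique ⟨hM, hpM⟩ ⟨hM', hpc ▸ hc j M' hM'⟩)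

/-- Parametrization of a class by slopes. -/
lemma class_param {m : ℕ} {A : Finset (Set P2)} (hA : A.card = m) (hl : ∀ L ∈ A, IsProjLine L)
    (c d : P2) (hc : ∀ L ∈ A, c ∈ L) (hd : ∀ L ∈ A, d ∉ L) (g h : (Fin 3 → ℂ) → ℂ)
    (H : ∀ f : (Fin 3 → ℂ) →ₗ[ℂ] ℂ, f c.rep = 0 → ∃ α β : ℂ, ∀ v, f v = α * g v + β * h v)
    (hg : ∀ (t : ℂ) v, g (t • v) = t * g v) (hh : ∀ (t : ℂ) v, h (t • v) = t * h v)
    (hhd : h d.rep = 0) (hw : ∀ a : ℂ, ∃ w, h w = 1 ∧ g w = a) :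
    ∃ S : Finset ℂ, S.card = m ∧ (∀ a ∈ S, {p : P2 | g p.rep = a * h p.rep} ∈ A) ∧
      ∀ L ∈ A, ∃ a ∈ S, L = {p : P2 | g p.rep = a * h p.rep} := by
  classical
  let F : ℂ → Set P2 := fun a => {p : P2 | g p.rep = a * h p.rep}
  have hinj : Function.Injective F := by
    intro a b hab
    obtain ⟨w, hw1, hw2⟩ := hw a
    have hw0 : w ≠ 0 := by
      rintro rfl
      have := hh 0 0
      simp [hw1] at this
    obtain ⟨t, ht⟩ := Projectivization.exists_smul_eq_mk_rep ℂ w hw0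
    have hmem : Projectivization.mk ℂ w hw0 ∈ F a := by
      change g _ = a * h _
      rw [← ht]
      change g ((t : ℂ) • w) = a * h ((t : ℂ) • w)
      rw [hg, hh, hw1, hw2]; ring
    rw [hab] at hmem
    change g _ = b * h _ at hmem
    rw [← ht] at hmem
    change g ((t : ℂ) • w) = b * h ((t : ℂ) • w) at hmem
    rw [hg, hh, hw1, hw2] at hmem
    apply mul_left_cancel₀ t.ne_zero
    linear_combination hmem
  have hsurj : ∀ L ∈ A, ∃ a, F a = L := by
    intro L hL
    have h1 := hc L hL
    have h2 := hd L hL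
    obtain ⟨f, hf, rfl⟩ := hl L hL
    obtain ⟨α, β, hab⟩ := H f h1
    simp only [Set.mem_ofPred_eq, hab, hhd] at h2
    have hα : α ≠ 0 := by rintro rfl; simp at h2
    refine ⟨-β / α, ?_⟩
    ext p
    simp only [F, Set.mem_ofPred_eq, hab]
    constructor
    · intro hp; rw [hp]; field_simp; ring
    · intro hp; field_simp; linear_combination hp
  refine ⟨A.preimage F hinj.injOn, ?_, ?_, ?_⟩
  · rw [Finset.card_preimage, ← hA]
    congr 1
    apply Finset.filter_true_of_mem
    intro L hL
    exact hsurj L hL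
  · intro a ha
    have hFa : F a ∈ A := Finset.mem_preimage.1 ha
    exact hFa
  · intro L hL
    obtain ⟨a, rfl⟩ := hsurj L hL
    exact ⟨a, Finset.mem_preimage.2 hL, rfl⟩

lemma image_eq_of_card {S S' : Finset ℂ} (hcard : S.card = S'.card) (f : ℂ → ℂ)
    (hf : ∀ a ∈ S, f a ∈ S') (hinj : Set.InjOn f S) : S.image f = S' := by
  apply Finset.eq_of_subset_of_card_le
  · intro x hx
    obtain ⟨a, ha, rfl⟩ := Finset.mem_image.1 hx
    exact hf a ha
  · rw [Finset.card_image_of_injOn hinj, hcard]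

lemma roots_of_pow {m : ℕ} (hm : 0 < m) {S : Finset ℂ} (hS : S.card = m) {t₀ : ℂ}
    (h : ∀ s ∈ S, s ^ m = t₀ ^ m) (t : ℂ) (ht : t ^ m = t₀ ^ m) : t ∈ S := by
  have hsub : S ⊆ (Polynomial.nthRoots m (t₀ ^ m)).toFinset := by
    intro s hs
    rw [Multiset.mem_toFinset, Polynomial.mem_nthRoots hm]
    exact h s hs
  have := Finset.eq_of_subset_of_card_le hsub (by
    rw [hS]
    exact (Multiset.toFinset_card_le _).trans (Polynomial.card_nthRoots _ _))
  rw [this, Multiset.mem_toFinset, Polynomial.mem_nthRoots hm]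
  exact ht

/-- The set of lines of one class after rescaling the coordinates. -/
lemma class_final {m : ℕ} (hm : 0 < m) {A : Finset (Set P2)} {S : Finset ℂ} (hS : S.card = m)
    {g h g' h' : (Fin 3 → ℂ) → ℂ}
    (h1 : ∀ a ∈ S, {p : P2 | g p.rep = a * h p.rep} ∈ A)
    (h2 : ∀ L ∈ A, ∃ a ∈ S, L = {p : P2 | g p.rep = a * h p.rep})
    {t₀ : ℂ} (ht : t₀ ≠ 0) (hpow : ∀ s ∈ S, s ^ m = t₀ ^ m)
    (hgh : ∀ ζ v, g' v = ζ * h' v ↔ g v = (t₀ * ζ) * h v) :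
    (↑A : Set (Set P2)) = {L | ∃ ζ : ℂ, ζ ^ m = 1 ∧ L = {p : P2 | g' p.rep = ζ * h' p.rep}} := by
  ext L
  simp only [Finset.mem_coe, Set.mem_ofPred_eq, hgh]
  constructor
  · intro hL
    obtain ⟨a, ha, rfl⟩ := h2 L hL
    refine ⟨a / t₀, ?_, ?_⟩
    · rw [div_pow, hpow a ha, div_self (pow_ne_zero _ ht)]
    · rw [mul_div_cancel₀ _ ht]
  · rintro ⟨ζ, hζ, rfl⟩
    apply h1
    apply roots_of_pow hm hS hpow
    rw [mul_pow, hζ, mul_one]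

lemma coords_ne (T : (Fin 3 → ℂ) ≃ₗ[ℂ] (Fin 3 → ℂ)) (p : P2) (h0 : T p.rep 0 = 0)
    (h1 : T p.rep 1 = 0) (h2 : T p.rep 2 = 0) : False := by
  apply p.rep_nonzero
  apply T.injective
  ext i; fin_cases i <;> simp [h0, h1, h2]

lemma collinear_false {m : ℕ} {A : Fin 3 → Finset (Set P2)} {X : Set P2}
    (hm : 1 < m) (hN : IsNet 3 m A X) {c : Fin 3 → P2} (hc : ∀ i, ∀ L ∈ A i, c i ∈ L)
    (T : (Fin 3 → ℂ) ≃ₗ[ℂ] (Fin 3 → ℂ)) (hT0 : T (c 0).rep = Pi.single 0 1)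
    (hT1 : T (c 1).rep = Pi.single 1 1) (α β : ℂ) (hα : α ≠ 0) (hβ : β ≠ 0)
    (hT2 : T (c 2).rep = β • Pi.single 0 1 + α • Pi.single 1 1) : False := by
  have hw : ∀ x y z : ℂ, ∃ w, T w 0 = x ∧ T w 1 = y ∧ T w 2 = z := by
    intro x y z
    exact ⟨T.symm ![x, y, z], by simp⟩
  obtain ⟨S0, hS0, h01, -⟩ := class_param (hN.card_eq 0) (hN.lines 0) (c 0) (c 1) (hc 0)
    (fun L hL => center_not_mem hm hN hc (by decide) hL) (fun v => T v 1) (fun v => T v 2)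
    (by
      intro f hf
      obtain ⟨a, b, e, h⟩ := form_coords T f
      rw [h, hT0] at hf
      simp at hf
      exact ⟨b, e, fun v => by rw [h, hf]; ring⟩)
    (by simp) (by simp) (by simp [hT1])
    (fun a => by obtain ⟨w, -, h1, h2⟩ := hw 0 a 1; exact ⟨w, h2, h1⟩)
  obtain ⟨S1, hS1, h11, -⟩ := class_param (hN.card_eq 1) (hN.lines 1) (c 1) (c 0) (hc 1)
    (fun L hL => center_not_mem hm hN hc (by decide) hL) (fun v => T v 0) (fun v => T v 2)
    (by
      intro f hf
      obtain ⟨a, b, e, h⟩ := form_coords T f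
      rw [h, hT1] at hf
      simp at hf
      exact ⟨a, e, fun v => by rw [h, hf]; ring⟩)
    (by simp) (by simp) (by simp [hT0])
    (fun a => by obtain ⟨w, h1, -, h2⟩ := hw a 0 1; exact ⟨w, h2, h1⟩)
  obtain ⟨S2, hS2, -, h22⟩ := class_param (hN.card_eq 2) (hN.lines 2) (c 2) (c 0) (hc 2)
    (fun L hL => center_not_mem hm hN hc (by decide) hL)
    (fun v => α * T v 0 - β * T v 1) (fun v => T v 2)
    (by
      intro f hf
      obtain ⟨a, b, e, h⟩ := form_coords T f
      rw [h, hT2] at hf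
      simp at hf
      refine ⟨a / α, e, fun v => ?_⟩
      rw [h]
      field_simp
      linear_combination T v 1 * hf)
    (by intro t v; simp; ring) (by simp) (by simp [hT0])
    (fun a => by
      obtain ⟨w, h1, h3, h2⟩ := hw (a / α) 0 1
      refine ⟨w, h2, ?_⟩
      rw [h1, h3]; field_simp; ring)
  have key : ∀ a ∈ S1, ∀ b ∈ S0, α * a - β * b ∈ S2 := by
    intro a ha b hb
    obtain ⟨p, hpX, hp1, hp0⟩ := hN.meets 1 0 (by decide) _ (h11 a ha) _ (h01 b hb)
    obtain ⟨M, ⟨hM, hpM⟩, -⟩ := hN.unique_through p hpX 2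
    obtain ⟨e, he, rfl⟩ := h22 M hM
    simp only [Set.mem_ofPred_eq] at hp0 hp1 hpM
    have hz : T p.rep 2 ≠ 0 := by
      intro hz
      rw [hz] at hp0 hp1
      exact coords_ne T p (by simpa using hp1) (by simpa using hp0) hz
    have : α * a - β * b = e := by
      apply mul_right_cancel₀ hz
      rw [← hpM, hp0, hp1]; ring
    rwa [this]
  have hsum : ∀ b ∈ S0, ∑ s ∈ S2, s = α * ∑ a ∈ S1, a - m * (β * b) := by
    intro b hb
    have hinj : Set.InjOn (fun a : ℂ => α * a - β * b) S1 := by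
      intro x _ y _ hxy
      apply mul_left_cancel₀ hα
      simpa using hxy
    rw [← image_eq_of_card (hS1.trans hS2.symm) _ (fun a ha => key a ha b hb) hinj,
      Finset.sum_image hinj, Finset.sum_sub_distrib, ← Finset.mul_sum, Finset.sum_const, hS1,
      nsmul_eq_mul]
  obtain ⟨b, hb, b', hb', hne⟩ := Finset.one_lt_card.1 (hS0.symm ▸ hm : 1 < S0.card)
  have h1 := hsum b hb
  rw [hsum b' hb'] at h1
  apply hne
  have hm0 : (m : ℂ) ≠ 0 := by exact_mod_cast (by omega : m ≠ 0)
  apply mul_left_cancel₀ hβ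
  apply mul_left_cancel₀ hm0
  linear_combination h1

/-- The case of three non-collinear centers. -/
lemma noncollinear_case {m : ℕ} {A : Fin 3 → Finset (Set P2)} {X : Set P2}
    (hm : 1 < m) (hN : IsNet 3 m A X) {c : Fin 3 → P2} (hc : ∀ i, ∀ L ∈ A i, c i ∈ L)
    (T : (Fin 3 → ℂ) ≃ₗ[ℂ] (Fin 3 → ℂ)) (hT2 : T (c 2).rep = Pi.single 0 1)
    (hT1 : T (c 1).rep = Pi.single 1 1) (hT0 : T (c 0).rep = Pi.single 2 1) :
    ∃ T : (Fin 3 → ℂ) ≃ₗ[ℂ] (Fin 3 → ℂ),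
      (↑(A 0) : Set (Set P2)) =
        {L | ∃ ζ : ℂ, ζ ^ m = 1 ∧ L = {p : P2 | T p.rep 0 = ζ * T p.rep 1}} ∧
      (↑(A 1) : Set (Set P2)) =
        {L | ∃ ζ : ℂ, ζ ^ m = 1 ∧ L = {p : P2 | T p.rep 0 = ζ * T p.rep 2}} ∧
      (↑(A 2) : Set (Set P2)) =
        {L | ∃ ζ : ℂ, ζ ^ m = 1 ∧ L = {p : P2 | T p.rep 1 = ζ * T p.rep 2}} := by
  have hw : ∀ x y z : ℂ, ∃ w, T w 0 = x ∧ T w 1 = y ∧ T w 2 = z := by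
    intro x y z
    exact ⟨T.symm ![x, y, z], by simp⟩
  obtain ⟨S0, hS0, h01, h02⟩ := class_param (hN.card_eq 0) (hN.lines 0) (c 0) (c 2) (hc 0)
    (fun L hL => center_not_mem hm hN hc (by decide) hL) (fun v => T v 0) (fun v => T v 1)
    (by
      intro f hf
      obtain ⟨a, b, e, h⟩ := form_coords T f
      rw [h, hT0] at hf
      simp at hf
      exact ⟨a, b, fun v => by rw [h, hf]; ring⟩)
    (by simp) (by simp) (by simp [hT2])
    (fun a => by obtain ⟨w, h1, h2, -⟩ := hw a 1 0; exact ⟨w, h2, h1⟩)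
  obtain ⟨S1, hS1, h11, h12⟩ := class_param (hN.card_eq 1) (hN.lines 1) (c 1) (c 2) (hc 1)
    (fun L hL => center_not_mem hm hN hc (by decide) hL) (fun v => T v 0) (fun v => T v 2)
    (by
      intro f hf
      obtain ⟨a, b, e, h⟩ := form_coords T f
      rw [h, hT1] at hf
      simp at hf
      exact ⟨a, e, fun v => by rw [h, hf]; ring⟩)
    (by simp) (by simp) (by simp [hT2])
    (fun a => by obtain ⟨w, h1, -, h2⟩ := hw a 0 1; exact ⟨w, h2, h1⟩)
  obtain ⟨S2, hS2, h21, h22⟩ := class_param (hN.card_eq 2) (hN.lines 2) (c 2) (c 1) (hc 2)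
    (fun L hL => center_not_mem hm hN hc (by decide) hL) (fun v => T v 1) (fun v => T v 2)
    (by
      intro f hf
      obtain ⟨a, b, e, h⟩ := form_coords T f
      rw [h, hT2] at hf
      simp at hf
      exact ⟨b, e, fun v => by rw [h, hf]; ring⟩)
    (by simp) (by simp) (by simp [hT1])
    (fun a => by obtain ⟨w, -, h1, h2⟩ := hw 0 a 1; exact ⟨w, h2, h1⟩)
  have n0 : ∀ a ∈ S0, a ≠ 0 := by
    rintro a ha rfl
    apply center_not_mem hm hN hc (show (0 : Fin 3) ≠ 1 by decide) (h01 0 ha)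
    simp [hT1]
  have n2 : ∀ a ∈ S2, a ≠ 0 := by
    rintro a ha rfl
    apply center_not_mem hm hN hc (show (2 : Fin 3) ≠ 0 by decide) (h21 0 ha)
    simp [hT0]
  have key : ∀ a ∈ S0, ∀ e ∈ S2, a * e ∈ S1 := by
    intro a ha e he
    obtain ⟨p, hpX, hp0, hp2⟩ := hN.meets 0 2 (by decide) _ (h01 a ha) _ (h21 e he)
    obtain ⟨M, ⟨hM, hpM⟩, -⟩ := hN.unique_through p hpX 1
    obtain ⟨b, hb, rfl⟩ := h12 M hM
    simp only [Set.mem_ofPred_eq] at hp0 hp2 hpM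
    have hz : T p.rep 2 ≠ 0 := by
      intro hz
      rw [hz] at hp2 hpM
      exact coords_ne T p (by simpa using hpM) (by simpa using hp2) hz
    have : a * e = b := by
      apply mul_right_cancel₀ hz
      rw [← hpM, hp0, hp2]; ring
    rwa [this]
  have hprod2 : ∀ e ∈ S2, ∏ s ∈ S1, s = (∏ a ∈ S0, a) * e ^ m := by
    intro e he
    have hinj : Set.InjOn (fun a : ℂ => a * e) S0 := fun x _ y _ hxy =>
      mul_right_cancel₀ (n2 e he) hxy
    rw [← image_eq_of_card (hS0.trans hS1.symm) _ (fun a ha => key a ha e he) hinj,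
      Finset.prod_image hinj, Finset.prod_mul_distrib, Finset.prod_const, hS0]
  have hprod0 : ∀ a ∈ S0, ∏ s ∈ S1, s = a ^ m * (∏ e ∈ S2, e) := by
    intro a ha
    have hinj : Set.InjOn (fun e : ℂ => a * e) S2 := fun x _ y _ hxy =>
      mul_left_cancel₀ (n0 a ha) hxy
    rw [← image_eq_of_card (hS2.trans hS1.symm) _ (fun e he => key a ha e he) hinj,
      Finset.prod_image hinj, Finset.prod_mul_distrib, Finset.prod_const, hS2]
  obtain ⟨a₀, ha₀⟩ : S0.Nonempty := Finset.card_pos.1 (by omega)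
  obtain ⟨e₀, he₀⟩ : S2.Nonempty := Finset.card_pos.1 (by omega)
  have p0 : ∀ a ∈ S0, a ^ m = a₀ ^ m := by
    intro a ha
    have := hprod0 a ha
    rw [hprod0 a₀ ha₀] at this
    exact (mul_right_cancel₀ (Finset.prod_ne_zero_iff.2 n2) this).symm
  have p2 : ∀ e ∈ S2, e ^ m = e₀ ^ m := by
    intro e he
    have := hprod2 e he
    rw [hprod2 e₀ he₀] at this
    exact (mul_left_cancel₀ (Finset.prod_ne_zero_iff.2 n0) this).symm
  have p1 : ∀ b ∈ S1, b ^ m = (a₀ * e₀) ^ m := by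
    intro b hb
    have hinj : Set.InjOn (fun e : ℂ => a₀ * e) S2 := fun x _ y _ hxy =>
      mul_left_cancel₀ (n0 a₀ ha₀) hxy
    rw [← image_eq_of_card (hS2.trans hS1.symm) _ (fun e he => key a₀ ha₀ e he) hinj] at hb
    obtain ⟨e, he, rfl⟩ := Finset.mem_image.1 hb
    simp only [mul_pow, p2 e he]
  have ha := n0 a₀ ha₀
  have he := n2 e₀ he₀
  let k : Fin 3 → ℂˣ := ![(Units.mk0 (a₀ * e₀) (mul_ne_zero ha he))⁻¹, (Units.mk0 e₀ he)⁻¹, 1]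
  let T' := T.trans (LinearEquiv.piCongrRight fun i => LinearEquiv.smulOfUnit (k i))
  have q : ∀ v i, T' v i = (k i : ℂ) * T v i := fun v i => rfl
  have q0 : ∀ v, T' v 0 = (a₀ * e₀)⁻¹ * T v 0 := by intro v; rw [q]; simp [k]
  have q1 : ∀ v, T' v 1 = e₀⁻¹ * T v 1 := by intro v; rw [q]; simp [k]
  have q2 : ∀ v, T' v 2 = T v 2 := by intro v; rw [q]; simp [k]
  have hm0 : 0 < m := by omega
  refine ⟨T', ?_, ?_, ?_⟩
  · refine class_final hm0 hS0 (g := fun v => T v 0) (h := fun v => T v 1)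
      (g' := fun v => T' v 0) (h' := fun v => T' v 1) h01 h02 ha p0 ?_
    intro ζ v
    simp only [q0, q1]
    field_simp
  · refine class_final hm0 hS1 (g := fun v => T v 0) (h := fun v => T v 2)
      (g' := fun v => T' v 0) (h' := fun v => T' v 2) h11 h12
      (mul_ne_zero ha he) p1 ?_
    intro ζ v
    simp only [q0, q2]
    field_simp
  · refine class_final hm0 hS2 (g := fun v => T v 1) (h := fun v => T v 2)
      (g' := fun v => T' v 1) (h' := fun v => T' v 2) h21 h22 he p2 ?_
    intro ζ v
    simp only [q1, q2]
    field_simp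

/-- A nontrivial (3,m)-net all of whose classes are pencils is, in suitable
homogeneous coordinates given by a linear automorphism `T` of ℂ³, the net whose classes
consist of the components of `x^m - y^m = 0`, `x^m - z^m = 0` and `y^m - z^m = 0`,
i.e. the lines `x = ζy`, `x = ζz`, `y = ζz` with `ζ^m = 1`.  In particular such a net is
projectively unique and realizes ℤ/mℤ. -/
theorem net_three_pencils_classification (m : ℕ) (A : Fin 3 → Finset (Set P2)) (X : Set P2)
    (hm : 1 < m) (hN : IsNet 3 m A X) (hpen : ∀ i, IsPencil (A i)) :
    ∃ T : (Fin 3 → ℂ) ≃ₗ[ℂ] (Fin 3 → ℂ),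
      (↑(A 0) : Set (Set P2)) =
        {L | ∃ ζ : ℂ, ζ ^ m = 1 ∧ L = {p : P2 | T p.rep 0 = ζ * T p.rep 1}} ∧
      (↑(A 1) : Set (Set P2)) =
        {L | ∃ ζ : ℂ, ζ ^ m = 1 ∧ L = {p : P2 | T p.rep 0 = ζ * T p.rep 2}} ∧
      (↑(A 2) : Set (Set P2)) =
        {L | ∃ ζ : ℂ, ζ ^ m = 1 ∧ L = {p : P2 | T p.rep 1 = ζ * T p.rep 2}} := by
  choose c hc using hpen
  have hne : ∀ i j : Fin 3, i ≠ j → c i ≠ c j := by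
    intro i j hij h
    obtain ⟨L, hL⟩ : (A i).Nonempty := Finset.card_pos.1 (by rw [hN.card_eq]; omega)
    exact center_not_mem hm hN hc hij hL (h ▸ hc i L hL)
  by_cases hs : (c 2).rep ∈ Submodule.span ℂ (Set.range ![(c 1).rep, (c 0).rep])
  · exfalso
    have hs' : (c 2).rep ∈ Submodule.span ℂ {(c 1).rep, (c 0).rep} := by
      simpa [Matrix.range_cons, Set.pair_comm] using hs
    obtain ⟨α, β, hab⟩ := Submodule.mem_span_pair.1 hs'
    obtain ⟨T, hT0, hT1⟩ := exists_coords _ _ (indep_of_ne (hne 0 1 (by decide)))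
    have hpar : ∀ (i : Fin 3) (t : ℂ), i ≠ 2 → (c 2).rep ≠ t • (c i).rep := by
      intro i t hi h
      obtain ⟨L, hL⟩ : (A i).Nonempty := Finset.card_pos.1 (by rw [hN.card_eq]; omega)
      have h1 := hc i L hL
      have h2 := center_not_mem hm hN hc hi hL
      obtain ⟨f, -, rfl⟩ := hN.lines i L hL
      simp only [Set.mem_ofPred_eq] at h1 h2
      apply h2
      rw [h, map_smul, h1, smul_zero]
    refine collinear_false hm hN hc T hT0 hT1 α β ?_ ?_ ?_
    · rintro rfl
      exact hpar 0 β (by decide) (by simpa using hab.symm)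
    · rintro rfl
      exact hpar 1 α (by decide) (by simpa using hab.symm)
    · rw [← hab, map_add, map_smul, map_smul, hT0, hT1, add_comm]
  · have hli : LinearIndependent ℂ ![(c 2).rep, (c 1).rep, (c 0).rep] :=
      linearIndependent_finCons.2 ⟨indep_of_ne (hne 1 0 (by decide)), hs⟩
    obtain ⟨T, h2, h1, h0⟩ := exists_coords3 _ _ _ hli
    exact noncollinear_case hm hN hc T h2 h1 h0
end

section
/- Every finite subgroup of a two-dimensional complex torus can be realized by a 3-net in ℙ²(ℂ): for all positive integers a and b, there exist injective maps p₁, p₂, p₃ : ℤ/aℤ × ℤ/bℤ → ℙ²(ℂ) with pairwise disjoint images such that for all x,y,z ∈ ℤ/aℤ × ℤ/bℤ the points p₁(x), p₂(y), p₃(z) are collinear if and only if x+y+z = 0. -/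
/-- Three points of ℙ²(ℂ) are collinear if representative vectors in ℂ³ span a linear
subspace of dimension at most 2. -/
def Collin (p q r : P2) : Prop :=
  Module.finrank ℂ (Submodule.span ℂ {p.rep, q.rep, r.rep} : Submodule ℂ (Fin 3 → ℂ)) ≤ 2

/-- A realization of a finite abelian group `H` by a 3-net in ℙ²(ℂ), stated dually in
terms of the points dual to the lines of the net: three injective maps `H → ℙ²(ℂ)` with
pairwise disjoint images such that `p₁ x`, `p₂ y`, `p₃ z` are collinear iff
`x + y + z = 0`. -/
def Realizes {H : Type} [AddCommGroup H] (p₁ p₂ p₃ : H → P2) : Prop :=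
  Function.Injective p₁ ∧ Function.Injective p₂ ∧ Function.Injective p₃ ∧
  Disjoint (Set.range p₁) (Set.range p₂) ∧
  Disjoint (Set.range p₁) (Set.range p₃) ∧
  Disjoint (Set.range p₂) (Set.range p₃) ∧
  ∀ x y z : H, Collin (p₁ x) (p₂ y) (p₃ z) ↔ x + y + z = 0

theorem aux_collin (u v w : Fin 3 → ℂ) (hu : u ≠ 0) (hv : v ≠ 0) (hw : w ≠ 0) :
    Collin (Projectivization.mk ℂ u hu) (Projectivization.mk ℂ v hv) (Projectivization.mk ℂ w hw) ↔
      (Matrix.of ![u, v, w]).det = 0 := by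
  obtain ⟨a, ha⟩ := Projectivization.exists_smul_eq_mk_rep ℂ u hu
  obtain ⟨b, hb⟩ := Projectivization.exists_smul_eq_mk_rep ℂ v hv
  obtain ⟨c, hc⟩ := Projectivization.exists_smul_eq_mk_rep ℂ w hw
  unfold Collin
  rw [← ha, ← hb, ← hc]
  have h1 : (Matrix.of ![a • u, b • v, c • w]).det = a * b * c * (Matrix.of ![u, v, w]).det := by
    simp [Matrix.det_fin_three, Units.smul_def]
    ring
  have h2 : (Matrix.of ![u, v, w]).det = 0 ↔ (Matrix.of ![a • u, b • v, c • w]).det = 0 := by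
    rw [h1]; simp
  rw [h2]
  have h3 : LinearIndependent ℂ ![a • u, b • v, c • w] ↔
      IsUnit (Matrix.of ![a • u, b • v, c • w]) :=
    Matrix.linearIndependent_rows_iff_isUnit (A := Matrix.of ![a • u, b • v, c • w])
  rw [Matrix.isUnit_iff_isUnit_det, isUnit_iff_ne_zero] at h3
  have h4 : Set.range ![a • u, b • v, c • w] = {a • u, b • v, c • w} := by
    simp [Matrix.range_cons]
    ext; simp; tauto
  have h5 := linearIndependent_iff_card_eq_finrank_span (R := ℂ) (b := ![a • u, b • v, c • w])
  have h6 := finrank_range_le_card (R := ℂ) ![a • u, b • v, c • w]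
  unfold Set.finrank at h5 h6
  rw [h4] at h5 h6
  simp only [Fintype.card_fin] at h5 h6
  by_contra hcon
  have : ¬ (Matrix.of ![a • u, b • v, c • w]).det = 0 ↔
    3 = Module.finrank ℂ (Submodule.span ℂ {a • u, b • v, c • w}) := by rw [← h5, h3]
  apply hcon
  constructor
  · intro h
    by_contra hh
    have := this.1 hh
    omega
  · intro h
    by_contra hh
    have : ¬ (3 = Module.finrank ℂ (Submodule.span ℂ {a • u, b • v, c • w})) := fun h' => (this.2 h') h
    omega

theorem aux_realizes {H G : Type} [AddCommGroup H] [AddCommGroup G] (f : H →+ G)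
    (hf : Function.Injective f) (g : G) (hg : g ≠ 0) (p₁ p₂ p₃ : G → P2)
    (h : ∀ x y z, Collin (p₁ x) (p₂ y) (p₃ z) ↔ x + y + z = 0) :
    Realizes (p₁ ∘ f) (p₂ ∘ f) (p₃ ∘ f) := by
  have c12 : ∀ p r, Collin p p r := by
    intro p r
    unfold Collin
    have : ({p.rep, p.rep, r.rep} : Set (Fin 3 → ℂ)) = ({p.rep, r.rep} : Finset (Fin 3 → ℂ)) := by
      simp
    rw [this]
    exact (finrank_span_finset_le_card _).trans Finset.card_le_two
  have c13 : ∀ p r, Collin p r p := by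
    intro p r
    have := c12 p r
    unfold Collin at *
    rwa [Set.pair_comm r.rep]
  have c23 : ∀ p r, Collin r p p := by
    intro p r
    have := c13 p r
    unfold Collin at *
    rwa [Set.insert_comm]
  refine ⟨?_, ?_, ?_, ?_, ?_, ?_, ?_⟩
  · intro x y hxy
    apply hf
    have h1 := (h (f x) (-(f x)) 0).2 (by simp)
    simp only [Function.comp] at hxy
    rw [hxy, h] at h1
    simp only [add_zero, add_neg_eq_zero] at h1
    exact h1.symm
  · intro x y hxy
    apply hf
    have h1 := (h (-(f x)) (f x) 0).2 (by simp)
    simp only [Function.comp] at hxy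
    rw [hxy, h] at h1
    simpa [neg_add_eq_zero] using h1
  · intro x y hxy
    apply hf
    have h1 := (h (-(f x)) 0 (f x)).2 (by simp)
    simp only [Function.comp] at hxy
    rw [hxy, h] at h1
    simpa [neg_add_eq_zero] using h1
  · rw [Set.disjoint_left]
    rintro _ ⟨x, rfl⟩ ⟨y, hy⟩
    simp only [Function.comp] at hy
    apply hg
    have h1 := (h (f x) (f y) g).1 (by rw [hy]; exact c12 _ _)
    have h2 := (h (f x) (f y) 0).1 (by rw [hy]; exact c12 _ _)
    simpa using h1.trans h2.symm
  · rw [Set.disjoint_left]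
    rintro _ ⟨x, rfl⟩ ⟨y, hy⟩
    simp only [Function.comp] at hy
    apply hg
    have h1 := (h (f x) g (f y)).1 (by rw [hy]; exact c13 _ _)
    have h2 := (h (f x) 0 (f y)).1 (by rw [hy]; exact c13 _ _)
    simpa using h1.trans h2.symm
  · rw [Set.disjoint_left]
    rintro _ ⟨x, rfl⟩ ⟨y, hy⟩
    simp only [Function.comp] at hy
    apply hg
    have h1 := (h g (f x) (f y)).1 (by rw [hy]; exact c23 _ _)
    have h2 := (h 0 (f x) (f y)).1 (by rw [hy]; exact c23 _ _)
    simpa using h1.trans h2.symm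
  · intro x y z
    simp only [Function.comp]
    rw [h, ← map_add, ← map_add]
    exact map_eq_zero_iff f hf

theorem aux_det (σ : ℂ → ℂ)
    (hodd : ∀ z, σ (-z) = - σ z)
    (A B : ℂ → ℂ) (hAB : ∀ u v, σ (u + v) * σ (u - v) = B u * A v - A u * B v)
    (s a₁ a₂ a₃ x₁ x₂ x₃ : ℂ) (hs : σ s ≠ 0) (h22 : σ (x₂ - a₂ + s) ≠ 0)
    (h11 : σ (x₁ - a₁) ≠ 0) (h12 : σ (x₁ - a₂) ≠ 0) (h13 : σ (x₁ - a₃) ≠ 0)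
    (h21 : σ (x₂ - a₁) ≠ 0) (h22' : σ (x₂ - a₂) ≠ 0) (h23 : σ (x₂ - a₃) ≠ 0)
    (h31 : σ (x₃ - a₁) ≠ 0) (h32 : σ (x₃ - a₂) ≠ 0) (h33 : σ (x₃ - a₃) ≠ 0)
    (hx12 : σ (x₁ - x₂) ≠ 0) (hx13 : σ (x₁ - x₃) ≠ 0) (hx23 : σ (x₂ - x₃) ≠ 0)
    (ha12 : σ (a₂ - a₁) ≠ 0) (ha13 : σ (a₃ - a₁) ≠ 0) (ha23 : σ (a₃ - a₂) ≠ 0) :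
    (Matrix.of ![![σ (x₁ - a₁ + s) / σ (x₁ - a₁), σ (x₁ - a₂ + s) / σ (x₁ - a₂), σ (x₁ - a₃ + s) / σ (x₁ - a₃)],
      ![σ (x₂ - a₁ + s) / σ (x₂ - a₁), σ (x₂ - a₂ + s) / σ (x₂ - a₂), σ (x₂ - a₃ + s) / σ (x₂ - a₃)],
      ![σ (x₃ - a₁ + s) / σ (x₃ - a₁), σ (x₃ - a₂ + s) / σ (x₃ - a₂), σ (x₃ - a₃ + s) / σ (x₃ - a₃)]]).det = 0
      ↔ σ (s + x₁ + x₂ + x₃ - a₁ - a₂ - a₃) = 0 := by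
  have fay : ∀ s x y a b, σ (x - a + s) * σ (y - b + s) * σ (x - b) * σ (y - a)
      - σ (x - b + s) * σ (y - a + s) * σ (x - a) * σ (y - b)
      = σ s * σ (s + x + y - a - b) * σ (x - y) * σ (b - a) := by
    intro s x y a b
    have e1 := hAB ((x+y-a-b)/2+s) ((x-y-a+b)/2)
    have e2 := hAB ((x+y-a-b)/2) ((x-y+a-b)/2)
    have e3 := hAB ((x+y-a-b)/2+s) ((x+y-a-b)/2)
    have e4 := hAB ((x-y-a+b)/2) ((x-y+a-b)/2)
    have e5 := hAB ((x+y-a-b)/2+s) ((x-y+a-b)/2)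
    have e6 := hAB ((x-y-a+b)/2) ((x+y-a-b)/2)
    have e7 := hodd (y - b)
    generalize A ((x+y-a-b)/2+s) = A1 at *
    generalize B ((x+y-a-b)/2+s) = B1 at *
    generalize A ((x+y-a-b)/2) = A2 at *
    generalize B ((x+y-a-b)/2) = B2 at *
    generalize A ((x-y-a+b)/2) = A3 at *
    generalize B ((x-y-a+b)/2) = B3 at *
    generalize A ((x-y+a-b)/2) = A4 at *
    generalize B ((x-y+a-b)/2) = B4 at *
    rw [show (x+y-a-b)/2+s + (x-y-a+b)/2 = x - a + s by ring,
      show (x+y-a-b)/2+s - (x-y-a+b)/2 = y - b + s by ring] at e1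
    rw [show (x+y-a-b)/2 + (x-y+a-b)/2 = x - b by ring,
      show (x+y-a-b)/2 - (x-y+a-b)/2 = y - a by ring] at e2
    rw [show (x+y-a-b)/2+s + (x+y-a-b)/2 = s + x + y - a - b by ring,
      show (x+y-a-b)/2+s - (x+y-a-b)/2 = s by ring] at e3
    rw [show (x-y-a+b)/2 + (x-y+a-b)/2 = x - y by ring,
      show (x-y-a+b)/2 - (x-y+a-b)/2 = b - a by ring] at e4
    rw [show (x+y-a-b)/2+s + (x-y+a-b)/2 = x - b + s by ring,
      show (x+y-a-b)/2+s - (x-y+a-b)/2 = y - a + s by ring] at e5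
    rw [show (x-y-a+b)/2 + (x+y-a-b)/2 = x - a by ring,
      show (x-y-a+b)/2 - (x+y-a-b)/2 = -(y - b) by ring, e7] at e6
    have : σ (x - a + s) * σ (y - b + s) * (σ (x - b) * σ (y - a))
        + (σ (x - b + s) * σ (y - a + s)) * (σ (x - a) * -σ (y - b))
        = (σ (s + x + y - a - b) * σ s) * (σ (x - y) * σ (b - a)) := by
      rw [e1, e2, e3, e4, e5, e6]; ring
    linear_combination this
  have minor : ∀ x y a b, σ (x - a) ≠ 0 → σ (x - b) ≠ 0 → σ (y - a) ≠ 0 → σ (y - b) ≠ 0 →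
      σ (x - a + s) / σ (x - a) * (σ (y - b + s) / σ (y - b))
      - σ (x - b + s) / σ (x - b) * (σ (y - a + s) / σ (y - a))
      = σ s * σ (s + x + y - a - b) * σ (x - y) * σ (b - a) /
        (σ (x - a) * σ (x - b) * σ (y - a) * σ (y - b)) := by
    intro x y a b h1 h2 h3 h4
    rw [← fay s x y a b]
    field_simp
  have m1 := minor x₁ x₂ a₁ a₂ h11 h12 h21 h22'
  have m2 := minor x₂ x₃ a₂ a₃ h22' h23 h32 h33
  have m3 := minor x₁ x₂ a₂ a₃ h12 h13 h22' h23
  have m4 := minor x₂ x₃ a₁ a₂ h21 h22' h31 h32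
  have f := fay (s + x₂ - a₂) x₁ x₃ a₁ a₃
  rw [show x₁ - a₁ + (s + x₂ - a₂) = s + x₁ + x₂ - a₁ - a₂ by ring,
    show x₃ - a₃ + (s + x₂ - a₂) = s + x₂ + x₃ - a₂ - a₃ by ring,
    show x₁ - a₃ + (s + x₂ - a₂) = s + x₁ + x₂ - a₂ - a₃ by ring,
    show x₃ - a₁ + (s + x₂ - a₂) = s + x₂ + x₃ - a₁ - a₂ by ring,
    show s + x₂ - a₂ + x₁ + x₃ - a₁ - a₃ = s + x₁ + x₂ + x₃ - a₁ - a₂ - a₃ by ring,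
    show s + x₂ - a₂ = x₂ - a₂ + s by ring] at f
  have key : ∀ D : ℂ, D = (Matrix.of ![![σ (x₁ - a₁ + s) / σ (x₁ - a₁), σ (x₁ - a₂ + s) / σ (x₁ - a₂), σ (x₁ - a₃ + s) / σ (x₁ - a₃)],
      ![σ (x₂ - a₁ + s) / σ (x₂ - a₁), σ (x₂ - a₂ + s) / σ (x₂ - a₂), σ (x₂ - a₃ + s) / σ (x₂ - a₃)],
      ![σ (x₃ - a₁ + s) / σ (x₃ - a₁), σ (x₃ - a₂ + s) / σ (x₃ - a₂), σ (x₃ - a₃ + s) / σ (x₃ - a₃)]]).det →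
      D * (σ (x₂ - a₂ + s) / σ (x₂ - a₂)) = σ s ^ 2 * σ (x₁ - x₂) * σ (x₂ - x₃) * σ (a₂ - a₁) * σ (a₃ - a₂) *
        (σ (x₂ - a₂ + s) * σ (s + x₁ + x₂ + x₃ - a₁ - a₂ - a₃) * σ (x₁ - x₃) * σ (a₃ - a₁)) /
        (σ (x₁ - a₁) * σ (x₁ - a₂) * σ (x₁ - a₃) * σ (x₂ - a₁) * σ (x₂ - a₂) ^ 2 * σ (x₂ - a₃)
         * σ (x₃ - a₁) * σ (x₃ - a₂) * σ (x₃ - a₃)) := by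
    intro D hD
    rw [← f]
    have : D * (σ (x₂ - a₂ + s) / σ (x₂ - a₂)) =
      (σ s * σ (s + x₁ + x₂ - a₁ - a₂) * σ (x₁ - x₂) * σ (a₂ - a₁) /
        (σ (x₁ - a₁) * σ (x₁ - a₂) * σ (x₂ - a₁) * σ (x₂ - a₂))) *
      (σ s * σ (s + x₂ + x₃ - a₂ - a₃) * σ (x₂ - x₃) * σ (a₃ - a₂) /
        (σ (x₂ - a₂) * σ (x₂ - a₃) * σ (x₃ - a₂) * σ (x₃ - a₃))) -
      (σ s * σ (s + x₁ + x₂ - a₂ - a₃) * σ (x₁ - x₂) * σ (a₃ - a₂) /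
        (σ (x₁ - a₂) * σ (x₁ - a₃) * σ (x₂ - a₂) * σ (x₂ - a₃))) *
      (σ s * σ (s + x₂ + x₃ - a₁ - a₂) * σ (x₂ - x₃) * σ (a₂ - a₁) /
        (σ (x₂ - a₁) * σ (x₂ - a₂) * σ (x₃ - a₁) * σ (x₃ - a₂))) := by
      rw [← m1, ← m2, ← m3, ← m4, hD, Matrix.det_fin_three]
      simp only [Matrix.of_apply, Matrix.cons_val]
      ring
    rw [this]
    field_simp
  have k := key _ rfl
  constructor
  · intro h
    rw [h, zero_mul, eq_comm, div_eq_zero_iff] at k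
    simpa [*] using k
  · intro h
    rw [h] at k
    have k2 := k.trans (b := _) (c := 0) (by simp)
    exact (mul_eq_zero.1 k2).resolve_right (div_ne_zero h22 h22')

noncomputable def st (τ z : ℂ) (n : ℤ) : ℂ :=
  Complex.exp (Real.pi * Complex.I * (((n : ℂ) + 1 / 2) ^ 2 * τ + 2 * ((n : ℂ) + 1 / 2) * z + n))

noncomputable def sg (τ z : ℂ) : ℂ := ∑' n : ℤ, st τ z n

theorem aux_hs_congr {ι E : Type} [AddCommMonoid E] [TopologicalSpace E] {f g : ι → E} {a : E}
    (h : ∀ i, f i = g i) : HasSum f a ↔ HasSum g a := by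
  rw [funext h]

theorem exp_odd (w : ℂ) (k : ℤ) : Complex.exp (Real.pi * Complex.I * (w + (2 * k + 1))) =
    - Complex.exp (Real.pi * Complex.I * w) := by
  rw [show Real.pi * Complex.I * (w + (2 * k + 1)) =
    Real.pi * Complex.I * w + k * (2 * Real.pi * Complex.I) + Real.pi * Complex.I by ring,
    Complex.exp_add, Complex.exp_add, Complex.exp_int_mul_two_pi_mul_I, Complex.exp_pi_mul_I]
  ring

theorem exp_even (w : ℂ) (k : ℤ) : Complex.exp (Real.pi * Complex.I * (w + 2 * k)) =
    Complex.exp (Real.pi * Complex.I * w) := by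
  rw [show Real.pi * Complex.I * (w + 2 * k) =
    Real.pi * Complex.I * w + k * (2 * Real.pi * Complex.I) by ring,
    Complex.exp_add, Complex.exp_int_mul_two_pi_mul_I]
  ring

theorem st_summable (τ z : ℂ) (hτ : 0 < τ.im) : Summable (st τ z) := by
  have h := ((summable_jacobiTheta₂_term_iff (z + 1 / 2 + τ / 2) τ).2 hτ).mul_left
    (Complex.exp (Real.pi * Complex.I * (τ / 4 + z)))
  refine h.congr fun n => ?_
  rw [st, jacobiTheta₂_term, ← Complex.exp_add]
  congr 1
  ring

theorem sg_neg (τ z : ℂ) : sg τ (-z) = - sg τ z := by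
  unfold sg
  rw [← tsum_neg, ← (Equiv.subLeft (-1 : ℤ)).tsum_eq]
  refine tsum_congr fun n => ?_
  rw [Equiv.subLeft_apply, st, st, ← exp_odd _ (-1 - n)]
  congr 1
  push_cast
  ring

theorem sg_add_one (τ z : ℂ) : sg τ (z + 1) = - sg τ z := by
  unfold sg
  rw [← tsum_neg]
  refine tsum_congr fun n => ?_
  rw [st, st, ← exp_odd _ n]
  congr 1
  ring

theorem sg_add_tau (τ z : ℂ) :
    sg τ (z + τ) = - Complex.exp (Real.pi * Complex.I * (-τ - 2 * z)) * sg τ z := by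
  unfold sg
  rw [← tsum_mul_left]
  conv_rhs => rw [← (Equiv.addRight (1 : ℤ)).tsum_eq]
  refine tsum_congr fun n => ?_
  rw [Equiv.coe_addRight, st, st, neg_mul, ← Complex.exp_add, ← mul_add, ← exp_odd _ (-1)]
  congr 1
  push_cast
  ring

noncomputable def tA (τ u : ℂ) (r : ℤ) : ℂ :=
  Complex.exp (Real.pi * Complex.I * ((2 * (r : ℂ)) ^ 2 * τ / 2 + 2 * (2 * r) * u))

noncomputable def tB (τ u : ℂ) (r : ℤ) : ℂ :=
  Complex.exp (Real.pi * Complex.I * ((2 * (r : ℂ) + 1) ^ 2 * τ / 2 + 2 * (2 * r + 1) * u))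

theorem tA_summable (τ z : ℂ) (hτ : 0 < τ.im) : Summable (tA τ z) := by
  have h := ((summable_jacobiTheta₂_term_iff (2 * z) (2 * τ)).2 (by simpa using hτ))
  refine h.congr fun n => ?_
  rw [tA, jacobiTheta₂_term]
  congr 1
  ring

theorem tB_summable (τ z : ℂ) (hτ : 0 < τ.im) : Summable (tB τ z) := by
  have h := ((summable_jacobiTheta₂_term_iff (2 * z + τ) (2 * τ)).2 (by simpa using hτ)).mul_left
    (Complex.exp (Real.pi * Complex.I * (τ / 2 + 2 * z)))
  refine h.congr fun n => ?_
  rw [tB, jacobiTheta₂_term, ← Complex.exp_add]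
  congr 1
  ring

def par : (ℤ × ℤ) ⊕ (ℤ × ℤ) → ℤ × ℤ
  | Sum.inl (k, l) => (k + l, k - l - 1)
  | Sum.inr (k, l) => (k + l, k - l)

theorem par_bij : Function.Bijective par := by
  constructor
  · rintro (⟨k, l⟩ | ⟨k, l⟩) (⟨k', l'⟩ | ⟨k', l'⟩) h <;> simp [par] at h ⊢ <;> omega
  · rintro ⟨m, n⟩
    rcases Int.emod_two_eq_zero_or_one (m + n) with h | h
    · exact ⟨Sum.inr ((m + n) / 2, (m - n) / 2), by simp only [par, Prod.mk.injEq]; omega⟩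
    · exact ⟨Sum.inl ((m + n + 1) / 2, (m - n - 1) / 2), by simp only [par, Prod.mk.injEq]; omega⟩

theorem sg_AB (τ : ℂ) (hτ : 0 < τ.im) (u v : ℂ) :
    sg τ (u + v) * sg τ (u - v) =
      (∑' r, tB τ u r) * (∑' r, tA τ v r) - (∑' r, tA τ u r) * (∑' r, tB τ v r) := by
  have sn : ∀ z, Summable fun n => ‖st τ z n‖ := fun z => (st_summable τ z hτ).norm
  have an : ∀ z, Summable fun n => ‖tA τ z n‖ := fun z => (tA_summable τ z hτ).norm
  have bn : ∀ z, Summable fun n => ‖tB τ z n‖ := fun z => (tB_summable τ z hτ).norm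
  have h1 := (st_summable τ (u + v) hτ).hasSum.mul (st_summable τ (u - v) hτ).hasSum
    (summable_mul_of_summable_norm (sn _) (sn _))
  have h2 := (tB_summable τ u hτ).hasSum.mul (tA_summable τ v hτ).hasSum
    (summable_mul_of_summable_norm (bn _) (an _))
  have h3 := ((tA_summable τ u hτ).hasSum.mul (tB_summable τ v hτ).hasSum
    (summable_mul_of_summable_norm (an _) (bn _))).neg
  rw [← (Equiv.ofBijective par par_bij).hasSum_iff] at h1
  have h4 := HasSum.sum (f := (fun x : ℤ × ℤ => st τ (u + v) x.1 * st τ (u - v) x.2) ∘ par)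
    (a := -((∑' r, tA τ u r) * (∑' r, tB τ v r)))
    (b := (∑' r, tB τ u r) * (∑' r, tA τ v r)) ?_ ?_
  · have := h1.unique h4
    unfold sg
    rw [this]
    ring
  · refine (aux_hs_congr ?_).2 h3
    rintro ⟨k, l⟩
    simp only [Function.comp, par, st, tA, tB]
    rw [← Complex.exp_add, ← Complex.exp_add, ← mul_add, ← mul_add, ← exp_odd _ (k - 1)]
    congr 1
    push_cast
    ring
  · refine (aux_hs_congr ?_).2 h2
    rintro ⟨k, l⟩
    simp only [Function.comp, par, st, tA, tB]
    rw [← Complex.exp_add, ← Complex.exp_add, ← mul_add, ← mul_add, ← exp_even _ (-k)]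
    congr 1
    push_cast
    ring

theorem hs_bound (g : ℕ → ℂ) (a : ℂ) (C : ℝ) (h : HasSum g a)
    (hg : ∀ n, ‖g (n + 1)‖ ≤ C * (1 / 4) ^ (n + 1)) : ‖a - g 0‖ ≤ C / 3 := by
  have h1 := (hasSum_nat_add_iff' (f := g) 1).2 h
  simp only [Finset.range_one, Finset.sum_singleton] at h1
  have h2 : HasSum (fun n : ℕ => C * (1 / 4 : ℝ) ^ (n + 1)) (C / 3) := by
    have := (hasSum_geometric_of_lt_one (r := (1 / 4 : ℝ)) (by norm_num) (by norm_num)).mul_left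
      (C * (1 / 4))
    rw [show C * (1 / 4) * (1 - 1 / 4 : ℝ)⁻¹ = C / 3 by norm_num; ring] at this
    refine (aux_hs_congr ?_).2 this
    intro n
    ring
  rw [← h1.tsum_eq]
  exact tsum_of_norm_bounded h2 hg

theorem exp_two_pi : Real.exp (-(2 * Real.pi)) ≤ 1 / 12 := by
  have h1 := Real.pi_gt_three
  have h2 := Real.quadratic_le_exp_of_nonneg (x := 2 * Real.pi) (by positivity)
  rw [Real.exp_neg, ← one_div]
  apply one_div_le_one_div_of_le (by norm_num)
  nlinarith

theorem sin_bound (θ : ℝ) (n : ℕ) : |Real.sin (n * θ)| ≤ n * |Real.sin θ| := by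
  induction n with
  | zero => simp
  | succ n ih =>
    push_cast
    rw [add_mul, one_mul, Real.sin_add]
    have h1 := Real.abs_cos_le_one θ
    have h2 := Real.abs_cos_le_one (n * θ)
    calc _ ≤ |Real.sin (n * θ)| * |Real.cos θ| + |Real.cos (n * θ)| * |Real.sin θ| := by
          rw [← abs_mul, ← abs_mul]; exact abs_add_le _ _
      _ ≤ n * |Real.sin θ| * 1 + 1 * |Real.sin θ| := by gcongr
      _ = _ := by ring

theorem st_norm (N : ℕ) (hN : 0 < N) (i j n : ℤ) :
    ‖st (N * Complex.I) ((i + j * (N * Complex.I)) / N) n‖ =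
      Real.exp (-Real.pi * (N * ((n : ℝ) + 1 / 2) ^ 2 + 2 * ((n : ℝ) + 1 / 2) * j)) := by
  have hN' : (N : ℂ) ≠ 0 := by exact_mod_cast hN.ne'
  rw [st, Complex.norm_exp]
  congr 1
  have : (Real.pi : ℂ) * Complex.I * (((n : ℂ) + 1 / 2) ^ 2 * (N * Complex.I) +
      2 * ((n : ℂ) + 1 / 2) * ((i + j * (N * Complex.I)) / N) + n) =
      ((-Real.pi * (N * ((n : ℝ) + 1 / 2) ^ 2 + 2 * ((n : ℝ) + 1 / 2) * j) : ℝ) : ℂ) +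
      ((Real.pi * (2 * ((n : ℝ) + 1 / 2) * (i / N) + n) : ℝ) : ℂ) * Complex.I := by
    push_cast
    field_simp
    ring_nf
    simp only [Complex.I_sq]
    ring
  rw [this, Complex.add_re, Complex.ofReal_re, Complex.re_ofReal_mul, Complex.I_re, mul_zero,
    add_zero]

theorem sg_ne_zero_of_pos (N : ℕ) (i j : ℤ) (hj : 0 < j) (hjN : j < N) :
    sg (N * Complex.I) ((i + j * (N * Complex.I)) / N) ≠ 0 := by
  have hN : 0 < N := by omega
  intro h0
  have hs := st_summable (N * Complex.I) ((i + j * (N * Complex.I)) / N) (by simpa using hN)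
  set f := st (N * Complex.I) ((i + j * (N * Complex.I)) / N) with hf
  have h1 : HasSum f 0 := by rw [← h0]; exact hs.hasSum
  rw [← (Equiv.addRight (-1 : ℤ)).hasSum_iff] at h1
  have h2 := HasSum.nat_add_neg h1
  have hb : ∀ m : ℤ, ‖f (m + -1)‖ ≤ ‖f (-1)‖ * Real.exp (-(2 * Real.pi)) ^ m.natAbs := by
    intro m
    rw [hf, st_norm N hN, st_norm N hN, ← Real.exp_nat_mul, ← Real.exp_add, Real.exp_le_exp]
    have key : (2 * |m| : ℤ) ≤ N * m ^ 2 + m * (2 * j - N) := by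
      rcases lt_trichotomy m 0 with hm | hm | hm
      · rw [abs_of_neg hm]
        obtain ⟨p, hp⟩ : ∃ p : ℤ, m = -1 - p := ⟨-1 - m, by ring⟩
        subst hp
        have hp : 0 ≤ p := by omega
        have e1 : 0 ≤ (N - 1 - j : ℤ) * (1 + p) := mul_nonneg (by omega) (by omega)
        have e2 : 0 ≤ (N : ℤ) * (p * (1 + p)) := by positivity
        linarith
      · simp [hm]
      · rw [abs_of_pos hm]
        have e1 : 0 ≤ (j - 1) * m := mul_nonneg (by omega) (by omega)
        have e2 : 0 ≤ (N : ℤ) * (m * (m - 1)) := mul_nonneg (by omega) (mul_nonneg (by omega) (by omega))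
        linarith
    have key' : (2 * |(m : ℝ)|) ≤ N * (m : ℝ) ^ 2 + m * (2 * j - N) := by exact_mod_cast key
    rw [Nat.cast_natAbs]
    push_cast
    nlinarith [Real.pi_pos]
  have h3 := hs_bound _ _ (2 * ‖f (-1)‖) h2 ?_
  · have hpos : 0 < ‖f (-1)‖ := by
      rw [hf, st_norm N hN]; exact Real.exp_pos _
    simp only [Function.comp, Equiv.coe_addRight, Nat.cast_zero, neg_zero, zero_add] at h3
    rw [show f (-1) - (f (-1) + f (-1)) = - f (-1) by ring, norm_neg] at h3
    linarith
  · intro n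
    have b1 := hb (n + 1 : ℕ)
    have b2 := hb (-(n + 1 : ℕ))
    rw [Int.natAbs_neg] at b2
    rw [Int.natAbs_natCast] at b1 b2
    have b3 : Real.exp (-(2 * Real.pi)) ^ (n + 1) ≤ (1 / 4) ^ (n + 1) := by
      have := exp_two_pi
      gcongr
      linarith
    simp only [Function.comp, Equiv.coe_addRight]
    refine (norm_add_le _ _).trans ?_
    have := mul_le_mul_of_nonneg_left b3 (norm_nonneg (f (-1)))
    linarith

theorem sg_zero_real (N : ℕ) (hN : 0 < N) (i : ℤ) (h0 : sg (N * Complex.I) (i / N) = 0) :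
    Real.sin (Real.pi * (i / N)) = 0 := by
  have hs := st_summable (N * Complex.I) (i / N) (by simpa using hN)
  set f := st (N * Complex.I) (i / N) with hf
  have h1 : HasSum f 0 := by rw [← h0]; exact hs.hasSum
  have h2 := HasSum.nat_add_neg_add_one h1
  have hg : ∀ n : ℕ, ‖f n + f (-(n + 1))‖ = Real.exp (-Real.pi * (N * ((n : ℝ) + 1 / 2) ^ 2)) *
      (2 * |Real.sin ((2 * n + 1 : ℕ) * (Real.pi * (i / N)))|) := by
    intro n
    have : f n + f (-(n + 1)) = Complex.exp ((-Real.pi * (N * ((n : ℝ) + 1 / 2) ^ 2) : ℝ)) *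
      Complex.exp ((Real.pi * n : ℝ) * Complex.I) *
      (2 * Complex.I * (Real.sin ((2 * n + 1 : ℕ) * (Real.pi * (i / N))) : ℝ)) := by
      rw [Complex.ofReal_sin, Complex.sin]
      have e : ∀ A B C : ℂ, A * (2 * Complex.I * ((B - C) * Complex.I / 2)) = A * C - A * B := by
        intro A B C
        linear_combination (A * B - A * C) * Complex.I_sq
      rw [e, mul_assoc, ← Complex.exp_add, ← Complex.exp_add, mul_assoc, ← Complex.exp_add,
        ← Complex.exp_add, hf, st, st, sub_eq_add_neg]
      congr 1
      · congr 1
        push_cast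
        ring_nf
        simp only [Complex.I_sq]
        ring
      · rw [← neg_inj, neg_neg, ← exp_odd _ n]
        congr 1
        push_cast
        ring_nf
        simp only [Complex.I_sq]
        ring
    rw [this, norm_mul, norm_mul, Complex.norm_exp_ofReal_mul_I, norm_mul, norm_mul,
      Complex.norm_real, Complex.norm_exp_ofReal]
    simp
  by_contra hsin
  have h3 := hs_bound _ _ ‖f 0 + f (-1)‖ h2 ?_
  · have hpos : 0 < ‖f 0 + f (-1)‖ := by
      have := hg 0
      simp only [Nat.cast_zero, zero_add, mul_zero, Nat.cast_one, one_mul] at this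
      rw [this]
      have := abs_pos.2 hsin
      positivity
    simp at h3
    rw [← norm_neg] at h3
    simp only [neg_add_rev, neg_neg] at h3
    linarith
  · intro n
    have h00 := hg 0
    simp only [Nat.cast_zero, zero_add, mul_zero, Nat.cast_one, one_mul] at h00
    rw [hg (n + 1), h00]
    have b := sin_bound (Real.pi * (i / N)) (2 * (n + 1) + 1)
    have c : ((2 * (n + 1) + 1 : ℕ) : ℝ) ≤ 3 ^ (n + 1) := by
      have : (2 * (n + 1) + 1) ≤ 3 ^ (n + 1) := by
        clear b h00
        induction n with
        | zero => norm_num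
        | succ k ih => rw [pow_succ]; omega
      exact_mod_cast this
    have d : Real.exp (-Real.pi * (N * (((n + 1 : ℕ) : ℝ) + 1 / 2) ^ 2)) ≤
        Real.exp (-Real.pi * (N * (1 / 2) ^ 2)) * (1 / 12) ^ (n + 1) := by
      calc _ ≤ Real.exp (-Real.pi * (N * (1 / 2) ^ 2)) * Real.exp (-(2 * Real.pi)) ^ (n + 1) := by
            rw [← Real.exp_nat_mul, ← Real.exp_add, Real.exp_le_exp]
            have hN1 : (1 : ℝ) ≤ N := by exact_mod_cast hN
            push_cast
            have : (2 * (n + 1) : ℝ) ≤ N * ((n + 1) ^ 2 + (n + 1)) := by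
              have hn : (0 : ℝ) ≤ n := by positivity
              nlinarith [mul_nonneg hn hn]
            nlinarith [Real.pi_pos]
        _ ≤ _ := by
            have := exp_two_pi
            gcongr
    calc _ ≤ (Real.exp (-Real.pi * (N * (1 / 2) ^ 2)) * (1 / 12) ^ (n + 1)) *
          (2 * (3 ^ (n + 1) * |Real.sin (Real.pi * (i / N))|)) := by
          have := b.trans (mul_le_mul_of_nonneg_right c (abs_nonneg _))
          gcongr
      _ = _ := by
          rw [show (1 / 4 : ℝ) = (1 / 12) * 3 by norm_num, mul_pow]
          ring

theorem sg_add_int_tau (τ z : ℂ) (k : ℤ) : sg τ (z + k * τ) = 0 ↔ sg τ z = 0 := by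
  have h : ∀ z, sg τ (z + τ) = 0 ↔ sg τ z = 0 := by
    intro z
    rw [sg_add_tau]
    simp [Complex.exp_ne_zero]
  induction k using Int.induction_on with
  | zero => simp
  | succ n ih =>
    refine Iff.trans ?_ ih
    rw [← h (z + (n : ℤ) * τ), show z + (((n : ℤ) + 1 : ℤ) : ℂ) * τ = z + (n : ℤ) * τ + τ by push_cast; ring]
  | pred n ih =>
    refine Iff.trans ?_ ih
    rw [← h (z + ((-(n : ℤ) - 1 : ℤ) : ℂ) * τ), show z + ((-(n : ℤ) : ℤ) : ℂ) * τ = z + ((-(n : ℤ) - 1 : ℤ) : ℂ) * τ + τ by push_cast; ring]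

theorem sg_add_int (τ z : ℂ) (k : ℤ) : sg τ (z + k) = 0 ↔ sg τ z = 0 := by
  have h : ∀ z, sg τ (z + 1) = 0 ↔ sg τ z = 0 := by
    intro z
    rw [sg_add_one]
    simp
  induction k using Int.induction_on with
  | zero => simp
  | succ n ih =>
    refine Iff.trans ?_ ih
    rw [← h (z + (n : ℤ)), show z + (((n : ℤ) + 1 : ℤ) : ℂ) = z + (n : ℤ) + 1 by push_cast; ring]
  | pred n ih =>
    refine Iff.trans ?_ ih
    rw [← h (z + ((-(n : ℤ) - 1 : ℤ) : ℂ)), show z + ((-(n : ℤ) : ℤ) : ℂ) = z + ((-(n : ℤ) - 1 : ℤ) : ℂ) + 1 by push_cast; ring]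

theorem sg_zero_iff (N : ℕ) (hN : 0 < N) (i j : ℤ) :
    sg (N * Complex.I) ((i + j * (N * Complex.I)) / N) = 0 ↔ (N : ℤ) ∣ i ∧ (N : ℤ) ∣ j := by
  have hN' : (N : ℂ) ≠ 0 := by exact_mod_cast hN.ne'
  have hNR : (N : ℝ) ≠ 0 := by exact_mod_cast hN.ne'
  constructor
  · intro h
    have e : ((i : ℂ) + j * (N * Complex.I)) / N =
        (i + (j % N : ℤ) * (N * Complex.I)) / N + (j / N : ℤ) * (N * Complex.I) := by
      have : (j : ℂ) = (j % N : ℤ) + N * (j / N : ℤ) := by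
        exact_mod_cast (Int.emod_add_mul_ediv j N).symm
      rw [this]
      field_simp
      ring
    rw [e, sg_add_int_tau] at h
    have hpos := Int.emod_nonneg j (b := N) (by omega)
    have hlt := Int.emod_lt_of_pos j (b := N) (by omega)
    rcases hpos.lt_or_eq with h1 | h1
    · exact absurd h (sg_ne_zero_of_pos N i _ h1 hlt)
    · refine ⟨?_, Int.dvd_of_emod_eq_zero h1.symm⟩
      rw [← h1] at h
      simp only [Int.cast_zero, zero_mul, add_zero] at h
      have h2 := sg_zero_real N hN i h
      rw [Real.sin_eq_zero_iff] at h2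
      obtain ⟨k, hk⟩ := h2
      refine ⟨k, ?_⟩
      have h3 : (k : ℝ) = i / N := by
        have := Real.pi_ne_zero
        apply mul_left_cancel₀ this
        linarith
      rw [eq_div_iff hNR] at h3
      have : (i : ℝ) = N * k := by linarith
      exact_mod_cast this
  · rintro ⟨⟨k, rfl⟩, ⟨l, rfl⟩⟩
    have : (((N * k : ℤ) : ℂ) + (N * l : ℤ) * (N * Complex.I)) / N = 0 + k + l * (N * Complex.I) := by
      push_cast
      field_simp
      ring
    rw [this, sg_add_int_tau, sg_add_int]
    have := sg_neg (N * Complex.I) 0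
    rw [neg_zero] at this
    linear_combination this / 2

noncomputable def ev (N : ℕ) (i j : ℤ) : ℂ := (i + j * (N * Complex.I)) / N

theorem ev_sub (N : ℕ) (i j i' j' : ℤ) : ev N i j - ev N i' j' = ev N (i - i') (j - j') := by
  unfold ev; push_cast; ring

theorem ev_add (N : ℕ) (i j i' j' : ℤ) : ev N i j + ev N i' j' = ev N (i + i') (j + j') := by
  unfold ev; push_cast; ring

noncomputable def kv (N : ℕ) (i j : ℤ) : Fin 3 → ℂ :=
  ![sg (N * Complex.I) (ev N i j - ev N 10 0 + ev N 60 0) / sg (N * Complex.I) (ev N i j - ev N 10 0),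
    sg (N * Complex.I) (ev N i j - ev N 20 0 + ev N 60 0) / sg (N * Complex.I) (ev N i j - ev N 20 0),
    sg (N * Complex.I) (ev N i j - ev N 30 0 + ev N 60 0) / sg (N * Complex.I) (ev N i j - ev N 30 0)]

theorem main_aux (a b : ℕ) (ha : 0 < a) (hb : 0 < b) :
    ∃ p₁ p₂ p₃ : (ZMod a × ZMod b) → P2,
      ∀ x y z, Collin (p₁ x) (p₂ y) (p₃ z) ↔ x + y + z = 0 := by
  haveI : NeZero a := ⟨ha.ne'⟩
  haveI : NeZero b := ⟨hb.ne'⟩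
  obtain ⟨N, hNdef⟩ : ∃ N : ℕ, N = 1000 * (a * b) := ⟨_, rfl⟩
  have hN : 0 < N := by rw [hNdef]; positivity
  have hz : ∀ i j, sg (N * Complex.I) (ev N i j) = 0 ↔ (N : ℤ) ∣ i ∧ (N : ℤ) ∣ j := sg_zero_iff N hN
  have hnz : ∀ c k j : ℤ, c % 1000 ≠ 0 → sg (N * Complex.I) (ev N (c + 1000 * k) j) ≠ 0 := by
    intro c k j hc h
    rw [hz] at h
    obtain ⟨l, hl⟩ := h.1
    rw [hNdef] at hl
    push_cast at hl
    rw [mul_assoc] at hl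
    omega
  have hnz' : ∀ i j k c : ℤ, i = c + 1000 * k → c % 1000 ≠ 0 → sg (N * Complex.I) (ev N i j) ≠ 0 := by
    rintro i j k c rfl h
    exact hnz c k j h
  have hkv : ∀ c k j : ℤ, (c + 50) % 1000 ≠ 0 → (c - 10) % 1000 ≠ 0 → kv N (c + 1000 * k) j ≠ 0 := by
    intro c k j h1 h2 h
    have := congrFun h 0
    simp only [kv, Matrix.cons_val_zero, Pi.zero_apply, ev_sub, ev_add] at this
    rw [div_eq_zero_iff] at this
    rcases this with h | h
    · exact hnz' _ _ k (c + 50) (by ring) h1 h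
    · exact hnz' _ _ k (c - 10) (by ring) h2 h
  refine ⟨fun x => Projectivization.mk ℂ (kv N (1 + 1000 * (b * x.1.val)) (1000 * a * x.2.val))
      (hkv _ _ _ (by norm_num) (by norm_num)),
    fun x => Projectivization.mk ℂ (kv N (2 + 1000 * (b * x.1.val)) (1000 * a * x.2.val))
      (hkv _ _ _ (by norm_num) (by norm_num)),
    fun x => Projectivization.mk ℂ (kv N (-3 + 1000 * (b * x.1.val)) (1000 * a * x.2.val))
      (hkv _ _ _ (by norm_num) (by norm_num)), ?_⟩
  rintro ⟨x1, x2⟩ ⟨y1, y2⟩ ⟨z1, z2⟩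
  simp only
  rw [aux_collin]
  unfold kv
  rw [aux_det (sg (N * Complex.I)) (sg_neg _) _ _ (sg_AB (N * Complex.I) (by simpa using hN))]
  · simp only [ev_sub, ev_add]
    rw [hz, Prod.mk_add_mk, Prod.mk_add_mk, Prod.mk_eq_zero]
    have e1 : (60 + (1 + 1000 * ((b : ℤ) * x1.val)) + (2 + 1000 * (b * y1.val)) +
        (-3 + 1000 * (b * z1.val)) - 10 - 20 - 30 : ℤ) = (1000 * b) * (x1.val + y1.val + z1.val : ℕ) := by
      push_cast; ring
    have e2 : (0 + 1000 * (a : ℤ) * x2.val + 1000 * a * y2.val + 1000 * a * z2.val - 0 - 0 - 0 : ℤ)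
        = (1000 * a) * (x2.val + y2.val + z2.val : ℕ) := by push_cast; ring
    rw [e1, e2, hNdef]
    have e3 : ((1000 * (a * b) : ℕ) : ℤ) = (1000 * b) * a := by push_cast; ring
    have e4 : ((1000 * (a * b) : ℕ) : ℤ) = (1000 * a) * b := by push_cast; ring
    have ha' : (1000 * a : ℤ) ≠ 0 := by positivity
    have hb' : (1000 * b : ℤ) ≠ 0 := by positivity
    nth_rw 1 [e3]
    rw [e4, mul_dvd_mul_iff_left hb', mul_dvd_mul_iff_left ha', Int.natCast_dvd_natCast,
      Int.natCast_dvd_natCast, ← ZMod.natCast_eq_zero_iff, ← ZMod.natCast_eq_zero_iff]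
    simp
  · exact hnz' _ _ 0 60 (by ring) (by norm_num)
  · simp only [ev_sub, ev_add]
    exact hnz' _ _ (b * y1.val) 42 (by ring) (by norm_num)
  · rw [ev_sub]; exact hnz' _ _ (b * x1.val) (1 - 10) (by ring) (by norm_num)
  · rw [ev_sub]; exact hnz' _ _ (b * x1.val) (1 - 20) (by ring) (by norm_num)
  · rw [ev_sub]; exact hnz' _ _ (b * x1.val) (1 - 30) (by ring) (by norm_num)
  · rw [ev_sub]; exact hnz' _ _ (b * y1.val) (2 - 10) (by ring) (by norm_num)
  · rw [ev_sub]; exact hnz' _ _ (b * y1.val) (2 - 20) (by ring) (by norm_num)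
  · rw [ev_sub]; exact hnz' _ _ (b * y1.val) (2 - 30) (by ring) (by norm_num)
  · rw [ev_sub]; exact hnz' _ _ (b * z1.val) (-3 - 10) (by ring) (by norm_num)
  · rw [ev_sub]; exact hnz' _ _ (b * z1.val) (-3 - 20) (by ring) (by norm_num)
  · rw [ev_sub]; exact hnz' _ _ (b * z1.val) (-3 - 30) (by ring) (by norm_num)
  · rw [ev_sub]; exact hnz' _ _ (b * x1.val - b * y1.val) (1 - 2) (by ring) (by norm_num)
  · rw [ev_sub]; exact hnz' _ _ (b * x1.val - b * z1.val) (1 + 3) (by ring) (by norm_num)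
  · rw [ev_sub]; exact hnz' _ _ (b * y1.val - b * z1.val) (2 + 3) (by ring) (by norm_num)
  · rw [ev_sub]; exact hnz' _ _ 0 10 (by ring) (by norm_num)
  · rw [ev_sub]; exact hnz' _ _ 0 20 (by ring) (by norm_num)
  · rw [ev_sub]; exact hnz' _ _ 0 10 (by ring) (by norm_num)

/-- Every finite subgroup of a two-dimensional complex torus, i.e. every
group ℤ/aℤ × ℤ/bℤ with a, b ≥ 1, can be realized by a 3-net in ℙ²(ℂ). -/
theorem realization_of_subgroups_of_two_torus (a b : ℕ) (ha : 0 < a) (hb : 0 < b) :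
    ∃ p₁ p₂ p₃ : (ZMod a × ZMod b) → P2, Realizes p₁ p₂ p₃ := by
  obtain ⟨p₁, p₂, p₃, h⟩ := main_aux (2 * a) b (by omega) hb
  let φ : ZMod a →+ ZMod (2 * a) := ZMod.lift a ⟨(AddMonoidHom.mulLeft (2 : ZMod (2 * a))).comp
    (Int.castAddHom (ZMod (2 * a))), by
      simp only [AddMonoidHom.comp_apply, AddMonoidHom.coe_mulLeft, Int.coe_castAddHom]
      have := ZMod.natCast_self (2 * a)
      push_cast at this ⊢
      exact this⟩
  have hφ : Function.Injective φ := by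
    rw [ZMod.lift_injective]
    intro m hm
    simp only [AddMonoidHom.comp_apply, AddMonoidHom.coe_mulLeft, Int.coe_castAddHom] at hm
    have h2 : ((2 * m : ℤ) : ZMod (2 * a)) = 0 := by push_cast; exact hm
    rw [ZMod.intCast_zmod_eq_zero_iff_dvd] at h2 ⊢
    push_cast at h2
    exact (mul_dvd_mul_iff_left (by norm_num)).1 h2
  haveI : Fact (1 < 2 * a) := ⟨by omega⟩
  exact ⟨_, _, _, aux_realizes (φ.prodMap (AddMonoidHom.id (ZMod b)))
    (Function.Injective.prodMap hφ Function.injective_id) (1, 0) (by simp) p₁ p₂ p₃ h⟩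
end

section
/- Every 3-net in ℙ²(ℂ) realizing a cyclic group is algebraic: if m ≥ 2 and p₁, p₂, p₃ : ℤ/mℤ → ℙ²(ℂ) are injective maps with pairwise disjoint images such that for all x,y,z ∈ ℤ/mℤ the points p₁(x), p₂(y), p₃(z) are collinear if and only if x+y+z = 0, then there exists a nonzero homogeneous cubic polynomial F ∈ ℂ[X,Y,Z] such that F vanishes at (representatives of) all the 3m points in the images of p₁, p₂, p₃, and the gradient of F is nonzero at a representative of each of these points. -/
/-- A realization (given dually by three maps into ℙ²(ℂ)) is algebraic if there is a
nonzero homogeneous cubic polynomial `F` on ℂ³ vanishing at every point of the images,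
all of these points being smooth points of the cubic curve `F = 0`. -/
def AlgebraicOn {H : Type} (p₁ p₂ p₃ : H → P2) : Prop :=
  ∃ F : MvPolynomial (Fin 3) ℂ, F ≠ 0 ∧ F.IsHomogeneous 3 ∧
    ∀ q ∈ Set.range p₁ ∪ Set.range p₂ ∪ Set.range p₃,
      MvPolynomial.eval q.rep F = 0 ∧
      ∃ j : Fin 3, MvPolynomial.eval q.rep (MvPolynomial.pderiv j F) ≠ 0

abbrev NV : Type := Fin 3 → ℂ

def det3 (u v w : NV) : ℂ :=
  u 0 * (v 1 * w 2 - v 2 * w 1) - u 1 * (v 0 * w 2 - v 2 * w 0) + u 2 * (v 0 * w 1 - v 1 * w 0)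

/-- the general ternary cubic -/
def cub (c : Fin 10 → ℂ) (v : NV) : ℂ :=
  c 0 * v 0 ^ 3 + c 1 * v 1 ^ 3 + c 2 * v 2 ^ 3 + c 3 * (v 0 ^ 2 * v 1) + c 4 * (v 0 * v 1 ^ 2)
  + c 5 * (v 0 ^ 2 * v 2) + c 6 * (v 0 * v 2 ^ 2) + c 7 * (v 1 ^ 2 * v 2) + c 8 * (v 1 * v 2 ^ 2)
  + c 9 * (v 0 * v 1 * v 2)

/-- gradient of the cubic at `u` -/
def gcub (c : Fin 10 → ℂ) (u : NV) : NV :=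
  ![3 * c 0 * u 0 ^ 2 + 2 * c 3 * (u 0 * u 1) + c 4 * u 1 ^ 2 + 2 * c 5 * (u 0 * u 2)
      + c 6 * u 2 ^ 2 + c 9 * (u 1 * u 2),
    3 * c 1 * u 1 ^ 2 + c 3 * u 0 ^ 2 + 2 * c 4 * (u 0 * u 1) + 2 * c 7 * (u 1 * u 2)
      + c 8 * u 2 ^ 2 + c 9 * (u 0 * u 2),
    3 * c 2 * u 2 ^ 2 + c 5 * u 0 ^ 2 + 2 * c 6 * (u 0 * u 2) + c 7 * u 1 ^ 2
      + 2 * c 8 * (u 1 * u 2) + c 9 * (u 0 * u 1)]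

def dot3 (u v : NV) : ℂ := u 0 * v 0 + u 1 * v 1 + u 2 * v 2

def tri (c : Fin 10 → ℂ) (u v w : NV) : ℂ :=
  c 0 * (u 0 * v 0 * w 0) + c 1 * (u 1 * v 1 * w 1) + c 2 * (u 2 * v 2 * w 2)
  + c 3 * (u 0 * v 0 * w 1) + c 4 * (u 0 * v 1 * w 1)
  + c 5 * (u 0 * v 0 * w 2) + c 6 * (u 0 * v 2 * w 2) + c 7 * (u 1 * v 1 * w 2)
  + c 8 * (u 1 * v 2 * w 2) + c 9 * (u 0 * v 1 * w 2)

theorem cub_smul (c : Fin 10 → ℂ) (t : ℂ) (v : NV) : cub c (t • v) = t ^ 3 * cub c v := by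
  simp only [cub, Pi.smul_apply, smul_eq_mul]; ring

theorem cub_line (c : Fin 10 → ℂ) (x y : ℂ) (u v : NV) :
    cub c (x • u + y • v) = x ^ 3 * cub c u + x ^ 2 * y * dot3 (gcub c u) v
      + x * y ^ 2 * dot3 (gcub c v) u + y ^ 3 * cub c v := by
  simp [cub, gcub, dot3]; ring

theorem cub_coord (c : Fin 10 → ℂ) (u v w : NV) : ∃ d : Fin 10 → ℂ, ∀ x y z : ℂ,
    cub c (x • u + y • v + z • w) = d 0 * x ^ 3 + d 1 * y ^ 3 + d 2 * z ^ 3 + d 3 * (x ^ 2 * y)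
      + d 4 * (x * y ^ 2) + d 5 * (x ^ 2 * z) + d 6 * (x * z ^ 2) + d 7 * (y ^ 2 * z)
      + d 8 * (y * z ^ 2) + d 9 * (x * y * z) := by
  have key : ∀ v, cub c v = tri c v v v := by intro v; simp only [cub, tri]; ring
  have ha1 : ∀ a b v w, tri c (a + b) v w = tri c a v w + tri c b v w := by
    intros; simp only [tri, Pi.add_apply]; ring
  have ha2 : ∀ a b v w, tri c v (a + b) w = tri c v a w + tri c v b w := by
    intros; simp only [tri, Pi.add_apply]; ring
  have ha3 : ∀ a b v w, tri c v w (a + b) = tri c v w a + tri c v w b := by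
    intros; simp only [tri, Pi.add_apply]; ring
  have hs1 : ∀ (t : ℂ) a v w, tri c (t • a) v w = t * tri c a v w := by
    intros; simp only [tri, Pi.smul_apply, smul_eq_mul]; ring
  have hs2 : ∀ (t : ℂ) a v w, tri c v (t • a) w = t * tri c v a w := by
    intros; simp only [tri, Pi.smul_apply, smul_eq_mul]; ring
  have hs3 : ∀ (t : ℂ) a v w, tri c v w (t • a) = t * tri c v w a := by
    intros; simp only [tri, Pi.smul_apply, smul_eq_mul]; ring
  refine ⟨![tri c u u u, tri c v v v, tri c w w w,
    tri c u u v + tri c u v u + tri c v u u, tri c v v u + tri c v u v + tri c u v v,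
    tri c u u w + tri c u w u + tri c w u u, tri c w w u + tri c w u w + tri c u w w,
    tri c v v w + tri c v w v + tri c w v v, tri c w w v + tri c w v w + tri c v w w,
    tri c u v w + tri c u w v + tri c v u w + tri c v w u + tri c w u v + tri c w v u], ?_⟩
  intro x y z
  rw [key]
  simp only [ha1, ha2, ha3, hs1, hs2, hs3]
  simp
  ring

theorem cramer3 (u v w q : NV) (h : det3 u v w ≠ 0) :
    q = (det3 q v w / det3 u v w) • u + (det3 u q w / det3 u v w) • v
      + (det3 u v q / det3 u v w) • w := by
  have h2 : ∀ i, det3 u v w * q i = det3 q v w * u i + det3 u q w * v i + det3 u v q * w i := by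
    intro i
    fin_cases i <;> simp only [det3] <;> simp <;> ring
  funext i
  simp only [Pi.add_apply, Pi.smul_apply, smul_eq_mul]
  field_simp
  linear_combination h2 i

theorem chasles_core (c : Fin 10 → ℂ) (U V W : NV) (b l t s g : ℂ)
    (h1 : cub c U = 0) (h2 : cub c V = 0) (h3 : cub c W = 0)
    (h4 : cub c (U + V) = 0) (h5 : cub c (U + W) = 0)
    (h6 : cub c (U + b • V + g • W) = 0) (h7 : cub c (U + b • V + (g + t) • W) = 0)
    (h8 : cub c (U + (b + s) • V + g • W) = 0)
    (rel : (b - 1) * (l + g) + (g + t) * (1 + l - (b + s)) = 0)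
    (hb : b ≠ 0) (hg : g ≠ 0) (ht : t ≠ 0) (hs : s ≠ 0) (hk : g + t ≠ 0) :
    cub c ((1 + l) • U + (b + s) • V + (l + g) • W) = 0 := by
  obtain ⟨d, hd⟩ := cub_coord c U V W
  have e1 := hd 1 0 0
  have e2 := hd 0 1 0
  have e3 := hd 0 0 1
  have e4 := hd 1 1 0
  have e5 := hd 1 0 1
  have e6 := hd 1 b g
  have e7 := hd 1 b (g + t)
  have e8 := hd 1 (b + s) g
  simp only [one_smul, zero_smul, add_zero, zero_add, h1, h2, h3, h4, h5, h6, h7, h8] at e1 e2 e3 e4 e5 e6 e7 e8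
  have d0 : d 0 = 0 := by linear_combination -e1
  have d1 : d 1 = 0 := by linear_combination -e2
  have d2 : d 2 = 0 := by linear_combination -e3
  have d4 : d 4 = - d 3 := by linear_combination -e4 - d0 - d1
  have d6 : d 6 = - d 5 := by linear_combination -e5 - d0 - d2
  rw [hd]
  simp only [d0, d1, d2, d4, d6] at *
  generalize d 3 = p at *
  generalize d 5 = q at *
  generalize d 7 = r at *
  generalize d 8 = s' at *
  generalize d 9 = w at *
  clear e1 e2 e3 e4 e5 h1 h2 h3 h4 h5 h6 h7 h8 hd d0 d1 d2 d4 d6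
  have hD : b * g * (g + t) * t * s ≠ 0 :=
    mul_ne_zero (mul_ne_zero (mul_ne_zero (mul_ne_zero hb hg) hk) ht) hs
  apply mul_left_cancel₀ hD
  linear_combination
    -((b + s) * (l + g) * (g + t) * ((1 + l) * t * s - (l + g - g * (1 + l)) * s
        - (b + s - b * (1 + l)) * t)) * e6
    - ((b + s) * (l + g) * (l + g - g * (1 + l)) * g * s) * e7
    - ((l + g) * (b + s - b * (1 + l)) * b * (g + t) * t) * e8
    + (b + s) * b * t * s * l * (g - 1) * p * rel

theorem chasles (c : Fin 10 → ℂ) (P11 P12 P13 P21 P22 P23 P31 P32 P33 : NV)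
    (α β γ δ ε ζ η θ κ μ : ℂ)
    (hα : α ≠ 0) (hβ : β ≠ 0) (hγ : γ ≠ 0) (hδ : δ ≠ 0) (hε : ε ≠ 0) (hζ : ζ ≠ 0)
    (hη : η ≠ 0) (hθ : θ ≠ 0) (hμ : μ ≠ 0)
    (h13 : P13 = α • P11 + β • P12) (h31 : P31 = γ • P11 + δ • P21)
    (h23 : P23 = ε • P21 + ζ • P22) (h32 : P32 = η • P12 + θ • P22)
    (h33 : P33 = κ • P31 + μ • P32)
    (hd : det3 P13 P23 P33 = 0)
    (n0 : det3 P11 P12 P21 ≠ 0) (na : det3 P22 P12 P21 ≠ 0) (nb : det3 P11 P22 P21 ≠ 0)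
    (nc : det3 P11 P12 P22 ≠ 0) (nk : det3 P11 P12 P23 ≠ 0)
    (z11 : cub c P11 = 0) (z12 : cub c P12 = 0) (z13 : cub c P13 = 0)
    (z21 : cub c P21 = 0) (z22 : cub c P22 = 0) (z23 : cub c P23 = 0)
    (z31 : cub c P31 = 0) (z32 : cub c P32 = 0) : cub c P33 = 0 := by
  have sc : ∀ (t : ℂ) (v : NV), t ≠ 0 → cub c (t • v) = 0 → cub c v = 0 := by
    intro t v ht h
    rw [cub_smul] at h
    simpa [ht] using h
  have hQ := cramer3 P11 P12 P21 P22 n0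
  obtain ⟨A, hA⟩ : ∃ A, A = det3 P22 P12 P21 / det3 P11 P12 P21 := ⟨_, rfl⟩
  obtain ⟨B, hB⟩ : ∃ B, B = det3 P11 P22 P21 / det3 P11 P12 P21 := ⟨_, rfl⟩
  obtain ⟨C, hC⟩ : ∃ C, C = det3 P11 P12 P22 / det3 P11 P12 P21 := ⟨_, rfl⟩
  rw [← hA, ← hB, ← hC] at hQ
  have hA0 : A ≠ 0 := by rw [hA]; exact div_ne_zero na n0
  have hB0 : B ≠ 0 := by rw [hB]; exact div_ne_zero nb n0
  have hC0 : C ≠ 0 := by rw [hC]; exact div_ne_zero nc n0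
  clear hA hB hC
  obtain ⟨V, hV⟩ : ∃ V : NV, V = (β / α) • P12 := ⟨_, rfl⟩
  obtain ⟨W, hW⟩ : ∃ W : NV, W = (δ / γ) • P21 := ⟨_, rfl⟩
  have hV' : P12 = (α / β) • V := by
    rw [hV, smul_smul]; field_simp; simp
  have hW' : P21 = (γ / δ) • W := by
    rw [hW, smul_smul]; field_simp; simp
  have k13 : P13 = α • (P11 + V) := by
    rw [h13, hV, smul_add, smul_smul]; field_simp
  have k31 : P31 = γ • (P11 + W) := by
    rw [h31, hW, smul_add, smul_smul]; field_simp
  obtain ⟨b, hb⟩ : ∃ b, b = B * α / (β * A) := ⟨_, rfl⟩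
  obtain ⟨g, hg⟩ : ∃ g, g = C * γ / (δ * A) := ⟨_, rfl⟩
  obtain ⟨t, ht⟩ : ∃ t, t = ε * γ / (δ * ζ * A) := ⟨_, rfl⟩
  obtain ⟨s, hs⟩ : ∃ s, s = η * α / (β * θ * A) := ⟨_, rfl⟩
  obtain ⟨l, hl⟩ : ∃ l, l = κ * γ / (μ * θ * A) := ⟨_, rfl⟩
  have k22 : P22 = A • (P11 + b • V + g • W) := by
    conv_lhs => rw [hQ]
    funext i
    rw [hb, hg, hV', hW']
    simp only [Pi.add_apply, Pi.smul_apply, smul_eq_mul]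
    field_simp
  have k23 : P23 = (ζ * A) • (P11 + b • V + (g + t) • W) := by
    rw [h23, k22, ht, hW']
    funext i
    simp only [Pi.add_apply, Pi.smul_apply, smul_eq_mul]
    field_simp
    ring
  have k32 : P32 = (θ * A) • (P11 + (b + s) • V + g • W) := by
    rw [h32, k22, hs, hV']
    funext i
    simp only [Pi.add_apply, Pi.smul_apply, smul_eq_mul]
    field_simp
    ring
  have k33 : P33 = (μ * θ * A) • ((1 + l) • P11 + (b + s) • V + (l + g) • W) := by
    rw [h33, k31, k32, hl]
    funext i
    simp only [Pi.add_apply, Pi.smul_apply, smul_eq_mul]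
    field_simp
    ring
  have hb0 : b ≠ 0 := by rw [hb]; positivity
  have hg0 : g ≠ 0 := by rw [hg]; positivity
  have ht0 : t ≠ 0 := by rw [ht]; positivity
  have hs0 : s ≠ 0 := by rw [hs]; positivity
  have hn : det3 P11 V W ≠ 0 := by
    intro h
    apply n0
    have : det3 P11 P12 P21 = (α / β) * (γ / δ) * det3 P11 V W := by
      rw [hV', hW']; simp only [det3, Pi.smul_apply, smul_eq_mul]; ring
    rw [this, h, mul_zero]
  have hk0 : g + t ≠ 0 := by
    intro h
    apply nk
    rw [k23, h, hV']; simp only [det3, Pi.smul_apply, Pi.add_apply, smul_eq_mul]; ring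
  have rel : (b - 1) * (l + g) + (g + t) * (1 + l - (b + s)) = 0 := by
    have : det3 P13 P23 P33 = (α * (ζ * A) * (μ * θ * A)) * det3 P11 V W *
        ((b - 1) * (l + g) + (g + t) * (1 + l - (b + s))) := by
      rw [k13, k23, k33]; simp only [det3, Pi.smul_apply, Pi.add_apply, smul_eq_mul]; ring
    rw [hd] at this
    have h0 : (α * (ζ * A) * (μ * θ * A)) * det3 P11 V W ≠ 0 := by positivity
    simpa [h0] using this.symm
  rw [k33, cub_smul]
  rw [hV'] at z12
  rw [hW'] at z21
  rw [k13] at z13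
  rw [k31] at z31
  rw [k22] at z22
  rw [k23] at z23
  rw [k32] at z32
  rw [chasles_core c P11 V W b l t s g z11 (sc _ _ (by positivity) z12)
    (sc _ _ (by positivity) z21) (sc _ _ hα z13) (sc _ _ hγ z31) (sc _ _ hA0 z22)
    (sc _ _ (by positivity) z23) (sc _ _ (by positivity) z32) rel hb0 hg0 ht0 hs0 hk0, mul_zero]

def VNet {m : ℕ} (a b c : ZMod m → NV) : Prop :=
  ∀ i j k, det3 (a i) (b j) (c k) = 0 ↔ i + j + k = 0

theorem det3_rot (u v w : NV) : det3 v w u = det3 u v w := by simp only [det3]; ring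
theorem det3_swap (u v w : NV) : det3 v u w = - det3 u v w := by simp only [det3]; ring

theorem VNet.rot {m : ℕ} {a b c : ZMod m → NV} (h : VNet a b c) : VNet b c a := by
  intro i j k
  rw [det3_rot, h]
  constructor <;> intro h <;> linear_combination h

theorem VNet.swap {m : ℕ} {a b c : ZMod m → NV} (h : VNet a b c) : VNet b a c := by
  intro i j k
  rw [det3_swap, neg_eq_zero, h]
  constructor <;> intro h <;> linear_combination h

theorem VNet.rel {m : ℕ} (hm : 2 ≤ m) {a b c : ZMod m → NV} (h : VNet a b c) (i j k : ZMod m)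
    (hs : i + j + k = 0) : ∃ x y : ℂ, x ≠ 0 ∧ y ≠ 0 ∧ c k = x • a i + y • b j := by
  have : Fact (1 < m) := ⟨hm⟩
  have h10 : (1 : ZMod m) ≠ 0 := one_ne_zero
  have n : det3 (a i) (b j) (c (k + 1)) ≠ 0 := by
    rw [Ne, h]; intro h'; exact h10 (by linear_combination h' - hs)
  have e := cramer3 _ _ _ (c k) n
  rw [(h i j k).2 hs, zero_div, zero_smul, add_zero] at e
  refine ⟨_, _, ?_, ?_, e⟩
  · intro h0
    rw [h0, zero_smul, zero_add] at e
    have : det3 (a (i + 1)) (b j) (c k) = 0 := by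
      rw [e]; simp only [det3, Pi.smul_apply, smul_eq_mul]; ring
    rw [h] at this
    exact h10 (by linear_combination this - hs)
  · intro h0
    rw [h0, zero_smul, add_zero] at e
    have : det3 (a i) (b (j + 1)) (c k) = 0 := by
      rw [e]; simp only [det3, Pi.smul_apply, smul_eq_mul]; ring
    rw [h] at this
    exact h10 (by linear_combination this - hs)

theorem VNet.chasles {m : ℕ} (hm : 2 ≤ m) {a b c : ZMod m → NV} (h : VNet a b c)
    (f : Fin 10 → ℂ) (x y z u : ZMod m) (hxy : x ≠ y) (hxz : x ≠ z) (hyz : y ≠ z)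
    (zx : cub f (a x) = 0) (zy : cub f (a y) = 0) (zz : cub f (a z) = 0)
    (zb : cub f (b u) = 0) (zb' : cub f (b (u + z - y)) = 0)
    (zc : cub f (c (-x - u)) = 0) (zc' : cub f (c (-z - u)) = 0)
    (zc'' : cub f (c (y - x - z - u)) = 0) : cub f (b (u + x - y)) = 0 := by
  obtain ⟨α, β, hα, hβ, h13⟩ := h.rel hm x u (-x - u) (by ring)
  obtain ⟨γ, δ, hγ, hδ, h31⟩ := h.rel hm x (u + z - y) (y - x - z - u) (by ring)
  obtain ⟨ε, ζ, hε, hζ, h23⟩ := h.rot.rel hm (u + z - y) (-z - u) y (by ring)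
  obtain ⟨η, θ, hη, hθ, h32⟩ := h.rot.rel hm u (-z - u) z (by ring)
  obtain ⟨κ, μ, hκ, hμ, h33⟩ := h.rot.rot.rel hm (y - x - z - u) z (u + x - y) (by ring)
  refine _root_.chasles f (a x) (b u) (c (-x - u)) (b (u + z - y)) (c (-z - u)) (a y)
    (c (y - x - z - u)) (a z) (b (u + x - y)) α β γ δ ε ζ η θ κ μ hα hβ hγ hδ hε hζ hη hθ hμ
    h13 h31 h23 h32 h33 ?_ ?_ ?_ ?_ ?_ ?_ zx zb zc zb' zc' zy zc'' zz
  · exact (h.rot.rot _ _ _).2 (by ring)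
  · intro h0
    have : det3 (a x) (b (u + z - y)) (c (-x - u)) = - β * det3 (a x) (b u) (b (u + z - y)) := by
      rw [h13]; simp only [det3, Pi.smul_apply, Pi.add_apply, smul_eq_mul]; ring
    rw [h0, mul_zero, h] at this
    exact hyz (by linear_combination -this)
  · intro h0
    have : det3 (a y) (b u) (c (-z - u)) = - ε * det3 (c (-z - u)) (b u) (b (u + z - y)) := by
      rw [h23]; simp only [det3, Pi.smul_apply, Pi.add_apply, smul_eq_mul]; ring
    rw [h0, mul_zero, h] at this
    exact hyz (by linear_combination this)
  · intro h0
    have h0 : det3 (a x) (b (u + z - y)) (c (-z - u)) = 0 := by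
      rw [← neg_eq_zero, ← h0]; simp only [det3]; ring
    have e := (h _ _ _).1 h0
    exact hxy (by linear_combination e)
  · intro h0
    have e := (h _ _ _).1 h0
    exact hxz (by linear_combination e)
  · intro h0
    have : det3 (a y) (b u) (c (-x - u)) = - α * det3 (a x) (b u) (a y) := by
      rw [h13]; simp only [det3, Pi.smul_apply, Pi.add_apply, smul_eq_mul]; ring
    rw [h0, mul_zero, h] at this
    exact hxy (by linear_combination -this)

theorem two_ne {m : ℕ} (hm : 3 ≤ m) : (2 : ZMod m) ≠ 0 := by
  intro h
  have : ((2 : ℕ) : ZMod m) = 0 := by exact_mod_cast h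
  rw [ZMod.natCast_eq_zero_iff] at this
  have := Nat.le_of_dvd (by norm_num) this
  omega

/-- window step for `B` upwards and downwards -/
theorem VNet.step {m : ℕ} (hm : 3 ≤ m) {a b c : ZMod m → NV} (h : VNet a b c)
    (f : Fin 10 → ℂ) (p q r e : ℤ) (he : e = 1 ∨ e = -1) (hs : p + q + r = 0)
    (a1 : cub f (a ((p - e : ℤ) : ZMod m)) = 0) (a2 : cub f (a (p : ZMod m)) = 0)
    (a3 : cub f (a ((p + e : ℤ) : ZMod m)) = 0)
    (b1 : cub f (b ((q - e : ℤ) : ZMod m)) = 0) (b2 : cub f (b (q : ZMod m)) = 0)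
    (c1 : cub f (c ((r - e : ℤ) : ZMod m)) = 0) (c2 : cub f (c (r : ZMod m)) = 0)
    (c3 : cub f (c ((r + e : ℤ) : ZMod m)) = 0) :
    cub f (b ((q + e : ℤ) : ZMod m)) = 0 := by
  have hr : r = - p - q := by omega
  subst hr
  have : Fact (1 < m) := ⟨by omega⟩
  have h1 : (1 : ZMod m) ≠ 0 := one_ne_zero
  have h2 := two_ne hm
  have he1 : ((e : ℤ) : ZMod m) ≠ 0 := by
    rcases he with rfl | rfl <;> simp
  have he2 : 2 * ((e : ℤ) : ZMod m) ≠ 0 := by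
    rcases he with rfl | rfl <;> simp [h2]
  have := h.chasles (by omega) f ((p + e : ℤ) : ZMod m) p ((p - e : ℤ) : ZMod m) q
    (fun h => he1 (by push_cast at h; linear_combination h))
    (fun h => he2 (by push_cast at h; linear_combination h))
    (fun h => he1 (by push_cast at h; linear_combination h)) a3 a2 a1 b2
    (by convert b1 using 3; push_cast; ring) (by convert c1 using 3; push_cast; ring)
    (by convert c3 using 3; push_cast; ring) (by convert c2 using 3; push_cast; ring)
  convert this using 3
  push_cast; ring

/-- combinatorial propagation -/
theorem propagate (A B C : ℤ → Prop)
    (sA : ∀ p q r e : ℤ, (e = 1 ∨ e = -1) → p + q + r = 0 → A (p - e) → A p → B (q - e) → B q →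
      B (q + e) → C (r - e) → C r → C (r + e) → A (p + e))
    (sB : ∀ p q r e : ℤ, (e = 1 ∨ e = -1) → p + q + r = 0 → A (p - e) → A p → A (p + e) →
      B (q - e) → B q → C (r - e) → C r → C (r + e) → B (q + e))
    (sC : ∀ p q r e : ℤ, (e = 1 ∨ e = -1) → p + q + r = 0 → A (p - e) → A p → A (p + e) →
      B (q - e) → B q → B (q + e) → C (r - e) → C r → C (r + e))
    (a0 : A (-1)) (a1 : A 0) (a2 : A 1) (a3 : A 2) (b0 : B (-1)) (b1 : B 0) (b2 : B 1)
    (c0 : C (-1)) (c1 : C 0) : ∀ n : ℤ, A n ∧ B n ∧ C n := by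
  have c2 : C 1 := by
    have t := sC 0 0 0 1
    norm_num at t
    exact t a0 a1 a2 b0 b1 b2 c0 c1
  have cm2 : C (-2) := by
    have t := sC 1 0 (-1) (-1)
    norm_num at t
    exact t a3 a2 a1 b2 b1 b0 c1 c0
  have bm2 : B (-2) := by
    have t := sB 1 (-1) 0 (-1)
    norm_num at t
    exact t a3 a2 a1 b1 b0 c2 c1 c0
  have cp2 : C 2 := by
    have t := sC 0 (-1) 1 1
    norm_num at t
    exact t a0 a1 a2 bm2 b0 b1 c1 c2
  have bp2 : B 2 := by
    have t := sB 0 1 (-1) 1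
    norm_num at t
    exact t a0 a1 a2 b1 b2 cm2 c0 c1
  have am2 : A (-2) := by
    have t := sA (-1) 0 1 (-1)
    norm_num at t
    exact t a1 a0 b2 b1 b0 cp2 c2 c1
  have main : ∀ n : ℕ, ∀ k : ℤ, -(n + 2 : ℤ) ≤ k → k ≤ n + 2 → A k ∧ B k ∧ C k := by
    intro n
    induction n with
    | zero =>
      intro k h1 h2
      have : k = -2 ∨ k = -1 ∨ k = 0 ∨ k = 1 ∨ k = 2 := by push_cast at *; omega
      rcases this with rfl | rfl | rfl | rfl | rfl <;> tauto
    | succ n ih =>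
      have key : ∀ e : ℤ, (e = 1 ∨ e = -1) →
          A (e * (n + 2) + e) ∧ B (e * (n + 2) + e) ∧ C (e * (n + 2) + e) := by
        intro e he
        have ia : ∀ k, -(n + 2 : ℤ) ≤ k → k ≤ n + 2 → A k := fun k h1 h2 => (ih k h1 h2).1
        have ib : ∀ k, -(n + 2 : ℤ) ≤ k → k ≤ n + 2 → B k := fun k h1 h2 => (ih k h1 h2).2.1
        have ic : ∀ k, -(n + 2 : ℤ) ≤ k → k ≤ n + 2 → C k := fun k h1 h2 => (ih k h1 h2).2.2
        refine ⟨sA (e * (n + 2)) (-e) (-(e * (n + 1))) e he (by ring) ?_ ?_ ?_ ?_ ?_ ?_ ?_ ?_,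
          sB (-e) (e * (n + 2)) (-(e * (n + 1))) e he (by ring) ?_ ?_ ?_ ?_ ?_ ?_ ?_ ?_,
          sC (-e) (-(e * (n + 1))) (e * (n + 2)) e he (by ring) ?_ ?_ ?_ ?_ ?_ ?_ ?_ ?_⟩
        all_goals first | apply ia | apply ib | apply ic
        all_goals rcases he with rfl | rfl <;> omega
      intro k h1 h2
      push_cast at h1 h2
      by_cases hk : -(n + 2 : ℤ) ≤ k ∧ k ≤ n + 2
      · exact ih k hk.1 hk.2
      · have : k = 1 * (n + 2) + 1 ∨ k = (-1) * (n + 2) + (-1) := by omega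
        rcases this with rfl | rfl
        · exact key 1 (by simp)
        · exact key (-1) (by simp)
  intro n
  exact main n.natAbs n (by omega) (by omega)

theorem VNet.onCubic {m : ℕ} (hm : 3 ≤ m) {a b c : ZMod m → NV} (h : VNet a b c) :
    ∃ f : Fin 10 → ℂ, f ≠ 0 ∧ ∀ i, cub f (a i) = 0 ∧ cub f (b i) = 0 ∧ cub f (c i) = 0 := by
  let P : Fin 9 → NV := ![a ((-1 : ℤ) : ZMod m), a ((0 : ℤ) : ZMod m), a ((1 : ℤ) : ZMod m),
    a ((2 : ℤ) : ZMod m), b ((-1 : ℤ) : ZMod m), b ((0 : ℤ) : ZMod m), b ((1 : ℤ) : ZMod m),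
    c ((-1 : ℤ) : ZMod m), c ((0 : ℤ) : ZMod m)]
  let L : (Fin 10 → ℂ) →ₗ[ℂ] (Fin 9 → ℂ) :=
    { toFun := fun f i => cub f (P i)
      map_add' := by intro f g; funext i; simp only [cub, Pi.add_apply]; ring
      map_smul' := by
        intro t f; funext i
        simp only [cub, Pi.smul_apply, smul_eq_mul, RingHom.id_apply]; ring }
  have hk : LinearMap.ker L ≠ ⊥ := LinearMap.ker_ne_bot_of_finrank_lt (by simp)
  obtain ⟨f, hf, hf0⟩ := Submodule.exists_mem_ne_zero_of_ne_bot hk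
  have hz : ∀ i, cub f (P i) = 0 := fun i => congrFun (LinearMap.mem_ker.1 hf) i
  refine ⟨f, hf0, ?_⟩
  have := propagate (fun n => cub f (a (n : ZMod m)) = 0) (fun n => cub f (b (n : ZMod m)) = 0)
    (fun n => cub f (c (n : ZMod m)) = 0)
    (fun p q r e he hs a1 a2 b1 b2 b3 c1 c2 c3 =>
      h.swap.step hm f q p r e he (by omega) b1 b2 b3 a1 a2 c1 c2 c3)
    (fun p q r e he hs a1 a2 a3 b1 b2 c1 c2 c3 =>
      h.step hm f p q r e he (by omega) a1 a2 a3 b1 b2 c1 c2 c3)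
    (fun p q r e he hs a1 a2 a3 b1 b2 b3 c1 c2 =>
      h.rot.step hm f q r p e he (by omega) b1 b2 b3 c1 c2 a1 a2 a3)
    (hz 0) (hz 1) (hz 2) (hz 3) (hz 4) (hz 5) (hz 6) (hz 7) (hz 8)
  intro i
  obtain ⟨n, rfl⟩ := ZMod.intCast_surjective i
  exact this n

theorem VNet.smooth {m : ℕ} (hm : 3 ≤ m) {a b c : ZMod m → NV} (h : VNet a b c)
    (f : Fin 10 → ℂ) (hf : ∀ i, cub f (a i) = 0 ∧ cub f (b i) = 0 ∧ cub f (c i) = 0)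
    (i : ZMod m) (hg : gcub f (a i) = 0) : ∀ v, cub f v = 0 := by
  have : Fact (1 < m) := ⟨by omega⟩
  have h1 : (1 : ZMod m) ≠ 0 := one_ne_zero
  have h2 := two_ne hm
  have line : ∀ (j : ZMod m) (x y : ℂ), cub f (x • a i + y • b j) = 0 := by
    intro j
    obtain ⟨s, t, hs, ht, e⟩ := h.rel (by omega) i j (-i - j) (by ring)
    have hd : ∀ v, dot3 (gcub f (a i)) v = 0 := by intro v; rw [hg]; simp [dot3]
    have e2 := (hf (-i - j)).2.2
    rw [e, cub_line, (hf i).1, (hf j).2.1, hd] at e2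
    have e3 : dot3 (gcub f (b j)) (a i) = 0 := by simpa [hs, ht] using e2
    intro x y
    rw [cub_line, (hf i).1, (hf j).2.1, hd, e3]; simp
  have indep : ∀ j k, j ≠ k → det3 (a i) (b j) (b k) ≠ 0 := by
    intro j k hjk h0
    obtain ⟨s, t, hs, ht, e⟩ := h.rel (by omega) i j (-i - j) (by ring)
    have : det3 (a i) (b k) (c (-i - j)) = - t * det3 (a i) (b j) (b k) := by
      rw [e]; simp only [det3, Pi.smul_apply, Pi.add_apply, smul_eq_mul]; ring
    rw [h0, mul_zero, h] at this
    exact hjk (by linear_combination -this)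
  have indep' : ∀ j, det3 (a i) (b j) (a (i + 1)) ≠ 0 := by
    intro j h0
    obtain ⟨s, t, hs, ht, e⟩ := h.rel (by omega) i j (-i - j) (by ring)
    have : det3 (a (i + 1)) (b j) (c (-i - j)) = - s * det3 (a i) (b j) (a (i + 1)) := by
      rw [e]; simp only [det3, Pi.smul_apply, Pi.add_apply, smul_eq_mul]; ring
    rw [h0, mul_zero, h] at this
    exact h1 (by linear_combination this)
  have n := indep 0 1 (by simp)
  have hB := cramer3 _ _ _ (b (-1)) n
  have hA := cramer3 _ _ _ (a (i + 1)) n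
  obtain ⟨d, hd⟩ := cub_coord f (a i) (b 0) (b 1)
  have l1 : ∀ x y : ℂ, cub f (x • a i + y • b 0 + (0 : ℂ) • b 1) = 0 := by
    intro x y; rw [zero_smul, add_zero]; exact line 0 x y
  have l2 : ∀ x z : ℂ, cub f (x • a i + (0 : ℂ) • b 0 + z • b 1) = 0 := by
    intro x y; rw [zero_smul, add_zero]; exact line 1 x y
  simp only [hd] at l1 l2
  have p1 := l1 1 0
  have p2 := l1 0 1
  have p3 := l1 1 1
  have p4 := l1 1 (-1)
  have q2 := l2 0 1
  have q3 := l2 1 1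
  have q4 := l2 1 (-1)
  norm_num at p1 p2 p3 p4 q2 q3 q4
  have d3 : d 3 = 0 := by linear_combination (p3 - p4) / 2 - p2
  have d4 : d 4 = 0 := by linear_combination (p3 + p4) / 2 - p1
  have d5 : d 5 = 0 := by linear_combination (q3 - q4) / 2 - q2
  have d6 : d 6 = 0 := by linear_combination (q3 + q4) / 2 - p1
  have hy : det3 (a i) (b (-1)) (b 1) / det3 (a i) (b 0) (b 1) ≠ 0 :=
    div_ne_zero (indep _ _ (fun e => h2 (by linear_combination -e))) n
  have hz : det3 (a i) (b 0) (b (-1)) / det3 (a i) (b 0) (b 1) ≠ 0 :=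
    div_ne_zero (indep _ _ (fun e => h1 (by linear_combination e))) n
  have hY : det3 (a i) (a (i + 1)) (b 1) / det3 (a i) (b 0) (b 1) ≠ 0 := by
    refine div_ne_zero (fun e => indep' 1 ?_) n
    rw [← det3_rot, det3_swap, ← det3_rot, ← neg_eq_zero, neg_neg]
    rw [← e]; simp only [det3]; ring
  have hZ : det3 (a i) (b 0) (a (i + 1)) / det3 (a i) (b 0) (b 1) ≠ 0 :=
    div_ne_zero (indep' 0) n
  generalize det3 (b (-1)) (b 0) (b 1) / det3 (a i) (b 0) (b 1) = x0 at *
  generalize det3 (a i) (b (-1)) (b 1) / det3 (a i) (b 0) (b 1) = y0 at *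
  generalize det3 (a i) (b 0) (b (-1)) / det3 (a i) (b 0) (b 1) = z0 at *
  generalize det3 (a (i + 1)) (b 0) (b 1) / det3 (a i) (b 0) (b 1) = X at *
  generalize det3 (a i) (a (i + 1)) (b 1) / det3 (a i) (b 0) (b 1) = Y at *
  generalize det3 (a i) (b 0) (a (i + 1)) / det3 (a i) (b 0) (b 1) = Z at *
  have l3 : ∀ x, cub f ((x + x0) • a i + y0 • b 0 + z0 • b 1) = 0 := by
    intro x
    have := line (-1) x 1
    rw [one_smul, hB] at this
    rw [← this]
    congr 1
    module
  simp only [hd, p1, p2, q2, d3, d4, d5, d6] at l3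
  have hyz : y0 * z0 ≠ 0 := mul_ne_zero hy hz
  have d9 : d 9 = 0 := by
    have e1 := l3 1
    have e0 := l3 0
    apply mul_left_cancel₀ hyz
    linear_combination e1 - e0
  have d78 : d 7 * y0 + d 8 * z0 = 0 := by
    apply mul_left_cancel₀ hyz
    linear_combination l3 0 - (0 + x0) * y0 * z0 * d9
  have hA2 := (hf (i + 1)).1
  rw [hA, hd, p1, p2, q2, d3, d4, d5, d6, d9] at hA2
  have hYZ : Y * Z ≠ 0 := mul_ne_zero hY hZ
  have D : d 7 * Y + d 8 * Z = 0 := by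
    apply mul_left_cancel₀ hYZ
    linear_combination hA2
  have hdet : z0 * Y - y0 * Z ≠ 0 := by
    intro h0
    have : det3 (a i) (b (-1)) (a (i + 1)) = (y0 * Z - z0 * Y) * det3 (a i) (b 0) (b 1) := by
      rw [hB, hA]; simp only [det3, Pi.smul_apply, Pi.add_apply, smul_eq_mul]; ring
    apply indep' (-1)
    rw [this]
    linear_combination - det3 (a i) (b 0) (b 1) * h0
  have d7 : d 7 = 0 := by
    apply mul_left_cancel₀ hdet
    linear_combination z0 * D - Z * d78
  have d8 : d 8 = 0 := by
    apply mul_left_cancel₀ hdet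
    linear_combination Y * d78 - y0 * D
  intro v
  rw [cramer3 _ _ _ v n, hd, p1, p2, q2, d3, d4, d5, d6, d7, d8, d9]
  ring

theorem collin_iff (p q r : P2) : Collin p q r ↔ det3 p.rep q.rep r.rep = 0 := by
  have hset : ({p.rep, q.rep, r.rep} : Set NV) = Set.range ![p.rep, q.rep, r.rep] := by
    ext v
    simp only [Set.mem_insert_iff, Set.mem_singleton_iff, Set.mem_range, Fin.exists_fin_succ,
      IsEmpty.exists_iff, or_false]
    simp [eq_comm]
  have hdet : det3 p.rep q.rep r.rep = Matrix.det (Matrix.of ![p.rep, q.rep, r.rep]) := by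
    rw [Matrix.det_fin_three]; simp [det3]; ring
  have h1 : LinearIndependent ℂ ![p.rep, q.rep, r.rep] ↔ det3 p.rep q.rep r.rep ≠ 0 := by
    rw [hdet, ← isUnit_iff_ne_zero, ← Matrix.isUnit_iff_isUnit_det]
    exact Matrix.linearIndependent_rows_iff_isUnit (A := Matrix.of ![p.rep, q.rep, r.rep])
  have h2 := linearIndependent_iff_card_eq_finrank_span (R := ℂ) (b := ![p.rep, q.rep, r.rep])
  have h3 := finrank_range_le_card (R := ℂ) ![p.rep, q.rep, r.rep]
  rw [← not_iff_not, ← Ne, ← h1, h2, Collin, hset]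
  simp only [Fintype.card_fin, Set.finrank] at *
  omega

def expo : Fin 10 → (Fin 3 → ℕ) :=
  ![![3, 0, 0], ![0, 3, 0], ![0, 0, 3], ![2, 1, 0], ![1, 2, 0], ![2, 0, 1], ![1, 0, 2],
    ![0, 2, 1], ![0, 1, 2], ![1, 1, 1]]

noncomputable def cpoly (f : Fin 10 → ℂ) : MvPolynomial (Fin 3) ℂ :=
  ∑ i, MvPolynomial.monomial (Finsupp.equivFunOnFinite.symm (expo i)) (f i)

theorem cpoly_hom (f : Fin 10 → ℂ) : (cpoly f).IsHomogeneous 3 := by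
  apply MvPolynomial.IsHomogeneous.sum
  intro i _
  apply MvPolynomial.isHomogeneous_monomial
  rw [Finsupp.degree_eq_sum]
  fin_cases i <;> simp [expo, Fin.sum_univ_three]

theorem cpoly_ne (f : Fin 10 → ℂ) (hf : f ≠ 0) : cpoly f ≠ 0 := by
  intro h
  apply hf
  have hinj : Function.Injective expo := by decide
  funext i
  have := congrArg (MvPolynomial.coeff (Finsupp.equivFunOnFinite.symm (expo i))) h
  simp only [cpoly, MvPolynomial.coeff_sum, MvPolynomial.coeff_monomial,
    EmbeddingLike.apply_eq_iff_eq, hinj.eq_iff, MvPolynomial.coeff_zero] at this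
  simpa using this

theorem cpoly_explicit (f : Fin 10 → ℂ) : cpoly f =
    MvPolynomial.C (f 0) * MvPolynomial.X 0 ^ 3 + MvPolynomial.C (f 1) * MvPolynomial.X 1 ^ 3
    + MvPolynomial.C (f 2) * MvPolynomial.X 2 ^ 3
    + MvPolynomial.C (f 3) * (MvPolynomial.X 0 ^ 2 * MvPolynomial.X 1)
    + MvPolynomial.C (f 4) * (MvPolynomial.X 0 * MvPolynomial.X 1 ^ 2)
    + MvPolynomial.C (f 5) * (MvPolynomial.X 0 ^ 2 * MvPolynomial.X 2)
    + MvPolynomial.C (f 6) * (MvPolynomial.X 0 * MvPolynomial.X 2 ^ 2)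
    + MvPolynomial.C (f 7) * (MvPolynomial.X 1 ^ 2 * MvPolynomial.X 2)
    + MvPolynomial.C (f 8) * (MvPolynomial.X 1 * MvPolynomial.X 2 ^ 2)
    + MvPolynomial.C (f 9) * (MvPolynomial.X 0 * MvPolynomial.X 1 * MvPolynomial.X 2) := by
  have key : ∀ i, MvPolynomial.monomial (Finsupp.equivFunOnFinite.symm (expo i)) (f i)
      = MvPolynomial.C (f i) * (MvPolynomial.X 0 ^ (expo i 0) * MvPolynomial.X 1 ^ (expo i 1)
        * MvPolynomial.X 2 ^ (expo i 2)) := by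
    intro i
    rw [MvPolynomial.monomial_eq, Finsupp.prod_fintype _ _ (by simp), Fin.prod_univ_three]
    simp
  simp only [cpoly, key, Fin.sum_univ_succ, Fin.sum_univ_zero]
  simp [expo]
  ring

theorem cpoly_eval (f : Fin 10 → ℂ) (v : NV) : MvPolynomial.eval v (cpoly f) = cub f v := by
  rw [cpoly_explicit]; simp [cub]

theorem cpoly_grad (f : Fin 10 → ℂ) (v : NV) (j : Fin 3) :
    MvPolynomial.eval v (MvPolynomial.pderiv j (cpoly f)) = gcub f v j := by
  rw [cpoly_explicit]
  fin_cases j <;> simp [gcub, MvPolynomial.pderiv_X, Derivation.leibniz, Derivation.leibniz_pow] <;> ring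

theorem cpoly_smooth {m : ℕ} (hm : 3 ≤ m) {a b c : ZMod m → NV} (h : VNet a b c)
    (f : Fin 10 → ℂ) (hf0 : f ≠ 0)
    (hf : ∀ i, cub f (a i) = 0 ∧ cub f (b i) = 0 ∧ cub f (c i) = 0)
    (i : ZMod m) : ∃ j : Fin 3, MvPolynomial.eval (a i) (MvPolynomial.pderiv j (cpoly f)) ≠ 0 := by
  by_contra hcon
  push Not at hcon
  apply cpoly_ne f hf0
  have hg : gcub f (a i) = 0 := by
    funext j
    rw [← cpoly_grad]; exact hcon j
  apply MvPolynomial.funext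
  intro v
  rw [cpoly_eval, h.smooth hm f hf i hg v, map_zero]

theorem case_ge3 (m : ℕ) (hm : 3 ≤ m) (p₁ p₂ p₃ : ZMod m → P2)
    (h : VNet (fun i => (p₁ i).rep) (fun i => (p₂ i).rep) (fun i => (p₃ i).rep)) :
    AlgebraicOn p₁ p₂ p₃ := by
  obtain ⟨f, hf0, hf⟩ := h.onCubic hm
  refine ⟨cpoly f, cpoly_ne f hf0, cpoly_hom f, ?_⟩
  rintro q ((⟨i, rfl⟩ | ⟨i, rfl⟩) | ⟨i, rfl⟩)
  · exact ⟨by rw [cpoly_eval]; exact (hf i).1, cpoly_smooth hm h f hf0 hf i⟩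
  · exact ⟨by rw [cpoly_eval]; exact (hf i).2.1, cpoly_smooth hm h.rot f hf0
      (fun i => ⟨(hf i).2.1, (hf i).2.2, (hf i).1⟩) i⟩
  · exact ⟨by rw [cpoly_eval]; exact (hf i).2.2, cpoly_smooth hm h.rot.rot f hf0
      (fun i => ⟨(hf i).2.2, (hf i).1, (hf i).2.1⟩) i⟩

/-! The case of four lines in general position -/

noncomputable def lin (n : NV) : MvPolynomial (Fin 3) ℂ :=
  ∑ i, MvPolynomial.C (n i) * MvPolynomial.X i

theorem lin_hom (n : NV) : (lin n).IsHomogeneous 1 := by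
  apply MvPolynomial.IsHomogeneous.sum
  intro i _
  exact MvPolynomial.isHomogeneous_C_mul_X _ _

theorem lin_eval (n v : NV) : MvPolynomial.eval v (lin n) = dot3 n v := by
  simp [lin, dot3, Fin.sum_univ_three]

theorem lin_grad (n : NV) (j : Fin 3) : MvPolynomial.pderiv j (lin n) = MvPolynomial.C (n j) := by
  simp only [lin, Fin.sum_univ_three]
  fin_cases j <;> simp [MvPolynomial.pderiv_X]

def crs (u v : NV) : NV :=
  ![u 1 * v 2 - u 2 * v 1, u 2 * v 0 - u 0 * v 2, u 0 * v 1 - u 1 * v 0]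

theorem dot3_crs (u v w : NV) : dot3 (crs u v) w = det3 u v w := by
  simp [dot3, crs, det3]; ring

noncomputable def quad (k l m n : NV) : MvPolynomial (Fin 3) ℂ :=
  lin k * lin l * lin m + lin k * lin l * lin n + lin m * lin n * lin k + lin m * lin n * lin l

theorem quad_hom (k l m n : NV) : (quad k l m n).IsHomogeneous 3 := by
  have : ∀ k l m : NV, (lin k * lin l * lin m).IsHomogeneous 3 := fun k l m =>
    ((lin_hom k).mul (lin_hom l)).mul (lin_hom m)
  exact (((this _ _ _).add (this _ _ _)).add (this _ _ _)).add (this _ _ _)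

theorem quad_pt (k l m n P w : NV) (hk : dot3 k P = 0) (hl : dot3 l P = 0)
    (hm : dot3 m P ≠ 0) (hn : dot3 n P ≠ 0) (hkw : dot3 k w = 0) (hlw : dot3 l w ≠ 0) :
    MvPolynomial.eval P (quad k l m n) = 0 ∧
      ∃ j : Fin 3, MvPolynomial.eval P (MvPolynomial.pderiv j (quad k l m n)) ≠ 0 := by
  constructor
  · simp [quad, lin_eval, hk, hl]
  · by_contra hcon
    push Not at hcon
    have e : ∀ j, dot3 m P * dot3 n P * (k j + l j) = 0 := by
      intro j
      rw [← hcon j]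
      simp [quad, Derivation.leibniz, lin_eval, lin_grad, hk, hl]
      ring
    have e' : ∀ j, k j + l j = 0 := by
      intro j; simpa [hm, hn] using e j
    apply hlw
    have : dot3 k w + dot3 l w = 0 := by
      simp only [dot3]
      linear_combination w 0 * e' 0 + w 1 * e' 1 + w 2 * e' 2
    rw [← this, hkw, zero_add]

theorem case_two (p₁ p₂ p₃ : ZMod 2 → P2)
    (h : VNet (fun i => (p₁ i).rep) (fun i => (p₂ i).rep) (fun i => (p₃ i).rep)) :
    AlgebraicOn p₁ p₂ p₃ := by
  obtain ⟨a, ha⟩ : ∃ a : ZMod 2 → NV, a = fun i => (p₁ i).rep := ⟨_, rfl⟩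
  obtain ⟨b, hb⟩ : ∃ a : ZMod 2 → NV, a = fun i => (p₂ i).rep := ⟨_, rfl⟩
  obtain ⟨c, hc⟩ : ∃ a : ZMod 2 → NV, a = fun i => (p₃ i).rep := ⟨_, rfl⟩
  rw [← ha, ← hb, ← hc] at h
  -- line through a i, b j
  let L : ZMod 2 → ZMod 2 → NV := fun i j => crs (a i) (b j)
  have ra : ∀ i j i', dot3 (L i j) (a i') = 0 ↔ i' = i := by
    intro i j i'
    simp only [L, dot3_crs]
    constructor
    · intro h0
      by_contra hne
      obtain ⟨s, t, hs, ht, e⟩ := h.rel le_rfl i j (-i - j) (by ring)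
      have : det3 (a i') (b j) (c (-i - j)) = - s * det3 (a i) (b j) (a i') := by
        rw [e]; simp only [det3, Pi.smul_apply, Pi.add_apply, smul_eq_mul]; ring
      rw [h0, mul_zero, h] at this
      exact hne (by linear_combination this)
    · rintro rfl; simp only [det3]; ring
  have rb : ∀ i j j', dot3 (L i j) (b j') = 0 ↔ j' = j := by
    intro i j j'
    simp only [L, dot3_crs]
    constructor
    · intro h0
      by_contra hne
      obtain ⟨s, t, hs, ht, e⟩ := h.rel le_rfl i j (-i - j) (by ring)
      have : det3 (a i) (b j') (c (-i - j)) = - t * det3 (a i) (b j) (b j') := by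
        rw [e]; simp only [det3, Pi.smul_apply, Pi.add_apply, smul_eq_mul]; ring
      rw [h0, mul_zero, h] at this
      exact hne (by linear_combination this)
    · rintro rfl; simp only [det3]; ring
  have rc : ∀ i j k, dot3 (L i j) (c k) = 0 ↔ i + j + k = 0 := by
    intro i j k; simp only [L, dot3_crs]; exact h i j k
  have perm1 : quad (L 0 0) (L 0 1) (L 1 0) (L 1 1) = quad (L 1 0) (L 1 1) (L 0 0) (L 0 1) := by
    simp only [quad]; ring
  have perm2 : quad (L 0 0) (L 0 1) (L 1 0) (L 1 1) = quad (L 0 0) (L 1 0) (L 0 1) (L 1 1) := by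
    simp only [quad]; ring
  have perm3 : quad (L 0 0) (L 0 1) (L 1 0) (L 1 1) = quad (L 0 1) (L 1 1) (L 0 0) (L 1 0) := by
    simp only [quad]; ring
  have perm4 : quad (L 0 0) (L 0 1) (L 1 0) (L 1 1) = quad (L 0 0) (L 1 1) (L 0 1) (L 1 0) := by
    simp only [quad]; ring
  have perm5 : quad (L 0 0) (L 0 1) (L 1 0) (L 1 1) = quad (L 0 1) (L 1 0) (L 0 0) (L 1 1) := by
    simp only [quad]; ring
  have A0 := quad_pt (L 0 0) (L 0 1) (L 1 0) (L 1 1) (a 0) (b 0) (by rw [ra]) (by rw [ra])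
    (by rw [Ne, ra]; decide) (by rw [Ne, ra]; decide) (by rw [rb]) (by rw [Ne, rb]; decide)
  have A1 := quad_pt (L 1 0) (L 1 1) (L 0 0) (L 0 1) (a 1) (b 0) (by rw [ra]) (by rw [ra])
    (by rw [Ne, ra]; decide) (by rw [Ne, ra]; decide) (by rw [rb]) (by rw [Ne, rb]; decide)
  have B0 := quad_pt (L 0 0) (L 1 0) (L 0 1) (L 1 1) (b 0) (a 0) (by rw [rb]) (by rw [rb])
    (by rw [Ne, rb]; decide) (by rw [Ne, rb]; decide) (by rw [ra]) (by rw [Ne, ra]; decide)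
  have B1 := quad_pt (L 0 1) (L 1 1) (L 0 0) (L 1 0) (b 1) (a 0) (by rw [rb]) (by rw [rb])
    (by rw [Ne, rb]; decide) (by rw [Ne, rb]; decide) (by rw [ra]) (by rw [Ne, ra]; decide)
  have C0 := quad_pt (L 0 0) (L 1 1) (L 0 1) (L 1 0) (c 0) (a 0) (by rw [rc]; decide)
    (by rw [rc]; decide) (by rw [Ne, rc]; decide) (by rw [Ne, rc]; decide) (by rw [ra])
    (by rw [Ne, ra]; decide)
  have C1 := quad_pt (L 0 1) (L 1 0) (L 0 0) (L 1 1) (c 1) (a 0) (by rw [rc]; decide)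
    (by rw [rc]; decide) (by rw [Ne, rc]; decide) (by rw [Ne, rc]; decide) (by rw [ra])
    (by rw [Ne, ra]; decide)
  rw [← perm1] at A1
  rw [← perm2] at B0
  rw [← perm3] at B1
  rw [← perm4] at C0
  rw [← perm5] at C1
  have two : ∀ i : ZMod 2, i = 0 ∨ i = 1 := by decide
  refine ⟨quad (L 0 0) (L 0 1) (L 1 0) (L 1 1), ?_, quad_hom _ _ _ _, ?_⟩
  · intro h0
    obtain ⟨_, j, hj⟩ := A0
    rw [h0] at hj
    simp at hj
  · clear perm1 perm2 perm3 perm4 perm5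
    generalize quad (L 0 0) (L 0 1) (L 1 0) (L 1 1) = F at *
    rw [ha] at A0 A1
    rw [hb] at B0 B1
    rw [hc] at C0 C1
    rintro q ((⟨i, rfl⟩ | ⟨i, rfl⟩) | ⟨i, rfl⟩)
    · rcases two i with rfl | rfl
      · exact A0
      · exact A1
    · rcases two i with rfl | rfl
      · exact B0
      · exact B1
    · rcases two i with rfl | rfl
      · exact C0
      · exact C1

/-- Every 3-net in ℙ²(ℂ) realizing a cyclic group ℤ/mℤ (m ≥ 2) is
algebraic. -/
theorem cyclic_realization_is_algebraic (m : ℕ) (hm : 2 ≤ m)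
    (p₁ p₂ p₃ : ZMod m → P2) (h : Realizes p₁ p₂ p₃) :
    AlgebraicOn p₁ p₂ p₃ := by
  obtain ⟨-, -, -, -, -, -, h⟩ := h
  have hn : VNet (fun i => (p₁ i).rep) (fun i => (p₂ i).rep) (fun i => (p₃ i).rep) := by
    intro i j k
    rw [← collin_iff, h]
  rcases Nat.lt_or_ge 2 m with h3 | h3
  · exact case_ge3 m h3 p₁ p₂ p₃ hn
  · obtain rfl : m = 2 := by omega
    exact case_two p₁ p₂ p₃ hn
end
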